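/- arXiv:1210.5869 — 3 statements merged into one kernel-verified Lean document; each statement's English description precedes it below -/
import Mathlib

section
/- Let ℓ ≥ 2 and n = 3ℓ. A composition c of n is maximal if and only if c = (3^ℓ) (ℓ parts equal to 3) or c = (4, 3^{ℓ−2}, 2) (a 4, followed by ℓ−2 parts equal to 3, followed by a 2). -/
/-- `i` (1-based, with `1 < i < n`) is a peak of the permutation `σ` of `{1,…,n}`
(represented as a permutation of `Fin n`, position `j` (1-based) being index `j-1`). -/
def IsPeak {n : ℕ} (σ : Equiv.Perm (Fin n)) (i : ℕ) : Prop :=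
  ∃ (h₂ : 2 ≤ i) (h₃ : i < n),
    σ ⟨i - 2, by omega⟩ < σ ⟨i - 1, by omega⟩ ∧ σ ⟨i, h₃⟩ < σ ⟨i - 1, by omega⟩

open Classical in
/-- The peak set of a permutation of `{1,…,n}` (as a set of 1-based positions). -/
noncomputable def peakSet {n : ℕ} (σ : Equiv.Perm (Fin n)) : Finset ℕ :=
  (Finset.range n).filter (fun i => IsPeak σ i)

/-- `P(S;n)`: the number of permutations of `{1,…,n}` with peak set `S`. -/
noncomputable def numPeakSet (n : ℕ) (S : Finset ℕ) : ℕ :=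
  Nat.card {σ : Equiv.Perm (Fin n) // peakSet σ = S}

/-- `c` is a composition of `n`: a list of positive integers summing to `n`. -/
def IsComposition (n : ℕ) (c : List ℕ) : Prop :=
  (∀ x ∈ c, 0 < x) ∧ c.sum = n

/-- The set `S(c)` of proper partial sums of the composition `c`. -/
def compPeaks (c : List ℕ) : Finset ℕ :=
  (Finset.range (c.length - 1)).image (fun i => (c.take (i + 1)).sum)

/-- `P(c)`: the number of permutations of `{1,…,|c|}` whose peak set is `S(c)`. -/
noncomputable def Pcomp (c : List ℕ) : ℕ :=
  numPeakSet c.sum (compPeaks c)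

/-- A composition is maximal if `P(b) ≤ P(c)` for every composition `b` of the same size. -/
def IsMaximal (c : List ℕ) : Prop :=
  ∀ b : List ℕ, IsComposition c.sum b → Pcomp b ≤ Pcomp c

/-!
Encode a composition of `n` by the word of length `n` whose letters tell which positions are peaks,
and let `p β` be the probability that a random permutation has peak word `β`. Cutting a random
permutation in two makes the pieces independent, so the weight `w β = p β * 3 ^ (|β| / 3)` satisfies
`w (x T F F T y) * 3 ^ (2 / 3) = w (x T F F) * w (F F T y)`, where `T` marks the peaks. It follows
that the words `F F T F F T … T F F` all have weight `3 ^ (2 / 3) ≈ 2.08`, and that an additional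
`F` at one end changes this to `9 / 5`, except for the word `F F F` of weight `2`.

No other word has weight at least `9 / 5`. By induction on the length, a word with a gap of exactly
three between consecutive peaks factors as above into two such words; shortening a run of at least
three letters `F` multiplies the probability by at least `3 / 2`, more than the factor
`3 ^ (1 / 3)` lost to the length; and in the remaining words the peaks are two apart, so that these
permutations are essentially alternating, with probabilities decaying faster than `3 ^ (-n / 3)`.
When `n = 3 * ℓ`, the only words of weight at least `9 / 5` are those of the two compositions.
-/

namespace PeakWord

open Finset
open scoped Nat

section Word

variable {α γ : Type*} [LinearOrder α] [LinearOrder γ]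

/-- The peak indicators of the entries of `l` in the sequence `a :: l`: an entry is marked `true` if
it exceeds both of its neighbours. The last entry is never marked. -/
def peakTail : α → List α → List Bool
  | _, [] => []
  | a, b :: l => (decide (a < b) && l.head?.any (· < b)) :: peakTail b l

/-- The peak word of a sequence: its `i`-th letter tells whether the `i`-th entry is a peak. -/
def peakWord : List α → List Bool
  | [] => []
  | a :: l => false :: peakTail a l

lemma length_peakTail (a : α) (l : List α) : (peakTail a l).length = l.length := by
  induction l generalizing a with
  | nil => rfl
  | cons b l ih => simp only [peakTail, List.length_cons, ih]

lemma length_peakWord (l : List α) : (peakWord l).length = l.length := by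
  cases l with
  | nil => rfl
  | cons a l => simp only [peakWord, List.length_cons, length_peakTail]

lemma peakTail_map (f : α ↪o γ) (a : α) (l : List α) :
    peakTail (f a) (l.map f) = peakTail a l := by
  induction l generalizing a with
  | nil => rfl
  | cons b l ih =>
    rw [List.map_cons, peakTail, ih, peakTail]
    cases l <;> simp

lemma peakWord_map (f : α ↪o γ) (l : List α) : peakWord (l.map f) = peakWord l := by
  cases l with
  | nil => rfl
  | cons a l => simp only [List.map_cons, peakWord, peakTail_map]

lemma getElem?_peakTail (a : α) (l : List α) (i : ℕ) :
    (peakTail a l)[i]? = some true ↔ ∃ x y z, (a :: l)[i]? = some x ∧ (a :: l)[i + 1]? = some y ∧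
      (a :: l)[i + 2]? = some z ∧ x < y ∧ z < y := by
  induction l generalizing a i with
  | nil => simp [peakTail]
  | cons b l ih =>
    cases i with
    | zero => cases l <;> simp [peakTail]
    | succ i => simpa [peakTail] using ih b i

lemma getElem?_succ_peakWord (l : List α) (i : ℕ) :
    (peakWord l)[i + 1]? = some true ↔ ∃ x y z, l[i]? = some x ∧ l[i + 1]? = some y ∧
      l[i + 2]? = some z ∧ x < y ∧ z < y := by
  cases l with
  | nil => simp [peakWord]
  | cons a l => simpa only [peakWord, List.getElem?_cons_succ] using getElem?_peakTail a l i

lemma peakWord_ne_true_cons (l : List α) (v : List Bool) : peakWord l ≠ true :: v := by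
  cases l <;> simp [peakWord]

lemma peakWord_ne_append_true (l : List α) (v : List Bool) : peakWord l ≠ v ++ [true] := by
  intro h
  have hlen := congrArg List.length h
  rw [length_peakWord, List.length_append, List.length_singleton] at hlen
  cases v with
  | nil => exact peakWord_ne_true_cons l [] h
  | cons b v =>
    obtain ⟨-, -, z, -, -, hz, -⟩ := (getElem?_succ_peakWord l v.length).1 (by simp [h])
    have := (List.getElem?_eq_some_iff.1 hz).1
    simp only [List.length_cons] at hlen
    lia

lemma peakWord_ne_append_true_true (l : List α) (x y : List Bool) :
    peakWord l ≠ x ++ true :: true :: y := by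
  intro h
  cases x with
  | nil => exact peakWord_ne_true_cons l _ h
  | cons b x =>
    obtain ⟨-, y₁, z₁, -, hy₁, hz₁, -, hlt⟩ :=
      (getElem?_succ_peakWord l x.length).1 (by simp [h])
    obtain ⟨x₂, y₂, -, hx₂, hy₂, -, hlt', -⟩ :=
      (getElem?_succ_peakWord l (x.length + 1)).1 (by simp [h])
    obtain rfl : y₁ = x₂ := Option.some.inj (hy₁.symm.trans hx₂)
    obtain rfl : z₁ = y₂ := Option.some.inj (hz₁.symm.trans hy₂)
    exact lt_asymm hlt hlt'

lemma peakTail_of_forall_lt {m : α} {R : List α} (hR : ∀ x ∈ R, x < m) :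
    peakTail m R = peakWord R := by
  cases R with
  | nil => rfl
  | cons b R => simp [peakTail, peakWord, (hR b List.mem_cons_self).le]

lemma peakTail_append_cons_of_forall_lt {m a : α} {L R : List α} (ha : a < m)
    (hL : ∀ x ∈ L, x < m) (hR : ∀ x ∈ R, x < m) :
    peakTail a (L ++ m :: R) = peakTail a L ++ decide (R ≠ []) :: peakWord R := by
  induction L generalizing a with
  | nil =>
    simp only [List.nil_append, peakTail, peakTail_of_forall_lt hR]
    cases R with
    | nil => simp
    | cons b R => simp [ha, hR b List.mem_cons_self]
  | cons b L ih =>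
    have hb : b < m := hL b List.mem_cons_self
    rw [List.cons_append, peakTail, ih hb fun x hx => hL x (List.mem_cons_of_mem b hx)]
    cases L <;> simp [peakTail, hb.le]

/-- A neighbour of the largest entry is never a peak, so the peak word splits there. -/
lemma peakWord_append_cons_of_forall_lt {m : α} {L R : List α} (hL : ∀ x ∈ L, x < m)
    (hR : ∀ x ∈ R, x < m) :
    peakWord (L ++ m :: R) = peakWord L ++ decide (L ≠ [] ∧ R ≠ []) :: peakWord R := by
  cases L with
  | nil => simp [peakWord, peakTail_of_forall_lt hR]
  | cons a L =>
    rw [List.forall_mem_cons] at hL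
    simp [peakWord, peakTail_append_cons_of_forall_lt hL.1 hL.2 hR]

lemma exists_peakTail_append (a b : α) (L : List α) : ∃ u d, ∀ l,
    peakTail a (L ++ b :: l) = u ++ (d && l.head?.any (· < b)) :: peakTail b l := by
  induction L generalizing a with
  | nil => exact ⟨[], decide (a < b), fun l => rfl⟩
  | cons c L ih =>
    obtain ⟨u, d, h⟩ := ih c
    refine ⟨(decide (a < c) && (L ++ [b]).head?.any (· < c)) :: u, d, fun l => ?_⟩
    rw [List.cons_append, peakTail, h]
    cases L <;> rfl

lemma exists_peakWord_append (b : α) (L : List α) : ∃ u d, ∀ l,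
    peakWord (L ++ b :: l) = u ++ (d && l.head?.any (· < b)) :: peakTail b l := by
  cases L with
  | nil => exact ⟨[], false, fun l => rfl⟩
  | cons a L =>
    obtain ⟨u, d, h⟩ := exists_peakTail_append a b L
    exact ⟨false :: u, d, fun l => by rw [List.cons_append, peakWord, h, List.cons_append]⟩

lemma peakWord_append_iff {L : List α} {u : List Bool} (hL : L.length = u.length + 1) (R : List α)
    (v : List Bool) :
    peakWord L = u ++ [false] ∧ peakWord R = false :: v ↔
      ∃ e₁ e₂, peakWord (L ++ R) = u ++ e₁ :: e₂ :: v := by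
  obtain ⟨L, b, rfl⟩ := List.eq_nil_or_concat' L |>.resolve_left (by rintro rfl; simp at hL)
  obtain ⟨u', d, h⟩ := exists_peakWord_append b L
  have hu : u'.length = u.length := by
    have := congrArg List.length (h [])
    simp only [length_peakWord, peakTail, List.length_append, List.length_singleton] at this hL
    lia
  have happ : ∀ {x y}, u' ++ x = u ++ y ↔ u' = u ∧ x = y :=
    List.append_eq_append_iff_of_size_eq_left hu
  rw [h, List.append_assoc, List.singleton_append, h]
  cases R with
  | nil => simp [happ, peakWord, peakTail]
  | cons c R => simp [happ, peakWord, peakTail]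

end Word

section Count

variable {α γ : Type*} [LinearOrder α] [LinearOrder γ]

/-- The sequences listing every element of `A` exactly once. -/
def arrangements (A : Finset α) : Finset (List α) :=
  ⟨A.val.lists, Multiset.lists_nodup_finset A⟩

lemma mem_arrangements {A : Finset α} {l : List α} :
    l ∈ arrangements A ↔ l.Nodup ∧ l.toFinset = A := by
  rw [arrangements, mem_mk, Multiset.mem_lists_iff]
  constructor
  · intro h
    have hl : l.Nodup := by simpa [h] using A.nodup
    refine ⟨hl, Finset.val_injective ?_⟩
    rw [h, List.toFinset_val, hl.dedup]
    rfl
  · rintro ⟨hl, rfl⟩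
    rw [List.toFinset_val, hl.dedup]
    rfl

/-- The number of arrangements of the elements of `A` with peak word `β`. -/
def peakCount (A : Finset α) (β : List Bool) : ℕ :=
  #{l ∈ arrangements A | peakWord l = β}

/-- The probability that a uniformly random permutation of length `|β|` has peak word `β`. -/
noncomputable def peakProb (β : List Bool) : ℝ :=
  peakCount (univ : Finset (Fin β.length)) β / β.length !

lemma length_eq_card {A : Finset α} {l : List α} (hl : l ∈ arrangements A) : l.length = #A := by
  rw [mem_arrangements] at hl
  rw [← hl.2, List.toFinset_card_of_nodup hl.1]

lemma peakCount_map (f : α ↪o γ) (A : Finset α) (β : List Bool) :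
    peakCount (A.map f.toEmbedding) β = peakCount A β := by
  refine (card_nbij (List.map f) ?_ (List.map_injective_iff.2 f.injective).injOn ?_).symm
  · intro l hl
    simp only [mem_coe, mem_filter, mem_arrangements] at hl ⊢
    refine ⟨⟨hl.1.1.map f.injective, ?_⟩, by rw [peakWord_map, hl.2]⟩
    rw [← hl.1.2]
    ext
    simp
  · intro l hl
    simp only [mem_coe, mem_filter, mem_arrangements] at hl
    obtain ⟨l, rfl⟩ : l ∈ Set.range (List.map f) := by
      rw [Set.range_list_map]
      intro x hx
      have : x ∈ A.map f.toEmbedding := hl.1.2 ▸ List.mem_toFinset.2 hx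
      obtain ⟨y, -, rfl⟩ := mem_map.1 this
      exact ⟨y, rfl⟩
    refine ⟨l, ?_, rfl⟩
    simp only [mem_coe, mem_filter, mem_arrangements]
    refine ⟨⟨hl.1.1.of_map f, map_injective f.toEmbedding ?_⟩, by rw [← hl.2, peakWord_map]⟩
    rw [← hl.1.2]
    ext
    simp

lemma peakCount_eq {A : Finset α} {β : List Bool} (h : #A = β.length) :
    (peakCount A β : ℝ) = (#A)! * peakProb β := by
  rw [← A.map_orderEmbOfFin_univ h, peakCount_map, peakProb, card_map, card_univ, Fintype.card_fin,
    mul_div_cancel₀ _ (by positivity)]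

lemma peakProb_nonneg (β : List Bool) : 0 ≤ peakProb β := by
  unfold peakProb
  positivity

lemma peakProb_nil : peakProb [] = 1 := by
  have h : arrangements (∅ : Finset (Fin 0)) = {[]} := by
    ext l
    simpa [mem_arrangements] using fun h : l = [] => h ▸ List.nodup_nil
  simp [peakProb, peakCount, h, filter_singleton, peakWord]

lemma peakProb_eq_zero {β : List Bool} (h : ∀ l : List (Fin β.length), peakWord l ≠ β) :
    peakProb β = 0 := by
  simp [peakProb, peakCount, h]

lemma peakProb_true_cons (v : List Bool) : peakProb (true :: v) = 0 :=
  peakProb_eq_zero fun l => peakWord_ne_true_cons l v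

lemma peakProb_append_true (v : List Bool) : peakProb (v ++ [true]) = 0 :=
  peakProb_eq_zero fun l => peakWord_ne_append_true l v

lemma peakProb_append_true_true (x y : List Bool) : peakProb (x ++ true :: true :: y) = 0 :=
  peakProb_eq_zero fun l => peakWord_ne_append_true_true l x y

lemma card_filter_toFinset_take_eq {A B : Finset α} {k : ℕ} (hB : B ⊆ A) (hcard : #B = k)
    (P Q : List α → Prop) [DecidablePred P] [DecidablePred Q] :
    #{l ∈ arrangements A | (P (l.take k) ∧ Q (l.drop k)) ∧ (l.take k).toFinset = B} =
      #{l ∈ arrangements B | P l} * #{l ∈ arrangements (A \ B) | Q l} := by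
  rw [← card_product]
  refine card_nbij' (fun l => (l.take k, l.drop k)) (fun q => q.1 ++ q.2) ?_ ?_ ?_ ?_
  · intro l hl
    simp only [mem_coe, mem_filter, mem_product, mem_arrangements] at hl ⊢
    obtain ⟨⟨hnd, hA⟩, ⟨hP, hQ⟩, hBl⟩ := hl
    have hdisj := List.disjoint_take_drop hnd le_rfl (m := k)
    refine ⟨⟨⟨hnd.sublist (List.take_sublist k l), hBl⟩, hP⟩,
      ⟨hnd.sublist (List.drop_sublist k l), ?_⟩, hQ⟩
    rw [← hA, ← hBl, ← List.take_append_drop k l, List.toFinset_append]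
    simp only [List.take_append_drop]
    rw [union_sdiff_cancel_left]
    rwa [List.disjoint_toFinset_iff_disjoint]
  · rintro ⟨l₁, l₂⟩ hl
    simp only [mem_coe, mem_filter, mem_product] at hl ⊢
    obtain ⟨⟨hl₁, hP⟩, hl₂, hQ⟩ := hl
    have hlen : l₁.length = k := (length_eq_card hl₁).trans hcard
    rw [mem_arrangements] at hl₁ hl₂ ⊢
    refine ⟨⟨hl₁.1.append hl₂.1 ?_, ?_⟩, ?_, ?_⟩
    · rw [← List.disjoint_toFinset_iff_disjoint, hl₁.2, hl₂.2]
      exact disjoint_sdiff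
    · rw [List.toFinset_append, hl₁.2, hl₂.2, union_sdiff_of_subset hB]
    · rw [List.take_left' hlen, List.drop_left' hlen]
      exact ⟨hP, hQ⟩
    · rw [List.take_left' hlen, hl₁.2]
  · intro l _
    exact List.take_append_drop k l
  · rintro ⟨l₁, l₂⟩ hl
    simp only [mem_coe, mem_product, mem_filter] at hl
    have hlen : l₁.length = k := (length_eq_card hl.1.1).trans hcard
    simp only [List.take_left' hlen, List.drop_left' hlen]

lemma card_filter_take_drop (A : Finset α) {k : ℕ} (hk : k ≤ #A) (P Q : List α → Prop)
    [DecidablePred P] [DecidablePred Q] :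
    #{l ∈ arrangements A | P (l.take k) ∧ Q (l.drop k)} =
      ∑ B ∈ A.powersetCard k, #{l ∈ arrangements B | P l} * #{l ∈ arrangements (A \ B) | Q l} := by
  have hmaps : ∀ l ∈ ({l ∈ arrangements A | P (l.take k) ∧ Q (l.drop k)} : Finset (List α)),
      (l.take k).toFinset ∈ A.powersetCard k := by
    intro l hl
    have hl := (mem_filter.1 hl).1
    have hlen := length_eq_card hl
    rw [mem_arrangements] at hl
    rw [mem_powersetCard, List.toFinset_card_of_nodup (hl.1.sublist (List.take_sublist k l)),
      List.length_take, ← hl.2]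
    exact ⟨fun x hx => List.mem_toFinset.2 (List.mem_of_mem_take (List.mem_toFinset.1 hx)), by lia⟩
  rw [card_eq_sum_card_fiberwise hmaps]
  refine sum_congr rfl fun B hB => ?_
  rw [mem_powersetCard] at hB
  rw [filter_filter, card_filter_toFinset_take_eq hB.1 hB.2]

lemma card_filter_peakWord_take_drop {A : Finset α} {a r : List Bool}
    (h : #A = a.length + r.length) :
    (#{l ∈ arrangements A | peakWord (l.take a.length) = a ∧ peakWord (l.drop a.length) = r} : ℝ) =
      (#A)! * (peakProb a * peakProb r) := by
  have hsum : #{l ∈ arrangements A | peakWord (l.take a.length) = a ∧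
      peakWord (l.drop a.length) = r} =
      ∑ B ∈ A.powersetCard a.length, peakCount B a * peakCount (A \ B) r :=
    card_filter_take_drop A (by lia) (peakWord · = a) (peakWord · = r)
  have hB : ∀ B ∈ A.powersetCard a.length, (peakCount B a : ℝ) * peakCount (A \ B) r =
      a.length ! * r.length ! * (peakProb a * peakProb r) := by
    intro B hB
    rw [mem_powersetCard] at hB
    have hr : #(A \ B) = r.length := by rw [card_sdiff_of_subset hB.1]; lia
    rw [peakCount_eq hB.2, peakCount_eq hr, hB.2, hr]
    ring
  rw [hsum]
  push_cast
  rw [sum_congr rfl hB, sum_const, card_powersetCard, nsmul_eq_mul, h,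
    Nat.choose_symm_add, ← Nat.add_choose_mul_factorial_mul_factorial]
  push_cast
  ring

end Count

section Max
variable {α : Type*} [LinearOrder α]

/-- The probability that a random permutation has peak word `a ++ b :: r`, given that its largest
entry is at the position of `b`. -/
noncomputable def maxAtProb (a : List Bool) (b : Bool) (r : List Bool) : ℝ :=
  if b = decide (a ≠ [] ∧ r ≠ []) then peakProb a * peakProb r else 0

lemma maxAtProb_nil_left (r : List Bool) : maxAtProb [] false r = peakProb r := by
  simp [maxAtProb, peakProb_nil]

lemma maxAtProb_nil_right (a : List Bool) : maxAtProb a false [] = peakProb a := by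
  simp [maxAtProb, peakProb_nil]

lemma maxAtProb_false_of_ne_nil {a r : List Bool} (ha : a ≠ []) (hr : r ≠ []) :
    maxAtProb a false r = 0 := by
  simp [maxAtProb, ha, hr]

lemma maxAtProb_true_of_ne_nil {a r : List Bool} (ha : a ≠ []) (hr : r ≠ []) :
    maxAtProb a true r = peakProb a * peakProb r := by
  simp [maxAtProb, ha, hr]

lemma maxAtProb_le_mul_of_right {c : ℝ} {r r' : List Bool} (a : List Bool) (b : Bool)
    (hr : r ≠ []) (hr' : r' ≠ []) (h : peakProb r ≤ c * peakProb r') :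
    maxAtProb a b r ≤ c * maxAtProb a b r' := by
  simp only [maxAtProb, ne_eq, hr, hr', not_false_eq_true, and_true]
  split_ifs
  · nlinarith [peakProb_nonneg a]
  · rw [mul_zero]

lemma maxAtProb_le_mul_of_left {c : ℝ} {a a' : List Bool} (b : Bool) (r : List Bool)
    (ha : a ≠ []) (ha' : a' ≠ []) (h : peakProb a ≤ c * peakProb a') :
    maxAtProb a b r ≤ c * maxAtProb a' b r := by
  simp only [maxAtProb, ne_eq, ha, ha', not_false_eq_true, true_and]
  split_ifs
  · nlinarith [peakProb_nonneg r]
  · rw [mul_zero]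

lemma append_cons_mem_arrangements {A : Finset α} {m : α} {L R : List α} :
    L ++ m :: R ∈ arrangements A ↔ m ∈ A ∧ L ++ R ∈ arrangements (A.erase m) := by
  simp only [mem_arrangements, List.nodup_middle, List.nodup_cons, List.toFinset_append,
    List.toFinset_cons, union_insert, ← List.mem_toFinset (a := m)]
  constructor
  · rintro ⟨⟨hm, hnd⟩, rfl⟩
    exact ⟨mem_insert_self _ _, hnd, (erase_insert hm).symm⟩
  · rintro ⟨hm, hnd, h⟩
    rw [h, insert_erase hm]
    exact ⟨⟨notMem_erase m A, hnd⟩, rfl⟩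

lemma peakWord_append_cons_eq_iff {m : α} {L R : List α} {a r : List Bool} {b : Bool}
    (hlt : ∀ x ∈ L ++ R, x < m) (hL : L.length = a.length) (hR : R.length = r.length) :
    peakWord (L ++ m :: R) = a ++ b :: r ↔
      b = decide (a ≠ [] ∧ r ≠ []) ∧ peakWord L = a ∧ peakWord R = r := by
  rw [List.forall_mem_append] at hlt
  rw [peakWord_append_cons_of_forall_lt hlt.1 hlt.2, List.append_eq_append_iff_of_size_eq_left
    ((length_peakWord L).trans hL), List.cons_eq_cons]
  simp only [ne_eq, ← List.length_eq_zero_iff, hL, hR]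
  tauto

lemma card_filter_idxOf {A : Finset α} {m : α} (hm : m ∈ A) {k : ℕ} (hk : k < #A)
    (P : List α → Prop) [DecidablePred P] :
    #{l ∈ arrangements A | P l ∧ l.idxOf m = k} =
      #{l ∈ arrangements (A.erase m) | P (l.take k ++ m :: l.drop k)} := by
  have hlen : ∀ l ∈ arrangements (A.erase m), (l.take k).length = k := by
    intro l hl
    rw [List.length_take, length_eq_card hl, card_erase_of_mem hm]
    lia
  symm
  refine card_nbij (fun l => l.take k ++ m :: l.drop k) ?_ ?_ ?_
  · intro l hl
    simp only [mem_coe, mem_filter] at hl ⊢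
    have hml : m ∉ l.take k := fun h =>
      notMem_erase m A ((mem_arrangements.1 hl.1).2 ▸ List.mem_toFinset.2 (List.mem_of_mem_take h))
    refine ⟨append_cons_mem_arrangements.2 ⟨hm, ?_⟩, hl.2, ?_⟩
    · rw [List.take_append_drop]
      exact hl.1
    · rw [List.idxOf_append_of_notMem hml, List.idxOf_cons_self, hlen l hl.1, add_zero]
  · intro l hl l' hl' heq
    simp only [mem_coe, mem_filter] at hl hl'
    have := List.append_inj heq ((hlen l hl.1).trans (hlen l' hl'.1).symm)
    rw [← List.take_append_drop k l, this.1, (List.cons_eq_cons.1 this.2).2,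
      List.take_append_drop]
  · intro l hl
    simp only [mem_coe, mem_filter] at hl
    obtain ⟨hA, hP, hidx⟩ := hl
    obtain ⟨L, R, rfl, hmL⟩ := List.eq_append_cons_of_mem
      (List.mem_toFinset.1 ((mem_arrangements.1 hA).2 ▸ hm))
    rw [List.idxOf_append_of_notMem hmL, List.idxOf_cons_self, add_zero] at hidx
    refine ⟨L ++ R, ?_, by simp [← hidx]⟩
    simp only [mem_coe, mem_filter, List.take_left' hidx, List.drop_left' hidx]
    exact ⟨(append_cons_mem_arrangements.1 hA).2, hP⟩

lemma card_filter_peakWord_idxOf {A : Finset α} {m : α} (hm : m ∈ A) (hmax : ∀ x ∈ A, x ≤ m)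
    {a r : List Bool} (b : Bool) (h : #A = a.length + 1 + r.length) :
    (#{l ∈ arrangements A | peakWord l = a ++ b :: r ∧ l.idxOf m = a.length} : ℝ) =
      (#A - 1)! * maxAtProb a b r := by
  have hcard : #(A.erase m) = a.length + r.length := by
    rw [card_erase_of_mem hm]
    lia
  have hiff : ∀ l ∈ arrangements (A.erase m),
      (peakWord (l.take a.length ++ m :: l.drop a.length) = a ++ b :: r ↔
        b = decide (a ≠ [] ∧ r ≠ []) ∧ peakWord (l.take a.length) = a ∧
          peakWord (l.drop a.length) = r) := by
    intro l hl
    have hlen := length_eq_card hl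
    refine peakWord_append_cons_eq_iff (fun x hx => ?_) (by simp; lia) (by simp; lia)
    rw [List.take_append_drop] at hx
    have hxA := mem_erase.1 ((mem_arrangements.1 hl).2 ▸ List.mem_toFinset.2 hx)
    exact (hmax x hxA.2).lt_of_ne hxA.1
  rw [card_filter_idxOf hm (by lia) (peakWord · = a ++ b :: r), filter_congr hiff, maxAtProb]
  split_ifs with hb
  · simp only [hb, true_and, card_filter_peakWord_take_drop hcard, card_erase_of_mem hm]
  · simp only [hb, false_and, filter_false, card_empty, Nat.cast_zero, mul_zero]

end Max

section SplitSum

/-- The sum of `f a b r` over all ways of writing `β = a ++ b :: r`. -/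
def splitSum (β : List Bool) (f : List Bool → Bool → List Bool → ℝ) : ℝ :=
  ∑ i : Fin β.length, f (β.take i) β[i] (β.drop (i + 1))

variable {f g : List Bool → Bool → List Bool → ℝ}

lemma splitSum_nil (f : List Bool → Bool → List Bool → ℝ) : splitSum [] f = 0 := by
  simp [splitSum]

lemma splitSum_cons (b : Bool) (β : List Bool) (f : List Bool → Bool → List Bool → ℝ) :
    splitSum (b :: β) f = f [] b β + splitSum β fun a => f (b :: a) := by
  simp [splitSum, Fin.sum_univ_succ]

lemma splitSum_append (x y : List Bool) (f : List Bool → Bool → List Bool → ℝ) :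
    splitSum (x ++ y) f =
      splitSum x (fun a b r => f a b (r ++ y)) + splitSum y (fun a => f (x ++ a)) := by
  induction x generalizing f with
  | nil => simp [splitSum_nil]
  | cons b x ih => simp [splitSum_cons, ih, add_assoc]

lemma splitSum_le_splitSum {β : List Bool} (h : ∀ a b r, β = a ++ b :: r → f a b r ≤ g a b r) :
    splitSum β f ≤ splitSum β g :=
  sum_le_sum fun i _ => h _ _ _ (by simp)

lemma splitSum_congr {β : List Bool} (h : ∀ a b r, β = a ++ b :: r → f a b r = g a b r) :
    splitSum β f = splitSum β g :=
  sum_congr rfl fun i _ => h _ _ _ (by simp)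

lemma mul_splitSum (c : ℝ) (β : List Bool) (f : List Bool → Bool → List Bool → ℝ) :
    c * splitSum β f = splitSum β fun a b r => c * f a b r :=
  mul_sum _ _ _

lemma peakCount_eq_mul_splitSum {α : Type*} [LinearOrder α] {A : Finset α} (hA : A.Nonempty)
    {β : List Bool} (h : #A = β.length) :
    (peakCount A β : ℝ) = (#A - 1)! * splitSum β maxAtProb := by
  have hidx : ∀ l ∈ ({l ∈ arrangements A | peakWord l = β} : Finset (List α)),
      l.idxOf (A.max' hA) ∈ range β.length := by
    intro l hl
    rw [mem_filter] at hl
    rw [mem_range, ← h, ← length_eq_card hl.1, List.idxOf_lt_length_iff]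
    exact List.mem_toFinset.1 ((mem_arrangements.1 hl.1).2 ▸ A.max'_mem hA)
  rw [peakCount, card_eq_sum_card_fiberwise hidx, splitSum, Finset.sum_range, mul_sum]
  push_cast
  refine sum_congr rfl fun i _ => ?_
  have hi : (β.take i).length = i := by simp [i.2.le]
  rw [← card_filter_peakWord_idxOf (A.max'_mem hA) A.le_max' (a := β.take i)
    (r := β.drop (i + 1)) β[i] (by simp; lia), hi, filter_filter]
  simp

lemma length_mul_peakProb (β : List Bool) : β.length * peakProb β = splitSum β maxAtProb := by
  rcases β.length.eq_zero_or_pos with h | h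
  · rw [List.length_eq_zero_iff.1 h]
    simp [splitSum_nil]
  · have hne : (univ : Finset (Fin β.length)).Nonempty := ⟨⟨0, h⟩, mem_univ _⟩
    have hcard : #(univ : Finset (Fin β.length)) = β.length := by simp
    rw [peakProb, peakCount_eq_mul_splitSum hne hcard, hcard, ← Nat.mul_factorial_pred h.ne']
    push_cast
    field_simp

end SplitSum

section Product

lemma card_filter_peakWord_cut {α : Type*} [LinearOrder α] {A : Finset α} {u v : List Bool}
    (hA : u.length + 1 ≤ #A) :
    #{l ∈ arrangements A | peakWord (l.take (u.length + 1)) = u ++ [false] ∧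
      peakWord (l.drop (u.length + 1)) = false :: v} =
      ∑ e : Bool × Bool, peakCount A (u ++ e.1 :: e.2 :: v) := by
  simp only [peakCount]
  rw [← card_biUnion fun e _ e' _ hne => disjoint_filter.2 fun l _ h h' => hne ?_]
  · congr 1
    ext l
    simp only [mem_filter, mem_biUnion, mem_univ, true_and, Prod.exists, exists_and_left]
    refine and_congr_right fun hl => ?_
    have hlen : (l.take (u.length + 1)).length = u.length + 1 := by
      rw [List.length_take, length_eq_card hl, min_eq_left hA]
    rw [peakWord_append_iff hlen, List.take_append_drop]
  · simpa [Prod.ext_iff] using h.symm.trans h'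

/-- Cut a random permutation into an initial and a final segment, which are arranged
independently. The two letters next to the cut become free, except that they cannot both be
peaks. -/
lemma peakProb_mul_peakProb (u v : List Bool) :
    peakProb (u ++ [false]) * peakProb (false :: v) =
      peakProb (u ++ false :: false :: v) + peakProb (u ++ false :: true :: v) +
        peakProb (u ++ true :: false :: v) := by
  let A : Finset (Fin (u.length + v.length + 2)) := univ
  have hA : #A = u.length + v.length + 2 := by simp [A]
  have hcut := card_filter_peakWord_take_drop (A := A) (a := u ++ [false]) (r := false :: v)
    (by simp only [hA, List.length_append, List.length_cons, List.length_nil]; lia)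
  rw [List.length_append, List.length_singleton, card_filter_peakWord_cut (by lia)] at hcut
  have hcount : ∀ e : Bool × Bool, (peakCount A (u ++ e.1 :: e.2 :: v) : ℝ) =
      (#A)! * peakProb (u ++ e.1 :: e.2 :: v) := fun e =>
    peakCount_eq (by simp only [hA, List.length_append, List.length_cons]; lia)
  rw [Nat.cast_sum, sum_congr rfl fun e _ => hcount e, ← mul_sum] at hcut
  rw [← mul_left_cancel₀ (by positivity) hcut]
  simp only [Fintype.sum_prod_type, Fintype.sum_bool, peakProb_append_true_true]
  ring

lemma peakProb_singleton_false : peakProb [false] = 1 := by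
  simpa [splitSum_cons, splitSum_nil, maxAtProb, peakProb_nil] using length_mul_peakProb [false]

lemma peakProb_false_cons (v : List Bool) :
    peakProb (false :: v) = peakProb (false :: false :: v) + peakProb (false :: true :: v) := by
  simpa [peakProb_singleton_false, peakProb_true_cons] using peakProb_mul_peakProb [] v

lemma peakProb_append_false (u : List Bool) :
    peakProb (u ++ [false]) = peakProb (u ++ [false, false]) + peakProb (u ++ [true, false]) := by
  have h : peakProb (u ++ [false, true]) = 0 := by
    rw [← peakProb_append_true (u ++ [false]), List.append_assoc, List.singleton_append]
  simpa [peakProb_singleton_false, h] using peakProb_mul_peakProb u []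

lemma peakProb_false_false_cons_le (v : List Bool) :
    peakProb (false :: false :: v) ≤ peakProb (false :: v) := by
  linarith [peakProb_false_cons v, peakProb_nonneg (false :: true :: v)]

lemma peakProb_append_false_false_le (u : List Bool) :
    peakProb (u ++ [false, false]) ≤ peakProb (u ++ [false]) := by
  linarith [peakProb_append_false u, peakProb_nonneg (u ++ [true, false])]

lemma peakProb_false_false_true_cons (v : List Bool) :
    peakProb (false :: false :: true :: v) = peakProb (false :: true :: v) := by
  rw [peakProb_false_cons (true :: v), left_eq_add]
  exact peakProb_append_true_true [false] v

lemma peakProb_append_true_false_false (u : List Bool) :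
    peakProb (u ++ [true, false, false]) = peakProb (u ++ [true, false]) := by
  simpa [peakProb_append_true_true, eq_comm] using peakProb_append_false (u ++ [true])

lemma peakProb_append_true_false_false_true (x y : List Bool) :
    peakProb (x ++ true :: false :: false :: true :: y) =
      peakProb (x ++ [true, false]) * peakProb (false :: true :: y) := by
  have h : peakProb (x ++ true :: false :: true :: true :: y) = 0 := by
    simpa using peakProb_append_true_true (x ++ [true, false]) y
  simpa [peakProb_append_true_true, h, eq_comm] using
    peakProb_mul_peakProb (x ++ [true]) (true :: y)

end Product

section Plateau

lemma maxAtProb_false_false_cons_le (x y : List Bool) :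
    maxAtProb x false (false :: false :: y) ≤
      2 / 3 * maxAtProb x false (false :: y) + 1 / 3 * peakProb (x ++ false :: false :: y) := by
  cases x with
  | nil =>
    rw [maxAtProb_nil_left, maxAtProb_nil_left, List.nil_append]
    linarith [peakProb_false_false_cons_le y]
  | cons b x => simp [maxAtProb, peakProb_nonneg]

lemma maxAtProb_append_false_false_le (x y : List Bool) :
    maxAtProb (x ++ [false, false]) false y ≤
      2 / 3 * maxAtProb (x ++ [false]) false y + 1 / 3 * peakProb (x ++ false :: false :: y) := by
  cases y with
  | nil =>
    rw [maxAtProb_nil_right, maxAtProb_nil_right]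
    linarith [peakProb_append_false_false_le x]
  | cons b y => simp [maxAtProb, peakProb_nonneg]

/-- In the recursion `length_mul_peakProb`, the terms with the largest entry outside the run of
`false` are handled by induction; those inside it vanish unless the run touches an end of the
word, because the largest entry is a peak unless it is the first or the last one. -/
lemma peakProb_three_false_le (x y : List Bool) :
    peakProb (x ++ false :: false :: false :: y) ≤
      2 / 3 * peakProb (x ++ false :: false :: y) := by
  obtain ⟨N, hN⟩ : ∃ N, x.length + y.length = N := ⟨_, rfl⟩
  induction N using Nat.strong_induction_on generalizing x y with
  | _ N ih =>
  have hleft : splitSum x (fun a b r => maxAtProb a b (r ++ false :: false :: false :: y)) ≤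
      2 / 3 * splitSum x (fun a b r => maxAtProb a b (r ++ false :: false :: y)) := by
    rw [mul_splitSum]
    refine splitSum_le_splitSum fun a b r h => maxAtProb_le_mul_of_right a b (by simp) (by simp) ?_
    exact ih _ (by rw [← hN, h, List.length_append, List.length_cons]; lia) r y rfl
  have hright : splitSum y (fun a => maxAtProb (x ++ false :: false :: false :: a)) ≤
      2 / 3 * splitSum y (fun a => maxAtProb (x ++ false :: false :: a)) := by
    rw [mul_splitSum]
    refine splitSum_le_splitSum fun a b r h => maxAtProb_le_mul_of_left b r (by simp) (by simp) ?_
    exact ih _ (by rw [← hN, h, List.length_append, List.length_cons]; lia) x a rfl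
  have hmid : maxAtProb (x ++ [false]) false (false :: y) = 0 :=
    maxAtProb_false_of_ne_nil (by simp) (by simp)
  have h₃ := length_mul_peakProb (x ++ false :: false :: false :: y)
  have h₂ := length_mul_peakProb (x ++ false :: false :: y)
  simp only [splitSum_append, splitSum_cons, hmid, List.length_append, List.length_cons,
    List.append_nil, hN, ← Nat.add_assoc, Nat.cast_succ] at h₂ h₃
  nlinarith [maxAtProb_false_false_cons_le x y, maxAtProb_append_false_false_le x y]

end Plateau

section Zigzag

/-- The word `false, true, false, …, true, false` with `k` peaks. -/
def zigzag : ℕ → List Bool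
  | 0 => [false]
  | k + 1 => false :: true :: zigzag k

lemma length_zigzag (k : ℕ) : (zigzag k).length = 2 * k + 1 := by
  induction k with
  | zero => rfl
  | succ k ih =>
    rw [zigzag, List.length_cons, List.length_cons, ih]
    lia

lemma zigzag_ne_nil (k : ℕ) : zigzag k ≠ [] :=
  List.ne_nil_of_length_pos (by rw [length_zigzag]; lia)

lemma exists_zigzag_succ_eq_append (k : ℕ) : ∃ u, zigzag (k + 1) = u ++ [true, false] := by
  induction k with
  | zero => exact ⟨[false], rfl⟩
  | succ k ih =>
    obtain ⟨u, hu⟩ := ih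
    exact ⟨false :: true :: u, by rw [zigzag, hu]; rfl⟩

lemma splitSum_zigzag_succ {f : List Bool → Bool → List Bool → ℝ} (hf : ∀ a r, f a false r = 0)
    (k : ℕ) : splitSum (zigzag (k + 1)) f =
      ∑ ij ∈ antidiagonal k, f (zigzag ij.1) true (zigzag ij.2) := by
  induction k generalizing f with
  | zero => simp [zigzag, splitSum_cons, splitSum_nil, hf]
  | succ k ih =>
    rw [zigzag, splitSum_cons, splitSum_cons, hf, zero_add, Nat.sum_antidiagonal_succ,
      ih fun a r => hf (false :: true :: a) r]
    rfl

lemma mul_peakProb_zigzag_succ (k : ℕ) : (2 * k + 3) * peakProb (zigzag (k + 1)) =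
    ∑ ij ∈ antidiagonal k, peakProb (zigzag ij.1) * peakProb (zigzag ij.2) := by
  have hsplit : splitSum (zigzag (k + 1)) maxAtProb =
      splitSum (zigzag (k + 1)) fun a b r => if b then maxAtProb a b r else 0 := by
    refine splitSum_congr fun a b r h => ?_
    cases b with
    | true => rfl
    | false =>
      rcases eq_or_ne a [] with rfl | ha
      · rw [zigzag, List.nil_append, List.cons_eq_cons] at h
        rw [maxAtProb_nil_left, ← h.2, peakProb_true_cons]
        rfl
      rcases eq_or_ne r [] with rfl | hr
      · obtain ⟨u, hu⟩ := exists_zigzag_succ_eq_append k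
        have hau : a ++ [false] = (u ++ [true]) ++ [false] := by simp [← h, hu]
        rw [maxAtProb_nil_right, List.append_cancel_right hau, peakProb_append_true]
        rfl
      · exact maxAtProb_false_of_ne_nil ha hr
  have h := length_mul_peakProb (zigzag (k + 1))
  rw [hsplit, splitSum_zigzag_succ (by simp), length_zigzag] at h
  push_cast at h
  rw [show (2 : ℝ) * k + 3 = 2 * (k + 1) + 1 by ring, h]
  exact sum_congr rfl fun ij _ => maxAtProb_true_of_ne_nil (zigzag_ne_nil _) (zigzag_ne_nil _)

lemma peakProb_zigzag_zero : peakProb (zigzag 0) = 1 :=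
  peakProb_singleton_false

lemma peakProb_zigzag_one : peakProb (zigzag 1) = 1 / 3 := by
  have h := mul_peakProb_zigzag_succ 0
  simp only [Nat.antidiagonal_zero, sum_singleton, peakProb_zigzag_zero] at h
  norm_num at h
  linarith

lemma peakProb_zigzag_two : peakProb (zigzag 2) = 2 / 15 := by
  have h := mul_peakProb_zigzag_succ 1
  simp only [Nat.sum_antidiagonal_succ, Nat.antidiagonal_zero, sum_singleton, zero_add,
    peakProb_zigzag_zero, peakProb_zigzag_one] at h
  norm_num at h
  linarith

lemma peakProb_zigzag_three : peakProb (zigzag 3) = 17 / 315 := by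
  have h := mul_peakProb_zigzag_succ 2
  simp only [Nat.sum_antidiagonal_succ, Nat.antidiagonal_zero, sum_singleton, zero_add,
    one_add_one_eq_two, peakProb_zigzag_zero, peakProb_zigzag_one, peakProb_zigzag_two] at h
  norm_num at h
  linarith

/-- The true decay rate is `4 / π ^ 2 ≈ 0.405`. For the application it suffices to beat
`3 ^ (-2 / 3) ≈ 0.481`, with a constant below `3 / 5`. -/
lemma peakProb_zigzag_add_two_le (k : ℕ) :
    peakProb (zigzag (k + 2)) ≤ 59 / 100 * (12 / 25) ^ (k + 2) := by
  induction k using Nat.strong_induction_on with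
  | _ k ih =>
  rcases k with - | n
  · norm_num [peakProb_zigzag_two]
  have hle : ∀ i < n + 2, peakProb (zigzag (i + 1)) ≤ 7 / 10 * (12 / 25) ^ (i + 1) := by
    rintro (- | i) hi
    · norm_num [peakProb_zigzag_one]
    · exact (ih i (by lia)).trans (by gcongr ?_ * _; norm_num)
  have hinner : ∑ ij ∈ antidiagonal n,
      peakProb (zigzag (ij.1 + 1)) * peakProb (zigzag (ij.2 + 1)) ≤
        (n + 1) * (49 / 100 * (12 / 25) ^ (n + 2)) := by
    refine (sum_le_card_nsmul _ _ (49 / 100 * (12 / 25) ^ (n + 2)) fun ij hij => ?_).trans_eq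
      (by simp)
    rw [HasAntidiagonal.mem_antidiagonal] at hij
    calc peakProb (zigzag (ij.1 + 1)) * peakProb (zigzag (ij.2 + 1))
        ≤ (7 / 10 * (12 / 25) ^ (ij.1 + 1)) * (7 / 10 * (12 / 25) ^ (ij.2 + 1)) := by
          gcongr
          · exact peakProb_nonneg _
          · exact hle _ (by lia)
          · exact hle _ (by lia)
      _ = 49 / 100 * (12 / 25) ^ (n + 2) := by
          rw [← hij]
          ring
  have hrec := mul_peakProb_zigzag_succ (n + 2)
  rw [Nat.sum_antidiagonal_succ, Nat.sum_antidiagonal_succ'] at hrec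
  simp only [peakProb_zigzag_zero, Nat.cast_add, Nat.cast_ofNat] at hrec
  have hq : (0 : ℝ) < (12 / 25) ^ (n + 2) := by positivity
  have hlast := hle (n + 1) (by lia)
  have hn : (0 : ℝ) ≤ n * (12 / 25) ^ (n + 2) := by positivity
  rw [pow_succ]
  refine le_of_mul_le_mul_left ?_ (show (0 : ℝ) < 2 * (n + 2) + 3 by positivity)
  linarith

end Zigzag

section Small

lemma peakProb_FF : peakProb [false, false] = 1 := by
  have h := peakProb_false_cons []
  have h' : peakProb [false, true] = 0 := peakProb_append_true [false]
  rw [peakProb_singleton_false, h', add_zero] at h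
  exact h.symm

lemma peakProb_FFF : peakProb [false, false, false] = 2 / 3 := by
  have h := peakProb_false_cons [false]
  have h' : peakProb [false, true, false] = 1 / 3 := peakProb_zigzag_one
  linarith [peakProb_FF]

lemma peakProb_FFTF : peakProb [false, false, true, false] = 1 / 3 :=
  (peakProb_false_false_true_cons [false]).trans peakProb_zigzag_one

lemma peakProb_FTFF : peakProb [false, true, false, false] = 1 / 3 :=
  (peakProb_append_true_false_false [false]).trans peakProb_zigzag_one

lemma peakProb_FFFF : peakProb [false, false, false, false] = 1 / 3 := by
  have h := peakProb_mul_peakProb [false] [false]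
  simp only [List.singleton_append, peakProb_FF, peakProb_FFTF, peakProb_FTFF] at h
  linarith

lemma peakProb_FFTFF : peakProb [false, false, true, false, false] = 1 / 3 :=
  (peakProb_false_false_true_cons [false, false]).trans peakProb_FTFF

lemma peakProb_FFFTFF : peakProb [false, false, false, true, false, false] = 1 / 5 := by
  have h := peakProb_false_cons [false, true, false]
  have h' : peakProb [false, true, false, true, false] = 2 / 15 := peakProb_zigzag_two
  have hfree := peakProb_append_true_false_false [false, false, false]
  simp only [List.cons_append, List.nil_append] at hfree
  linarith [peakProb_FFTF]

lemma peakProb_FFTFFF : peakProb [false, false, true, false, false, false] = 1 / 5 := by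
  have h := peakProb_append_false [false, true, false]
  simp only [List.cons_append, List.nil_append] at h
  have h' : peakProb [false, true, false, true, false] = 2 / 15 := peakProb_zigzag_two
  linarith [peakProb_FTFF, peakProb_false_false_true_cons [false, false, false]]

lemma peakProb_FFTFFFTFF :
    peakProb [false, false, true, false, false, false, true, false, false] = 2 / 35 := by
  have h := peakProb_mul_peakProb [false, true] [false, true, false]
  have h' : peakProb [false, true, false, true, false, true, false] = 17 / 315 :=
    peakProb_zigzag_three
  have h'' : peakProb [false, true, true, false, false, true, false] = 0 :=
    peakProb_append_true_true [false] [false, false, true, false]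
  have hleft : peakProb [false, true, false] = 1 / 3 := peakProb_zigzag_one
  have hfree := peakProb_append_true_false_false [false, true, false, false, false]
  simp only [List.cons_append, List.nil_append] at h hfree
  rw [hleft, peakProb_FFTF, h', h''] at h
  rw [peakProb_false_false_true_cons, hfree]
  linarith

end Small

section Weight

/-- The real cube root of `3`. -/
noncomputable def cbrtThree : ℝ := 3 ^ (1 / 3 : ℝ)

lemma cbrtThree_pos : 0 < cbrtThree := by
  unfold cbrtThree
  positivity

lemma cbrtThree_pow_three : cbrtThree ^ 3 = 3 := by
  rw [cbrtThree, ← Real.rpow_natCast, ← Real.rpow_mul (by norm_num)]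
  norm_num

lemma lt_cbrtThree : 1.44 < cbrtThree :=
  lt_of_pow_lt_pow_left₀ 3 cbrtThree_pos.le (by rw [cbrtThree_pow_three]; norm_num)

lemma cbrtThree_lt : cbrtThree < 1.443 :=
  lt_of_pow_lt_pow_left₀ 3 (by norm_num) (by rw [cbrtThree_pow_three]; norm_num)

/-- The probability of a peak word, rescaled so that all the words `spaced k` get the same
weight. -/
noncomputable def weight (β : List Bool) : ℝ := peakProb β * cbrtThree ^ β.length

lemma weight_nonneg (β : List Bool) : 0 ≤ weight β :=
  mul_nonneg (peakProb_nonneg β) (pow_pos cbrtThree_pos _).le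

/-- The word of length `3 * k + 2` whose peaks are `3, 6, …, 3 * k`. -/
def spaced : ℕ → List Bool
  | 0 => [false, false]
  | k + 1 => false :: false :: true :: spaced k

lemma length_spaced (k : ℕ) : (spaced k).length = 3 * k + 2 := by
  induction k with
  | zero => rfl
  | succ k ih =>
    simp only [spaced, List.length_cons, ih]
    lia

lemma spaced_append_true_cons_spaced (i j : ℕ) :
    spaced i ++ true :: spaced j = spaced (i + j + 1) := by
  induction i with
  | zero => rw [zero_add]; rfl
  | succ i ih => rw [Nat.succ_add, spaced, spaced, ← ih]; rfl

lemma exists_spaced_eq_append (k : ℕ) : ∃ u, spaced k = u ++ [false, false] := by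
  induction k with
  | zero => exact ⟨[], rfl⟩
  | succ k ih =>
    obtain ⟨u, hu⟩ := ih
    exact ⟨false :: false :: true :: u, by rw [spaced, hu]; rfl⟩

/-- A `spaced` word, possibly lengthened by one letter at one of its ends. These turn out to be the
words of weight at least `9 / 5`. -/
inductive IsNearlySpaced : List Bool → Prop
  | of_spaced (k : ℕ) : IsNearlySpaced (spaced k)
  | false_cons (k : ℕ) : IsNearlySpaced (false :: spaced k)
  | append_false (k : ℕ) : IsNearlySpaced (spaced k ++ [false])

lemma weight_mul_cbrtThree_sq (x y : List Bool) :
    weight (x ++ true :: false :: false :: true :: y) * cbrtThree ^ 2 =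
      weight (x ++ [true, false, false]) * weight (false :: false :: true :: y) := by
  simp only [weight, peakProb_append_true_false_false_true, peakProb_append_true_false_false,
    peakProb_false_false_true_cons, List.length_append, List.length_cons, List.length_nil]
  ring

lemma weight_FFF : weight [false, false, false] = 2 := by
  norm_num [weight, peakProb_FFF, cbrtThree_pow_three]

lemma weight_FFFF : weight [false, false, false, false] = cbrtThree := by
  simp only [weight, peakProb_FFFF, List.length_cons, List.length_nil]
  linear_combination cbrtThree / 3 * cbrtThree_pow_three

lemma weight_FFTFF : weight [false, false, true, false, false] = cbrtThree ^ 2 := by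
  simp only [weight, peakProb_FFTFF, List.length_cons, List.length_nil]
  linear_combination cbrtThree ^ 2 / 3 * cbrtThree_pow_three

lemma weight_FFFTFF : weight [false, false, false, true, false, false] = 9 / 5 := by
  simp only [weight, peakProb_FFFTFF, List.length_cons, List.length_nil]
  linear_combination (cbrtThree ^ 3 + 3) / 5 * cbrtThree_pow_three

lemma weight_FFTFFF : weight [false, false, true, false, false, false] = 9 / 5 := by
  simp only [weight, peakProb_FFTFFF, List.length_cons, List.length_nil]
  linear_combination (cbrtThree ^ 3 + 3) / 5 * cbrtThree_pow_three

lemma weight_FFTFFFTFF :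
    weight [false, false, true, false, false, false, true, false, false] = 54 / 35 := by
  simp only [weight, peakProb_FFTFFFTFF, List.length_cons, List.length_nil]
  linear_combination
    2 / 35 * (cbrtThree ^ 6 + 3 * cbrtThree ^ 3 + 9) * cbrtThree_pow_three

lemma weight_FFTFFT_cons (v : List Bool) :
    weight (false :: false :: true :: false :: false :: true :: v) =
      weight (false :: false :: true :: v) := by
  have h := weight_mul_cbrtThree_sq [false, false] v
  simp only [List.cons_append, List.nil_append, weight_FFTFF] at h
  rw [mul_comm] at h
  exact mul_left_cancel₀ (pow_ne_zero 2 cbrtThree_pos.ne') h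

lemma weight_spaced (k : ℕ) : weight (spaced k) = cbrtThree ^ 2 := by
  induction k with
  | zero => simp [spaced, weight, peakProb_FF]
  | succ k ih =>
    cases k with
    | zero => exact weight_FFTFF
    | succ k => rwa [spaced, spaced, weight_FFTFFT_cons]

lemma weight_false_cons_spaced_succ (k : ℕ) : weight (false :: spaced (k + 1)) = 9 / 5 := by
  cases k with
  | zero => exact weight_FFFTFF
  | succ k =>
    have h := weight_mul_cbrtThree_sq [false, false, false] (spaced k)
    simp only [List.cons_append, List.nil_append, weight_FFFTFF] at h
    rw [← spaced, weight_spaced] at h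
    exact mul_right_cancel₀ (pow_ne_zero 2 cbrtThree_pos.ne') h

lemma weight_spaced_succ_append_false (k : ℕ) : weight (spaced (k + 1) ++ [false]) = 9 / 5 := by
  induction k with
  | zero => exact weight_FFTFFF
  | succ k ih => exact (weight_FFTFFT_cons (spaced k ++ [false])).trans ih

lemma IsNearlySpaced.weight_le {β : List Bool} (h : IsNearlySpaced β) :
    weight β ≤ cbrtThree ^ 2 := by
  have hbound : 2 ≤ cbrtThree ^ 2 := by nlinarith [lt_cbrtThree]
  rcases h with k | (- | k) | (- | k)
  · exact (weight_spaced k).le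
  · exact weight_FFF.trans_le hbound
  · linarith [weight_false_cons_spaced_succ k]
  · exact weight_FFF.trans_le hbound
  · linarith [weight_spaced_succ_append_false k]

end Weight

section NearlySpaced

lemma IsNearlySpaced.of_append_TFF {x : List Bool}
    (h : IsNearlySpaced (x ++ [true, false, false])) :
    (∃ i, x ++ [true, false, false] = spaced i) ∨
      ∃ i, x ++ [true, false, false] = false :: spaced (i + 1) := by
  generalize hβ : x ++ [true, false, false] = β at h
  rcases h with k | (- | k) | k
  · exact .inl ⟨k, rfl⟩
  · have : true ∈ [false, false, false] := by simp [← show _ = [false, false, false] from hβ]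
    simp at this
  · exact .inr ⟨k, rfl⟩
  · obtain ⟨u, hu⟩ := exists_spaced_eq_append k
    have := congrArg List.reverse hβ
    simp [hu] at this

lemma IsNearlySpaced.of_FFT_cons {y : List Bool}
    (h : IsNearlySpaced (false :: false :: true :: y)) :
    (∃ j, y = spaced j) ∨ ∃ j, y = spaced j ++ [false] := by
  generalize hβ : false :: false :: true :: y = β at h
  rcases h with (- | k) | (- | k) | (- | k)
  · simp [spaced] at hβ
  · exact .inl ⟨k, by simpa [spaced] using hβ⟩
  · simp [spaced] at hβ
  · simp [spaced] at hβ
  · simp [spaced] at hβ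
  · exact .inr ⟨k, by simpa [spaced] using hβ⟩

lemma eq_of_append_FF_eq_spaced {x y : List Bool} {k : ℕ}
    (h : x ++ false :: false :: y = spaced k) :
    x ++ false :: false :: false :: y = false :: spaced k ∨
      x ++ false :: false :: false :: y = spaced k ++ [false] ∨
        ∃ i j, x ++ false :: false :: false :: y =
          spaced i ++ true :: false :: false :: false :: true :: spaced j := by
  induction k generalizing x with
  | zero =>
    have hx : x = [] := List.eq_nil_of_length_eq_zero (by
      have := congrArg List.length h
      simp only [spaced, List.length_append, List.length_cons, List.length_nil] at this
      lia)
    subst hx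
    exact .inl (by rw [← h]; rfl)
  | succ k ih =>
    rcases x with - | ⟨a, - | ⟨b, - | ⟨c, x⟩⟩⟩
    · exact .inl (by rw [← h]; rfl)
    · simp [spaced] at h
    · simp [spaced] at h
    simp only [spaced, List.cons_append, List.cons_eq_cons] at h
    obtain ⟨rfl, rfl, rfl, h⟩ := h
    simp only [List.cons_append]
    rcases ih h with h | h | ⟨i, j, h⟩ <;> rw [h]
    · rcases k with - | k
      · exact .inr (.inl rfl)
      · exact .inr (.inr ⟨0, k, rfl⟩)
    · exact .inr (.inl rfl)
    · exact .inr (.inr ⟨i + 1, j, rfl⟩)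

end NearlySpaced

section Heavy

variable {β : List Bool}

/-- The weight factors at a gap of three between consecutive peaks. As no shorter word has weight
above `cbrtThree ^ 2`, both factors must have weight at least `9 / 5`. -/
lemma isNearlySpaced_of_append_TFFT {x y : List Bool}
    (ih : ∀ γ : List Bool, γ.length < (x ++ true :: false :: false :: true :: y).length →
      9 / 5 ≤ weight γ → IsNearlySpaced γ)
    (h : 9 / 5 ≤ weight (x ++ true :: false :: false :: true :: y)) :
    IsNearlySpaced (x ++ true :: false :: false :: true :: y) := by
  have hsq : (2.07 : ℝ) < cbrtThree ^ 2 := by nlinarith [lt_cbrtThree]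
  have hle : ∀ γ : List Bool, γ.length < (x ++ true :: false :: false :: true :: y).length →
      weight γ ≤ cbrtThree ^ 2 := by
    intro γ hγ
    rcases le_or_gt (9 / 5) (weight γ) with hw | hw
    · exact (ih γ hγ hw).weight_le
    · linarith
  have hlenL : (x ++ [true, false, false]).length <
      (x ++ true :: false :: false :: true :: y).length := by simp
  have hlenR : (false :: false :: true :: y).length <
      (x ++ true :: false :: false :: true :: y).length := by simp; lia
  have hmul := weight_mul_cbrtThree_sq x y
  have hL : 9 / 5 ≤ weight (x ++ [true, false, false]) := by
    nlinarith [hle _ hlenR, weight_nonneg (x ++ [true, false, false])]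
  have hR : 9 / 5 ≤ weight (false :: false :: true :: y) := by
    nlinarith [hle _ hlenL, weight_nonneg (false :: false :: true :: y)]
  have hsplit : x ++ true :: false :: false :: true :: y =
      (x ++ [true, false, false]) ++ true :: y := by simp
  rcases (ih _ hlenL hL).of_append_TFF with ⟨i, hi⟩ | ⟨i, hi⟩ <;>
    rcases (ih _ hlenR hR).of_FFT_cons with ⟨j, rfl⟩ | ⟨j, rfl⟩
  · rw [hsplit, hi, spaced_append_true_cons_spaced]
    exact .of_spaced _
  · rw [hsplit, hi, ← List.cons_append, ← List.append_assoc, spaced_append_true_cons_spaced]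
    exact .append_false _
  · rw [hsplit, hi, List.cons_append, spaced_append_true_cons_spaced]
    exact .false_cons _
  · rw [hi, weight_false_cons_spaced_succ] at hmul
    have hR' := weight_spaced_succ_append_false j
    simp only [spaced, List.cons_append] at hR'
    rw [hR'] at hmul
    nlinarith

lemma weight_append_FFF_le (x y : List Bool) :
    weight (x ++ false :: false :: false :: y) ≤
      2 / 3 * cbrtThree * weight (x ++ false :: false :: y) := by
  calc weight (x ++ false :: false :: false :: y)
      ≤ 2 / 3 * peakProb (x ++ false :: false :: y) *
          cbrtThree ^ (x ++ false :: false :: false :: y).length :=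
        mul_le_mul_of_nonneg_right (peakProb_three_false_le x y) (pow_pos cbrtThree_pos _).le
    _ = 2 / 3 * cbrtThree * weight (x ++ false :: false :: y) := by
        simp only [weight, List.length_append, List.length_cons]
        ring

lemma isNearlySpaced_of_append_FFF {x y : List Bool}
    (ih : ∀ γ : List Bool, γ.length < (x ++ false :: false :: false :: y).length →
      9 / 5 ≤ weight γ → IsNearlySpaced γ)
    (hTFFT : ¬[true, false, false, true] <:+: x ++ false :: false :: false :: y)
    (h : 9 / 5 ≤ weight (x ++ false :: false :: false :: y)) :
    IsNearlySpaced (x ++ false :: false :: false :: y) := by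
  have hlt : 9 / 5 < weight (x ++ false :: false :: y) := by
    nlinarith [weight_append_FFF_le x y, cbrtThree_lt, weight_nonneg (x ++ false :: false :: y)]
  have hFFF : x ++ false :: false :: y ≠ [false, false, false] := by
    intro hγ
    have hβ : x ++ false :: false :: false :: y = [false, false, false, false] :=
      List.perm_replicate (n := 4).1
        (List.perm_middle.trans (hγ ▸ List.Perm.refl _))
    rw [hβ, weight_FFFF] at h
    linarith [cbrtThree_lt]
  have hshort := ih (x ++ false :: false :: y) (by simp) hlt.le
  generalize hγ : x ++ false :: false :: y = γ at hshort hlt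
  rcases hshort with k | (- | k) | (- | k)
  · rcases eq_of_append_FF_eq_spaced hγ with hβ | hβ | ⟨i, j, hβ⟩
    · rw [hβ]
      exact .false_cons k
    · rw [hβ]
      exact .append_false k
    · obtain ⟨rfl, rfl⟩ : i = 0 ∧ j = 0 := by
        rw [hβ] at hTFFT
        constructor
        · rcases i with - | i
          · rfl
          refine absurd ⟨spaced i, false :: false :: false :: true :: spaced j, ?_⟩ hTFFT
          rw [← add_zero i, ← spaced_append_true_cons_spaced]
          simp [spaced]
        · rcases j with - | j
          · rfl
          exact absurd ⟨spaced i ++ [true, false, false, false], spaced j, by simp [spaced]⟩ hTFFT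
      rw [hβ] at h
      norm_num [spaced, weight_FFTFFFTFF] at h
  · exact absurd hγ hFFF
  · exact absurd (weight_false_cons_spaced_succ k) hlt.ne'
  · exact absurd hγ hFFF
  · exact absurd (weight_spaced_succ_append_false k) hlt.ne'

lemma exists_zigzag_of_true_cons_suffix {β γ : List Bool} (hγ : true :: γ <:+ β)
    (hT : ¬[true] <:+ β) (hTT : ¬[true, true] <:+: β) (hFFF : ¬[false, false, false] <:+: β)
    (hTFFT : ¬[true, false, false, true] <:+: β) :
    ∃ k, ∃ j ≤ 1, γ = zigzag k ++ List.replicate j false :=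
  match γ with
  | [] => absurd hγ hT
  | true :: γ => absurd (.trans ⟨[], γ, rfl⟩ hγ.isInfix) hTT
  | [false] => ⟨0, 0, by simp, rfl⟩
  | [false, false] => ⟨0, 1, le_rfl, rfl⟩
  | false :: false :: false :: γ => absurd (.trans ⟨[true], γ, rfl⟩ hγ.isInfix) hFFF
  | false :: false :: true :: γ => absurd (.trans ⟨[], γ, rfl⟩ hγ.isInfix) hTFFT
  | false :: true :: γ => by
      obtain ⟨k, j, hj, rfl⟩ := exists_zigzag_of_true_cons_suffix
        (.trans ⟨[true, false], rfl⟩ hγ) hT hTT hFFF hTFFT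
      exact ⟨k + 1, j, hj, rfl⟩

lemma peakProb_zigzag_append (k : ℕ) {j : ℕ} (hj : j ≤ 1) :
    peakProb (zigzag (k + 1) ++ List.replicate j false) = peakProb (zigzag (k + 1)) := by
  obtain ⟨u, hu⟩ := exists_zigzag_succ_eq_append k
  interval_cases j
  · rw [List.replicate_zero, List.append_nil]
  · rw [hu, ← peakProb_append_true_false_false, List.append_assoc]
    rfl

lemma peakProb_zigzag_mul_pow_lt {k n : ℕ} (hn : n ≤ 2 * k + 5) (hk : k = 0 → n ≤ 4) :
    peakProb (zigzag (k + 1)) * cbrtThree ^ n < 9 / 5 := by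
  have hone : 1 ≤ cbrtThree := by linarith [lt_cbrtThree]
  rcases k with - | k
  · calc peakProb (zigzag 1) * cbrtThree ^ n
        ≤ 1 / 3 * cbrtThree ^ 4 := by
          rw [peakProb_zigzag_one]
          gcongr
          exact hk rfl
      _ = cbrtThree := by linear_combination cbrtThree / 3 * cbrtThree_pow_three
      _ < 9 / 5 := by linarith [cbrtThree_lt]
  · have hpow : (12 / 25 * cbrtThree ^ 2) ^ (k + 2) ≤ 1 :=
      pow_le_one₀ (by positivity) (by nlinarith [cbrtThree_lt, cbrtThree_pos])
    calc peakProb (zigzag (k + 2)) * cbrtThree ^ n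
        ≤ 59 / 100 * (12 / 25) ^ (k + 2) * cbrtThree ^ (2 * (k + 2) + 3) := by
          gcongr
          exacts [peakProb_zigzag_add_two_le k, by lia]
      _ = 177 / 100 * (12 / 25 * cbrtThree ^ 2) ^ (k + 2) := by
          rw [pow_add cbrtThree, cbrtThree_pow_three, mul_pow, ← pow_mul]
          ring
      _ < 9 / 5 := by linarith

lemma isNearlySpaced_of_not_infix {β : List Bool} (hFFF : ¬[false, false, false] <:+: β)
    (hTFFT : ¬[true, false, false, true] <:+: β) (h : 9 / 5 ≤ weight β) : IsNearlySpaced β := by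
  have hprob : peakProb β ≠ 0 := by
    intro h0
    norm_num [weight, h0] at h
  have hTT : ¬[true, true] <:+: β := by
    rintro ⟨x, y, rfl⟩
    exact hprob (by simpa using peakProb_append_true_true x y)
  have hT : ¬[true] <:+ β := by
    rintro ⟨x, rfl⟩
    exact hprob (peakProb_append_true x)
  match β with
  | [] => norm_num [weight, peakProb_nil] at h
  | true :: v => exact absurd (peakProb_true_cons v) hprob
  | [false] =>
    simp only [weight, peakProb_singleton_false, List.length_singleton, pow_one, one_mul] at h
    linarith [cbrtThree_lt]
  | [false, false] => exact .of_spaced 0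
  | false :: false :: false :: v => exact absurd ⟨[], v, rfl⟩ hFFF
  | false :: true :: v =>
    obtain ⟨k, j, hj, rfl⟩ :=
      exists_zigzag_of_true_cons_suffix ⟨[false], rfl⟩ hT hTT hFFF hTFFT
    have hp : peakProb (false :: true :: (zigzag k ++ List.replicate j false)) = _ :=
      peakProb_zigzag_append k hj
    rw [weight, hp] at h
    refine absurd (peakProb_zigzag_mul_pow_lt ?_ ?_) h.not_gt <;>
      simp only [List.length_cons, List.length_append, length_zigzag, List.length_replicate] <;> lia
  | false :: false :: true :: v =>
    obtain ⟨k, j, hj, rfl⟩ :=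
      exists_zigzag_of_true_cons_suffix ⟨[false, false], rfl⟩ hT hTT hFFF hTFFT
    by_cases hkj : k = 0 ∧ j = 1
    · obtain ⟨rfl, rfl⟩ := hkj
      exact .of_spaced 1
    have hp : peakProb (false :: true :: (zigzag k ++ List.replicate j false)) = _ :=
      peakProb_zigzag_append k hj
    rw [weight, peakProb_false_false_true_cons, hp] at h
    refine absurd (peakProb_zigzag_mul_pow_lt ?_ ?_) h.not_gt <;>
      simp only [List.length_cons, List.length_append, length_zigzag, List.length_replicate] <;> lia

theorem isNearlySpaced_of_le_weight (β : List Bool) (h : 9 / 5 ≤ weight β) :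
    IsNearlySpaced β := by
  induction hN : β.length using Nat.strong_induction_on generalizing β with
  | _ N ih =>
  have ih' : ∀ γ : List Bool, γ.length < β.length → 9 / 5 ≤ weight γ → IsNearlySpaced γ :=
    fun γ hγ hw => ih γ.length (hN ▸ hγ) γ hw rfl
  by_cases hTFFT : [true, false, false, true] <:+: β
  · obtain ⟨x, y, rfl⟩ := hTFFT
    simp only [List.append_assoc, List.cons_append, List.nil_append] at ih' h ⊢
    exact isNearlySpaced_of_append_TFFT ih' h
  by_cases hFFF : [false, false, false] <:+: β
  · obtain ⟨x, y, rfl⟩ := hFFF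
    simp only [List.append_assoc, List.cons_append, List.nil_append] at ih' h hTFFT ⊢
    exact isNearlySpaced_of_append_FFF ih' hTFFT h
  exact isNearlySpaced_of_not_infix hFFF hTFFT h

lemma le_weight_iff_of_length {k : ℕ} (hlen : β.length = 3 * (k + 2)) :
    9 / 5 ≤ weight β ↔ β = false :: spaced (k + 1) ∨ β = spaced (k + 1) ++ [false] := by
  constructor
  · intro h
    rcases isNearlySpaced_of_le_weight β h with j | j | j <;>
      simp only [List.length_cons, List.length_append, List.length_nil, length_spaced] at hlen
    · lia
    · obtain rfl : j = k + 1 := by lia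
      exact .inl rfl
    · obtain rfl : j = k + 1 := by lia
      exact .inr rfl
  · rintro (rfl | rfl)
    · exact (weight_false_cons_spaced_succ k).ge
    · exact (weight_spaced_succ_append_false k).ge

lemma weight_le_of_length {k : ℕ} (hlen : β.length = 3 * (k + 2)) : weight β ≤ 9 / 5 := by
  by_contra! h
  rcases (le_weight_iff_of_length hlen).1 h.le with rfl | rfl
  · exact h.ne' (weight_false_cons_spaced_succ k)
  · exact h.ne' (weight_spaced_succ_append_false k)

end Heavy

section Composition

/-- The word of length `c.sum` in which the letters at the positions in `compPeaks c`, counted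
from `1`, are `true`, provided that the parts of `c` are positive. -/
def compWord : List ℕ → List Bool
  | [] => []
  | [x] => List.replicate x false
  | x :: y :: c => List.replicate (x - 1) false ++ true :: compWord (y :: c)

lemma length_compWord {c : List ℕ} (hc : ∀ x ∈ c, 0 < x) : (compWord c).length = c.sum := by
  induction c using compWord.induct with
  | case1 => rfl
  | case2 x => simp [compWord]
  | case3 x y c ih =>
    rw [List.forall_mem_cons] at hc
    rw [compWord, List.length_append, List.length_replicate, List.length_cons, ih hc.2,
      List.sum_cons (a := x)]
    lia

lemma mem_compPeaks_cons_cons {m x y : ℕ} {c : List ℕ} :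
    m ∈ compPeaks (x :: y :: c) ↔ m = x ∨ ∃ p ∈ compPeaks (y :: c), m = x + p := by
  simp only [compPeaks, List.length_cons, Nat.add_sub_cancel, mem_image, mem_range]
  constructor
  · rintro ⟨- | i, hi, rfl⟩
    · simp
    · exact .inr ⟨_, ⟨i, by lia, rfl⟩, by simp⟩
  · rintro (rfl | ⟨-, ⟨i, hi, rfl⟩, rfl⟩)
    · exact ⟨0, by lia, by simp⟩
    · exact ⟨i + 1, by lia, by simp⟩

lemma pos_of_mem_compPeaks {c : List ℕ} (hc : ∀ x ∈ c, 0 < x) {m : ℕ} (hm : m ∈ compPeaks c) :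
    0 < m := by
  rcases c with - | ⟨x, - | ⟨y, c⟩⟩
  · simp [compPeaks] at hm
  · simp [compPeaks] at hm
  · have hx := hc x List.mem_cons_self
    rcases mem_compPeaks_cons_cons.1 hm with rfl | ⟨p, -, rfl⟩ <;> lia

lemma getElem?_compWord {c : List ℕ} (hc : ∀ x ∈ c, 0 < x) (i : ℕ) :
    (compWord c)[i]? = some true ↔ i + 1 ∈ compPeaks c := by
  induction c using compWord.induct generalizing i with
  | case1 => simp [compWord, compPeaks]
  | case2 x => simp [compWord, compPeaks, List.getElem?_replicate]
  | case3 x y c ih =>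
    rw [List.forall_mem_cons] at hc
    rw [compWord, mem_compPeaks_cons_cons]
    rcases lt_trichotomy (i + 1) x with hi | rfl | hi
    · rw [List.getElem?_append_left (by simp; lia), List.getElem?_replicate, if_pos (by lia)]
      simp only [Option.some.injEq, Bool.false_eq_true, false_iff, not_or, not_exists, not_and]
      exact ⟨hi.ne, fun p _ => by lia⟩
    · simp
    · obtain ⟨p, rfl⟩ : ∃ p, i = x + p := ⟨i - x, by lia⟩
      have hword : (List.replicate (x - 1) false ++ true :: compWord (y :: c))[x + p]? =
          (compWord (y :: c))[p]? := by
        rw [List.getElem?_append_right (by simp; lia), List.length_replicate,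
          show x + p - (x - 1) = p + 1 by lia, List.getElem?_cons_succ]
      rw [hword, ih hc.2]
      constructor
      · exact fun h => .inr ⟨p + 1, h, by lia⟩
      · rintro (h | ⟨q, hq, h⟩)
        · lia
        · rwa [show p + 1 = q by lia]

lemma replicate_append_true_cons_inj {a b : ℕ} {u v : List Bool}
    (h : List.replicate a false ++ true :: u = List.replicate b false ++ true :: v) :
    a = b ∧ u = v := by
  induction a generalizing b with
  | zero => cases b <;> simp_all [List.replicate_succ]
  | succ a ih =>
    cases b with
    | zero => simp [List.replicate_succ] at h
    | succ b => simpa using ih (by simpa [List.replicate_succ] using h)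

lemma eq_of_compWord_eq {c d : List ℕ} (hc : ∀ x ∈ c, 0 < x) (hd : ∀ x ∈ d, 0 < x)
    (h : compWord c = compWord d) : c = d := by
  have hsum : c.sum = d.sum := by rw [← length_compWord hc, h, length_compWord hd]
  induction c using compWord.induct generalizing d with
  | case1 =>
    rcases d with - | ⟨x, d⟩
    · rfl
    · exact absurd hsum (List.sum_pos _ hd (List.cons_ne_nil x d)).ne
  | case2 x =>
    rcases d with - | ⟨y, - | ⟨z, d⟩⟩
    · exact absurd hsum (List.sum_pos _ hc (List.cons_ne_nil x [])).ne'
    · simpa using hsum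
    · have : true ∈ compWord [x] := by rw [h]; simp [compWord]
      simp [compWord] at this
  | case3 x y c ih =>
    rcases d with - | ⟨x', - | ⟨y', d⟩⟩
    · exact absurd hsum (List.sum_pos _ hc (List.cons_ne_nil x _)).ne'
    · have : true ∈ compWord [x'] := by rw [← h]; simp [compWord]
      simp [compWord] at this
    · rw [List.forall_mem_cons] at hc hd
      obtain ⟨hx, htail⟩ := replicate_append_true_cons_inj h
      obtain rfl : x = x' := by lia
      rw [ih hc.2 hd.2 htail (by simpa using hsum)]

lemma compWord_inj {c d : List ℕ} (hc : ∀ x ∈ c, 0 < x) (hd : ∀ x ∈ d, 0 < x) :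
    compWord c = compWord d ↔ c = d :=
  ⟨eq_of_compWord_eq hc hd, congrArg compWord⟩

lemma compWord_replicate_three (k : ℕ) :
    compWord (List.replicate (k + 1) 3) = spaced k ++ [false] := by
  induction k with
  | zero => rfl
  | succ k ih => exact congrArg ([false, false, true] ++ ·) ih

lemma compWord_replicate_three_append_two (k : ℕ) :
    compWord (List.replicate k 3 ++ [2]) = spaced k := by
  induction k with
  | zero => rfl
  | succ k ih =>
    rw [spaced, ← ih]
    cases k <;> rfl

lemma compWord_four_cons (k : ℕ) :
    compWord (4 :: (List.replicate k 3 ++ [2])) = false :: spaced (k + 1) := by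
  rw [spaced, ← compWord_replicate_three_append_two]
  cases k <;> rfl

end Composition

section Perm

variable {n : ℕ}

open Classical in
lemma mem_peakSet {σ : Equiv.Perm (Fin n)} {i : ℕ} : i ∈ peakSet σ ↔ IsPeak σ i := by
  rw [peakSet, mem_filter, mem_range, and_iff_right_iff_imp]
  exact fun h => h.2.1

lemma getElem?_peakWord_ofFn (σ : Equiv.Perm (Fin n)) (i : ℕ) :
    (peakWord (List.ofFn σ))[i]? = some true ↔ i + 1 ∈ peakSet σ := by
  rw [mem_peakSet]
  cases i with
  | zero =>
    refine iff_of_false (fun h => ?_) fun h => by have := h.1; lia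
    cases hl : List.ofFn σ <;> simp [hl, peakWord] at h
  | succ i =>
    simp only [getElem?_succ_peakWord, List.getElem?_ofFn, Option.dite_none_right_eq_some,
      Option.some.injEq]
    constructor
    · rintro ⟨-, -, -, ⟨h₀, rfl⟩, ⟨h₁, rfl⟩, ⟨h₂, rfl⟩, h⟩
      exact ⟨by lia, h₂, h⟩
    · rintro ⟨h₁, h₂, h⟩
      exact ⟨_, _, _, ⟨by lia, rfl⟩, ⟨by lia, rfl⟩, ⟨h₂, rfl⟩, h⟩

lemma eq_of_getElem?_eq_some_true_iff {u v : List Bool} (hlen : u.length = v.length)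
    (h : ∀ i : ℕ, u[i]? = some true ↔ v[i]? = some true) : u = v := by
  refine List.ext_getElem hlen fun i hu hv => Bool.eq_iff_iff.2 ?_
  simpa [hu, hv] using h i

lemma peakWord_ofFn_eq_compWord_iff {c : List ℕ} (hc : ∀ x ∈ c, 0 < x)
    (σ : Equiv.Perm (Fin c.sum)) :
    peakWord (List.ofFn σ) = compWord c ↔ peakSet σ = compPeaks c := by
  constructor
  · intro h
    ext i
    cases i with
    | zero =>
      refine iff_of_false (fun hi => ?_) fun hi => (pos_of_mem_compPeaks hc hi).false
      have := (mem_peakSet.1 hi).1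
      lia
    | succ i => rw [← getElem?_peakWord_ofFn, h, getElem?_compWord hc]
  · intro h
    refine eq_of_getElem?_eq_some_true_iff ?_ fun i => ?_
    · rw [length_peakWord, List.length_ofFn, length_compWord hc]
    · rw [getElem?_peakWord_ofFn, getElem?_compWord hc, h]

lemma card_filter_ofFn (P : List (Fin n) → Prop) [DecidablePred P] :
    Nat.card {σ : Equiv.Perm (Fin n) // P (List.ofFn σ)} =
      #{l ∈ arrangements (univ : Finset (Fin n)) | P l} := by
  rw [Nat.card_eq_fintype_card, Fintype.card_subtype]
  refine card_nbij (fun σ => List.ofFn σ) (fun σ hσ => ?_) (fun σ _ τ _ h => ?_) fun l hl => ?_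
  · simp only [mem_coe, mem_filter, mem_arrangements] at hσ ⊢
    refine ⟨⟨List.nodup_ofFn_ofInjective σ.injective, ?_⟩, hσ.2⟩
    ext i
    simpa using σ.surjective i
  · exact Equiv.coe_fn_injective (List.ofFn_injective h)
  · simp only [mem_coe, mem_filter] at hl
    have hlen : l.length = n := by simpa using length_eq_card hl.1
    obtain ⟨f, rfl⟩ : ∃ f : Fin n → Fin n, List.ofFn f = l :=
      ⟨fun i => l[i], List.ext_getElem (by simp [hlen]) (by simp)⟩
    have hf : f.Injective := List.nodup_ofFn.1 (mem_arrangements.1 hl.1).1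
    exact ⟨.ofBijective f (Finite.injective_iff_bijective.1 hf), by simpa using hl.2, rfl⟩

lemma Pcomp_eq {c : List ℕ} (hc : ∀ x ∈ c, 0 < x) :
    (Pcomp c : ℝ) = c.sum ! * peakProb (compWord c) := by
  have hcard : #(univ : Finset (Fin c.sum)) = (compWord c).length := by
    simp [length_compWord hc]
  simp only [Pcomp, numPeakSet, ← peakWord_ofFn_eq_compWord_iff hc]
  rw [card_filter_ofFn (peakWord · = compWord c), ← peakCount, peakCount_eq hcard, card_univ,
    Fintype.card_fin]

lemma Pcomp_le_Pcomp_iff {b c : List ℕ} (hb : ∀ x ∈ b, 0 < x) (hc : ∀ x ∈ c, 0 < x)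
    (h : b.sum = c.sum) : Pcomp b ≤ Pcomp c ↔ weight (compWord b) ≤ weight (compWord c) := by
  have hpow := pow_pos cbrtThree_pos c.sum
  have hfact : (0 : ℝ) < c.sum ! := by positivity
  rw [← Nat.cast_le (α := ℝ), Pcomp_eq hb, Pcomp_eq hc, h, mul_le_mul_iff_right₀ hfact, weight,
    weight, length_compWord hb, length_compWord hc, h, mul_le_mul_iff_left₀ hpow]

lemma isMaximal_iff_le_weight {c : List ℕ} {k : ℕ} (hc : IsComposition (3 * (k + 2)) c) :
    IsMaximal c ↔ 9 / 5 ≤ weight (compWord c) := by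
  constructor
  · intro h
    have hd : IsComposition c.sum (List.replicate (k + 2) 3) := by
      rw [hc.2]
      exact ⟨by simp, by simp [mul_comm]⟩
    rw [← weight_spaced_succ_append_false k, ← compWord_replicate_three,
      ← Pcomp_le_Pcomp_iff hd.1 hc.1 hd.2]
    exact h _ hd
  · intro h b hb
    rw [Pcomp_le_Pcomp_iff hb.1 hc.1 hb.2]
    refine (weight_le_of_length (k := k) ?_).trans h
    rw [length_compWord hb.1, hb.2, hc.2]

end Perm

end PeakWord

theorem most_frequent_peak_set_mod_zero (ℓ n : ℕ) (hℓ : 2 ≤ ℓ) (hn : n = 3 * ℓ)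
    (c : List ℕ) (hc : IsComposition n c) :
    IsMaximal c ↔
      c = List.replicate ℓ 3 ∨ c = 4 :: (List.replicate (ℓ - 2) 3 ++ [2]) := by
  obtain ⟨k, rfl⟩ := Nat.exists_eq_add_of_le' hℓ
  subst hn
  have hthree : ∀ x ∈ List.replicate (k + 2) 3, 0 < x := by simp
  have hfour : ∀ x ∈ 4 :: (List.replicate k 3 ++ [2]), 0 < x := by grind
  rw [PeakWord.isMaximal_iff_le_weight hc,
    PeakWord.le_weight_iff_of_length ((PeakWord.length_compWord hc.1).trans hc.2), or_comm,
    ← PeakWord.compWord_replicate_three, ← PeakWord.compWord_four_cons,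
    PeakWord.compWord_inj hc.1 hthree, PeakWord.compWord_inj hc.1 hfour, Nat.add_sub_cancel]
end

section
/- Let ℓ ≥ 2 and n = 3ℓ+2. A composition c of n is maximal if and only if c = (3^ℓ, 2) (ℓ parts equal to 3 followed by a single part equal to 2). -/
/-!
Let `Q(e)` be the probability that a random permutation of `{1, …, |e| - 1}` has peak set
`S(e)`; it is invariant under reversal of `e`. Raising the last part of a composition `c` of
`3ℓ + 2` by one gives `e` with `|e| = 3(ℓ + 1)` and `P(c) = (3ℓ + 2)! Q(e)`.

Conditioning on the position of the largest entry expresses `(|e| - 1) Q(e)` as the sum of `Q`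
at `e` with its first part lowered, `Q` at `e` with its last part lowered, and `Q(γ) Q(δ)` over
all ways of cutting `e` into `γ` and `δ`. Induction along this recurrence gives, for parts at
least `2`, the factorization `Q(α, 3, β) = Q(α, 2) Q(2, β)` and, for `k ≥ 3`, the domination
`Q(α, k, β) ≤ Q(k) Q(α, 2) Q(2, β)`. Splitting `e` at all its parts `k ≥ 3` leaves runs of `2`s,
on which `Q` decays at least like `(4 / 9) ^ j`. Hence `Q(e) ≤ 3 ∏ w(eᵢ)` with `w(k)³ 3ᵏ ≤ 1`,
strictly unless `k = 3`, so `Q(e) ≤ 3 ^ (-ℓ)`, strictly unless all parts are `3`; the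
factorization shows that `(3, …, 3)` attains this value. Adjacent peaks being impossible, `Q`
vanishes when some part is `1`.
-/

open Finset

section ListPeaks

variable {α : Type*} [Preorder α]

/-- The analogue of `IsPeak` for a list: position `i` is 1-based, so it holds the entry
`l[i - 1]`. -/
def IsListPeak (l : List α) (i : ℕ) : Prop :=
  ∃ (_ : 2 ≤ i) (_ : i < l.length), l[i - 2] < l[i - 1] ∧ l[i] < l[i - 1]

open Classical in
/-- The set of 1-based peak positions of a list. -/
noncomputable def listPeaks (l : List α) : Finset ℕ :=
  {i ∈ range l.length | IsListPeak l i}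

lemma mem_listPeaks {l : List α} {i : ℕ} : i ∈ listPeaks l ↔ IsListPeak l i := by
  simp only [listPeaks, mem_filter, mem_range, and_iff_right_iff_imp]
  exact fun ⟨_, h, _⟩ => h

lemma lt_length_of_mem_listPeaks {l : List α} {i : ℕ} (hi : i ∈ listPeaks l) : i < l.length :=
  let ⟨_, h, _⟩ := mem_listPeaks.1 hi; h

lemma two_le_of_mem_listPeaks {l : List α} {i : ℕ} (hi : i ∈ listPeaks l) : 2 ≤ i :=
  let ⟨h, _⟩ := mem_listPeaks.1 hi; h

/-- The set `A ∪ {s} ∪ (s + B)`: the shape of a peak set, and of the set of partial sums of a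
composition, cut at its element `s`. -/
def joinAt (s : ℕ) (A B : Finset ℕ) : Finset ℕ :=
  insert s (A ∪ B.image (s + ·))

/-- The part of `S` beyond `s`, counted from `s`. -/
def beyond (S : Finset ℕ) (s : ℕ) : Finset ℕ :=
  {i ∈ S | s < i}.image (· - s)

lemma mem_beyond {S : Finset ℕ} {s i : ℕ} : i ∈ beyond S s ↔ 0 < i ∧ s + i ∈ S := by
  simp only [beyond, mem_image, mem_filter]
  constructor
  · rintro ⟨j, ⟨hj, hlt⟩, rfl⟩
    exact ⟨by omega, by rwa [Nat.add_sub_cancel' hlt.le]⟩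
  · rintro ⟨hi, hS⟩
    exact ⟨s + i, ⟨hS, by omega⟩, by omega⟩

lemma joinAt_eq_iff {s : ℕ} {A B S : Finset ℕ} (hA : ∀ a ∈ A, a < s) (hB : ∀ b ∈ B, 0 < b) :
    joinAt s A B = S ↔ s ∈ S ∧ A = {i ∈ S | i < s} ∧ B = beyond S s := by
  constructor
  · rintro rfl
    refine ⟨mem_insert_self _ _, ?_, ?_⟩ <;> ext i
    · grind [joinAt]
    · have := hB i
      have := hA (s + i)
      simp only [mem_beyond, joinAt, mem_insert, mem_union, mem_image]
      grind
  · rintro ⟨hs, rfl, rfl⟩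
    ext i
    simp only [joinAt, mem_insert, mem_union, mem_filter, mem_image, mem_beyond]
    constructor
    · grind
    · intro hi
      rcases lt_trichotomy i s with h | h | h
      · grind
      · grind
      · exact .inr (.inr ⟨i - s, by grind⟩)

section Max

variable {l₁ l₂ : List α} {m : α}

lemma isListPeak_append_cons_iff_left {i : ℕ} (h₁ : ∀ x ∈ l₁, x < m) (hi : i ≤ l₁.length) :
    IsListPeak (l₁ ++ m :: l₂) i ↔ IsListPeak l₁ i := by
  rcases hi.lt_or_eq with hi | rfl
  · simp only [IsListPeak]
    grind
  · constructor
    · rintro ⟨_, _, -, h⟩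
      rw [List.getElem_append_right le_rfl, List.getElem_append_left (by omega)] at h
      exact absurd (by simpa using h) (h₁ _ (List.getElem_mem _)).not_gt
    · rintro ⟨-, h, -⟩
      exact absurd h (lt_irrefl _)

lemma isListPeak_append_cons_iff_max (h₁ : ∀ x ∈ l₁, x < m) (h₂ : ∀ x ∈ l₂, x < m) :
    IsListPeak (l₁ ++ m :: l₂) (l₁.length + 1) ↔ l₁ ≠ [] ∧ l₂ ≠ [] := by
  simp only [IsListPeak, ← List.length_pos_iff]
  constructor
  · grind
  · rintro ⟨hl₁, hl₂⟩
    refine ⟨by omega, by simpa using hl₂, ?_, ?_⟩ <;>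
      simp +arith only [List.getElem_append, List.getElem_cons] <;> grind

lemma isListPeak_append_cons_iff_right {i : ℕ} (h₂ : ∀ x ∈ l₂, x < m) (hi : 0 < i) :
    IsListPeak (l₁ ++ m :: l₂) (l₁.length + 1 + i) ↔ IsListPeak l₂ i := by
  have entry (j : ℕ) (hj : j < l₂.length) :
      (l₁ ++ m :: l₂)[l₁.length + 1 + j]'(by grind) = l₂[j] := by grind
  obtain rfl | ⟨j, rfl⟩ : i = 1 ∨ ∃ j, i = j + 2 := by
    by_cases h : i = 1
    exacts [.inl h, .inr ⟨i - 2, by omega⟩]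
  · constructor
    · rintro ⟨_, hlt, h, -⟩
      have first : (l₁ ++ m :: l₂)[l₁.length + 1 + 1 - 2] = m := by simp
      have second := entry 0 (by grind)
      exact absurd (second ▸ first ▸ h) (h₂ _ (List.getElem_mem _)).not_gt
    · rintro ⟨h, -⟩
      omega
  · have e₀ := entry j
    have e₁ := entry (j + 1)
    have e₂ := entry (j + 2)
    simp only [IsListPeak]
    grind

lemma listPeaks_append_cons (h₁ : ∀ x ∈ l₁, x < m) (h₂ : ∀ x ∈ l₂, x < m)
    (hl₁ : l₁ ≠ []) (hl₂ : l₂ ≠ []) :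
    listPeaks (l₁ ++ m :: l₂) = joinAt (l₁.length + 1) (listPeaks l₁) (listPeaks l₂) := by
  refine ((joinAt_eq_iff (fun i hi => (lt_length_of_mem_listPeaks hi).trans (Nat.lt_succ_self _))
    (fun i hi => two_pos.trans_le (two_le_of_mem_listPeaks hi))).2 ⟨?_, ?_, ?_⟩).symm
  · exact mem_listPeaks.2 ((isListPeak_append_cons_iff_max h₁ h₂).2 ⟨hl₁, hl₂⟩)
  · ext i
    have := @lt_length_of_mem_listPeaks _ _ l₁ i
    grind [mem_listPeaks, isListPeak_append_cons_iff_left]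
  · ext i
    have := @two_le_of_mem_listPeaks _ _ l₂ i
    grind [mem_beyond, mem_listPeaks, isListPeak_append_cons_iff_right]

lemma listPeaks_cons (h₂ : ∀ x ∈ l₂, x < m) :
    listPeaks (m :: l₂) = (listPeaks l₂).image (· + 1) := by
  ext i
  simp only [mem_image]
  have shift {j : ℕ} (hj : 0 < j) : IsListPeak (m :: l₂) (j + 1) ↔ IsListPeak l₂ j := by
    simpa [add_comm] using isListPeak_append_cons_iff_right (l₁ := []) h₂ hj
  constructor
  · intro hi
    have := two_le_of_mem_listPeaks hi
    obtain ⟨j, rfl⟩ := Nat.exists_eq_add_of_lt this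
    exact ⟨1 + j, mem_listPeaks.2 ((shift (by omega)).1 (mem_listPeaks.1 hi)), rfl⟩
  · rintro ⟨j, hj, rfl⟩
    have := two_le_of_mem_listPeaks hj
    exact mem_listPeaks.2 ((shift (by omega)).2 (mem_listPeaks.1 hj))

lemma listPeaks_concat (h₁ : ∀ x ∈ l₁, x < m) : listPeaks (l₁ ++ [m]) = listPeaks l₁ := by
  ext i
  rw [mem_listPeaks, mem_listPeaks]
  rcases le_or_gt i l₁.length with hi | hi
  · exact isListPeak_append_cons_iff_left h₁ hi
  · simp only [IsListPeak]
    grind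

end Max

end ListPeaks

section Arrangements

/-- The arrangements of a finite set `T`: the lists in which each element of `T` occurs exactly
once and nothing else occurs. -/
def arrangements {α : Type*} [DecidableEq α] (T : Finset α) : Finset (List α) :=
  T.val.lists.toFinset

section DecidableEq

variable {α : Type*} [DecidableEq α] {T T₁ : Finset α} {l l₁ l₂ : List α} {m x : α}

lemma mem_arrangements : l ∈ arrangements T ↔ l.Nodup ∧ l.toFinset = T := by
  rw [arrangements, Multiset.mem_toFinset, Multiset.mem_lists_iff, and_comm]
  constructor
  · intro h
    have hl : l.Nodup := by simpa [h] using T.nodup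
    exact ⟨Finset.val_injective (by rw [h, List.toFinset_val, hl.dedup]; rfl), hl⟩
  · rintro ⟨rfl, hl⟩
    rw [List.toFinset_val, hl.dedup]
    rfl

lemma length_of_mem_arrangements (hl : l ∈ arrangements T) : l.length = #T := by
  obtain ⟨hnd, rfl⟩ := mem_arrangements.1 hl
  exact (List.toFinset_card_of_nodup hnd).symm

lemma mem_iff_of_mem_arrangements (hl : l ∈ arrangements T) : x ∈ l ↔ x ∈ T := by
  rw [← (mem_arrangements.1 hl).2, List.mem_toFinset]

@[simp]
lemma arrangements_empty : arrangements (∅ : Finset α) = {[]} := by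
  ext l
  rw [mem_arrangements, List.toFinset_eq_empty_iff, mem_singleton]
  exact and_iff_right_of_imp fun h => h ▸ List.nodup_nil

lemma append_cons_mem_arrangements_insert (hm : m ∉ T) :
    l₁ ++ m :: l₂ ∈ arrangements (insert m T) ↔
      l₁.toFinset ⊆ T ∧ l₁ ∈ arrangements l₁.toFinset ∧
        l₂ ∈ arrangements (T \ l₁.toFinset) := by
  simp only [mem_arrangements, List.nodup_append, List.nodup_cons, Finset.ext_iff, subset_iff,
    List.mem_toFinset, List.mem_append, List.mem_cons, mem_insert, mem_sdiff]
  grind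

lemma card_filter_arrangements_insert (hm : m ∉ T) (p : List α → Prop) [DecidablePred p] :
    #{l ∈ arrangements (insert m T) | p l} =
      ∑ T₁ ∈ T.powerset,
        #{x ∈ arrangements T₁ ×ˢ arrangements (T \ T₁) | p (x.1 ++ m :: x.2)} := by
  rw [← card_sigma]
  symm
  refine card_bij (fun x _ => x.2.1 ++ m :: x.2.2) ?_ ?_ ?_
  · rintro ⟨T₁, l₁, l₂⟩ h
    simp only [mem_sigma, mem_powerset, mem_filter, mem_product] at h ⊢
    obtain ⟨hT₁, ⟨hl₁, hl₂⟩, hp⟩ := h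
    obtain ⟨-, rfl⟩ := mem_arrangements.1 hl₁
    exact ⟨(append_cons_mem_arrangements_insert hm).2 ⟨hT₁, hl₁, hl₂⟩, hp⟩
  · rintro ⟨T₁, l₁, l₂⟩ h ⟨T₁', l₁', l₂'⟩ h' heq
    simp only [mem_sigma, mem_powerset, mem_filter, mem_product] at h h'
    have hm₁ : m ∉ l₁ := fun hx => hm (h.1 ((mem_iff_of_mem_arrangements h.2.1.1).1 hx))
    have hm₂ : m ∉ l₂ := fun hx =>
      hm (mem_sdiff.1 ((mem_iff_of_mem_arrangements h.2.1.2).1 hx)).1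
    obtain ⟨rfl, rfl⟩ : l₁ = l₁' ∧ l₂ = l₂' := by
      simpa using (List.append_cons_inj_of_notMem hm₁ hm₂).1 heq
    obtain rfl : T₁ = T₁' :=
      (mem_arrangements.1 h.2.1.1).2.symm.trans (mem_arrangements.1 h'.2.1.1).2
    rfl
  · intro l hl
    rw [mem_filter] at hl
    obtain ⟨l₁, l₂, rfl⟩ :=
      List.append_of_mem ((mem_iff_of_mem_arrangements hl.1).2 (mem_insert_self m T))
    obtain ⟨hT₁, hl₁, hl₂⟩ := (append_cons_mem_arrangements_insert hm).1 hl.1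
    exact ⟨⟨l₁.toFinset, l₁, l₂⟩, by simp [hT₁, hl₁, hl₂, hl.2], rfl⟩

end DecidableEq

variable {α : Type*} [LinearOrder α]

lemma mem_peakSet {n i : ℕ} {σ : Equiv.Perm (Fin n)} : i ∈ peakSet σ ↔ IsPeak σ i := by
  classical
  rw [peakSet, mem_filter, mem_range, and_iff_right_iff_imp]
  exact fun ⟨_, h, _⟩ => h

lemma listPeaks_ofFn {n : ℕ} (f : Fin n ↪o α) (σ : Equiv.Perm (Fin n)) :
    listPeaks (List.ofFn (f ∘ σ)) = peakSet σ := by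
  ext i
  simp only [mem_listPeaks, mem_peakSet, IsListPeak, IsPeak, List.length_ofFn, List.getElem_ofFn,
    Function.comp_apply, f.lt_iff_lt]

lemma exists_perm_of_mem_arrangements {T : Finset α} {l : List α} (hl : l ∈ arrangements T) :
    ∃ σ : Equiv.Perm (Fin #T), List.ofFn (T.orderEmbOfFin rfl ∘ σ) = l := by
  have hlen := length_of_mem_arrangements hl
  let f (i : Fin #T) : T :=
    ⟨l[i]'(by omega), (mem_iff_of_mem_arrangements hl).1 (List.getElem_mem _)⟩
  have hf : f.Injective := fun i j h =>
    Fin.ext (((mem_arrangements.1 hl).1.getElem_inj_iff).1 (congrArg Subtype.val h))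
  have hinj : ((T.orderIsoOfFin rfl).symm ∘ f).Injective := (OrderIso.injective _).comp hf
  refine ⟨Equiv.ofBijective _ (Finite.injective_iff_bijective.1 hinj), List.ext_getElem ?_ ?_⟩
  · simp [hlen]
  · intro i h h'
    simp [f, ← Finset.coe_orderIsoOfFin_apply]

lemma card_filter_arrangements_listPeaks (T : Finset α) (S : Finset ℕ) :
    #{l ∈ arrangements T | listPeaks l = S} = numPeakSet #T S := by
  classical
  rw [numPeakSet, Nat.card_eq_fintype_card, Fintype.card_subtype]
  symm
  refine card_bij (fun σ _ => List.ofFn (T.orderEmbOfFin rfl ∘ σ)) ?_ ?_ ?_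
  · intro σ hσ
    rw [mem_filter] at hσ ⊢
    have hinj := (T.orderEmbOfFin rfl).injective.comp σ.injective
    refine ⟨mem_arrangements.2 ⟨List.nodup_ofFn.2 hinj, ?_⟩, (listPeaks_ofFn _ σ).trans hσ.2⟩
    rw [← coe_inj, List.coe_toFinset]
    simp only [List.mem_ofFn]
    exact (σ.surjective.range_comp _).trans (T.range_orderEmbOfFin rfl)
  · intro σ _ τ _ h
    exact DFunLike.coe_injective
      ((T.orderEmbOfFin rfl).injective.comp_left (List.ofFn_injective h))
  · intro l hl
    rw [mem_filter] at hl
    obtain ⟨σ, rfl⟩ := exists_perm_of_mem_arrangements hl.1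
    exact ⟨σ, mem_filter.2 ⟨mem_univ σ, (listPeaks_ofFn _ σ).symm.trans hl.2⟩, rfl⟩

end Arrangements

section Recurrence

section MaxPosition

variable {α : Type*} [LinearOrder α] {T T₁ : Finset α} {m : α} {S : Finset ℕ}

lemma card_filter_listPeaks_max_first (hm : ∀ x ∈ T, x < m) (hS : 0 ∉ S) :
    #{x ∈ arrangements ∅ ×ˢ arrangements T | listPeaks (x.1 ++ m :: x.2) = S} =
      numPeakSet #T (S.image (· - 1)) := by
  have shift (A : Finset ℕ) : A.image (· + 1) = S ↔ A = S.image (· - 1) := by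
    refine ⟨fun h => by simp [← h, image_image, Function.comp_def], ?_⟩
    rintro rfl
    rw [image_image]
    refine (image_congr fun i hi => ?_).trans image_id
    exact Nat.sub_add_cancel (Nat.pos_of_ne_zero fun h => hS (h ▸ hi))
  rw [← card_filter_arrangements_listPeaks, arrangements_empty, singleton_product, filter_map,
    card_map]
  refine congrArg card (filter_congr fun l hl => ?_)
  rw [← shift, ← listPeaks_cons fun x hx => hm x ((mem_iff_of_mem_arrangements hl).1 hx)]
  rfl

lemma card_filter_listPeaks_max_last (hm : ∀ x ∈ T, x < m) :
    #{x ∈ arrangements T ×ˢ arrangements ∅ | listPeaks (x.1 ++ m :: x.2) = S} =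
      numPeakSet #T S := by
  rw [← card_filter_arrangements_listPeaks, arrangements_empty, product_singleton, filter_map,
    card_map]
  refine congrArg card (filter_congr fun l hl => ?_)
  rw [← listPeaks_concat fun x hx => hm x ((mem_iff_of_mem_arrangements hl).1 hx)]
  rfl

lemma card_filter_listPeaks_max_mid (hm : ∀ x ∈ T, x < m) (hT₁ : T₁ ⊆ T) (h₀ : T₁ ≠ ∅)
    (h₁ : T₁ ≠ T) :
    #{x ∈ arrangements T₁ ×ˢ arrangements (T \ T₁) | listPeaks (x.1 ++ m :: x.2) = S} =
      if #T₁ + 1 ∈ S then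
        numPeakSet #T₁ {i ∈ S | i < #T₁ + 1} * numPeakSet (#T - #T₁) (beyond S (#T₁ + 1))
      else 0 := by
  have cut (x : List α × List α) (hx : x ∈ arrangements T₁ ×ˢ arrangements (T \ T₁)) :
      listPeaks (x.1 ++ m :: x.2) = S ↔ #T₁ + 1 ∈ S ∧
        listPeaks x.1 = {i ∈ S | i < #T₁ + 1} ∧ listPeaks x.2 = beyond S (#T₁ + 1) := by
    obtain ⟨hx₁, hx₂⟩ := mem_product.1 hx
    have hlen := length_of_mem_arrangements hx₁
    rw [listPeaks_append_cons, hlen, joinAt_eq_iff]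
    · exact fun i hi => by have := lt_length_of_mem_listPeaks hi; omega
    · exact fun i hi => by have := two_le_of_mem_listPeaks hi; omega
    · exact fun y hy => hm y (hT₁ ((mem_iff_of_mem_arrangements hx₁).1 hy))
    · exact fun y hy => hm y (sdiff_subset ((mem_iff_of_mem_arrangements hx₂).1 hy))
    · rintro h
      exact h₀ (card_eq_zero.1 (by rw [← hlen, h, List.length_nil]))
    · rintro h
      have hcard := length_of_mem_arrangements hx₂
      rw [h, List.length_nil, eq_comm, card_eq_zero, sdiff_eq_empty_iff_subset] at hcard
      exact h₁ (hT₁.antisymm hcard)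
  rw [filter_congr cut]
  split_ifs with hS
  · simp only [hS, true_and]
    rw [← card_sdiff_of_subset hT₁, ← card_filter_arrangements_listPeaks,
      ← card_filter_arrangements_listPeaks, ← card_product, ← filter_product]
  · simp [hS]

end MaxPosition

/-- The number of arrangements with peak set `S` of `n + 1` given elements whose largest one has a
prescribed set of `k` elements on its left and the remaining `n - k` on its right. -/
noncomputable def numPeakSetMaxAt (n : ℕ) (S : Finset ℕ) (k : ℕ) : ℕ :=
  if k = 0 then numPeakSet n (S.image (· - 1))
  else if k = n then numPeakSet n S
  else if k + 1 ∈ S then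
    numPeakSet k {i ∈ S | i < k + 1} * numPeakSet (n - k) (beyond S (k + 1))
  else 0

lemma numPeakSet_succ_eq_sum_maxAt {n : ℕ} (hn : 0 < n) {S : Finset ℕ} (hS : 0 ∉ S) :
    numPeakSet (n + 1) S = ∑ k ∈ range (n + 1), n.choose k * numPeakSetMaxAt n S k := by
  have hm : ∀ x ∈ range n, x < n := fun x => mem_range.1
  have maxAt : ∀ T₁ ∈ (range n).powerset,
      #{x ∈ arrangements T₁ ×ˢ arrangements (range n \ T₁) |
        listPeaks (x.1 ++ n :: x.2) = S} = numPeakSetMaxAt n S #T₁ := by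
    intro T₁ hT₁
    rw [mem_powerset] at hT₁
    rcases eq_or_ne T₁ ∅ with rfl | h₀
    · rw [sdiff_empty, card_filter_listPeaks_max_first hm hS]
      simp [numPeakSetMaxAt]
    rcases eq_or_ne T₁ (range n) with rfl | h₁
    · rw [Finset.sdiff_self, card_filter_listPeaks_max_last hm]
      simp [numPeakSetMaxAt, hn.ne']
    · have hcard : #T₁ ≠ n := fun h => h₁ (eq_of_subset_of_card_le hT₁ (by simp [h]))
      rw [card_filter_listPeaks_max_mid hm hT₁ h₀ h₁]
      simp [numPeakSetMaxAt, h₀, hcard]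
  have hcard : #(insert n (range n)) = n + 1 := by simp
  rw [← hcard, ← card_filter_arrangements_listPeaks,
    card_filter_arrangements_insert notMem_range_self, sum_congr rfl maxAt,
    sum_powerset_apply_card, hcard, card_range]
  simp only [smul_eq_mul]

lemma numPeakSet_succ {n : ℕ} (hn : 0 < n) {S : Finset ℕ} (hS : S ⊆ Icc 2 n) :
    numPeakSet (n + 1) S = numPeakSet n (S.image (· - 1)) + numPeakSet n S +
      ∑ s ∈ S, n.choose (s - 1) *
        (numPeakSet (s - 1) {i ∈ S | i < s} * numPeakSet (n + 1 - s) (beyond S s)) := by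
  have bounds {s : ℕ} (hs : s ∈ S) : 2 ≤ s ∧ s ≤ n := mem_Icc.1 (hS hs)
  have interior : ∑ k ∈ Ico 1 n, n.choose k * numPeakSetMaxAt n S k =
      ∑ s ∈ S, n.choose (s - 1) *
        (numPeakSet (s - 1) {i ∈ S | i < s} * numPeakSet (n + 1 - s) (beyond S s)) := by
    symm
    refine sum_of_injOn (· - 1) ?_ ?_ ?_ ?_
    · intro s hs t ht (h : s - 1 = t - 1)
      have := bounds hs
      have := bounds ht
      omega
    · intro s hs
      have := bounds hs
      exact mem_coe.2 (mem_Ico.2 (show 1 ≤ s - 1 ∧ s - 1 < n by omega))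
    · intro k hk hkS
      rw [mem_Ico] at hk
      have : k + 1 ∉ S := fun h => hkS ⟨k + 1, h, rfl⟩
      simp [numPeakSetMaxAt, this, show k ≠ 0 by omega, show k ≠ n by omega]
    · intro s hs
      obtain ⟨h₂, hn⟩ := bounds hs
      obtain ⟨k, rfl⟩ : ∃ k, s = k + 1 := ⟨s - 1, by omega⟩
      simp [numPeakSetMaxAt, hs, show k ≠ 0 by omega, show k ≠ n by omega]
  rw [numPeakSet_succ_eq_sum_maxAt hn fun h => by simpa using (bounds h).1, sum_range_succ,
    range_eq_Ico, sum_eq_sum_Ico_succ_bot hn, zero_add, interior]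
  simp only [numPeakSetMaxAt, hn.ne', Nat.choose_zero_right, Nat.choose_self, if_true, if_false,
    one_mul]
  ring

end Recurrence

section Reflection

lemma isPeak_revPerm_trans_iff {n i : ℕ} {σ : Equiv.Perm (Fin n)} (hi : i ≤ n + 1) :
    IsPeak (Fin.revPerm.trans σ) i ↔ IsPeak σ (n + 1 - i) := by
  have rev (j k : ℕ) (hj : j < n) (hk : k < n) (hjk : j + k + 1 = n) :
      Fin.rev (⟨j, hj⟩ : Fin n) = ⟨k, hk⟩ := Fin.ext (by simp only [Fin.val_rev]; omega)
  simp only [IsPeak, Equiv.trans_apply, Fin.revPerm_apply]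
  constructor <;> rintro ⟨h₂, h, hl, hr⟩
  · rw [rev (i - 1) (n + 1 - i - 1) _ (by omega) (by omega)] at hl hr
    rw [rev (i - 2) (n + 1 - i) _ (by omega) (by omega)] at hl
    rw [rev i (n + 1 - i - 2) _ (by omega) (by omega)] at hr
    exact ⟨by omega, by omega, hr, hl⟩
  · refine ⟨by omega, by omega, ?_, ?_⟩ <;>
      rw [rev (i - 1) (n + 1 - i - 1) (by omega) (by omega) (by omega)]
    · rwa [rev (i - 2) (n + 1 - i) (by omega) (by omega) (by omega)]
    · rwa [rev i (n + 1 - i - 2) (by omega) (by omega) (by omega)]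

lemma peakSet_revPerm_trans {n : ℕ} (σ : Equiv.Perm (Fin n)) :
    peakSet (Fin.revPerm.trans σ) = (peakSet σ).image (n + 1 - ·) := by
  ext i
  simp only [mem_image, mem_peakSet]
  constructor
  · intro hi
    obtain ⟨_, h, _⟩ := id hi
    exact ⟨n + 1 - i, (isPeak_revPerm_trans_iff (by omega)).1 hi, by omega⟩
  · rintro ⟨j, hj, rfl⟩
    obtain ⟨_, h, _⟩ := id hj
    rw [isPeak_revPerm_trans_iff (by omega)]
    rwa [Nat.sub_sub_self (by omega)]

lemma numPeakSet_image_reflect {n : ℕ} {S : Finset ℕ} (hS : ∀ s ∈ S, s ≤ n + 1) :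
    numPeakSet n (S.image (n + 1 - ·)) = numPeakSet n S := by
  have invol {A : Finset ℕ} (hA : ∀ a ∈ A, a ≤ n + 1) :
      (A.image (n + 1 - ·)).image (n + 1 - ·) = A := by
    rw [image_image]
    exact (image_congr fun a ha => Nat.sub_sub_self (hA a ha)).trans image_id
  refine Nat.card_congr ((Equiv.equivCongr Fin.revPerm (Equiv.refl _)).subtypeEquiv fun σ => ?_)
  have hσ : ∀ i ∈ peakSet σ, i ≤ n + 1 := fun i hi =>
    let ⟨_, h, _⟩ := mem_peakSet.1 hi; by omega
  change _ ↔ peakSet (Fin.revPerm.trans σ) = S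
  rw [peakSet_revPerm_trans]
  exact ⟨fun h => by rw [h, invol hS], fun h => by rw [← h, invol hσ]⟩

end Reflection

section Compositions

lemma mem_compPeaks {e : List ℕ} {s : ℕ} :
    s ∈ compPeaks e ↔ ∃ γ δ, γ ≠ [] ∧ δ ≠ [] ∧ γ ++ δ = e ∧ γ.sum = s := by
  simp only [compPeaks, mem_image, mem_range]
  constructor
  · rintro ⟨i, hi, rfl⟩
    refine ⟨e.take (i + 1), e.drop (i + 1), ?_, ?_, List.take_append_drop _ _, rfl⟩ <;>
      rw [← List.length_pos_iff] <;> grind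
  · rintro ⟨γ, δ, hγ, hδ, rfl, rfl⟩
    have hγ' := List.length_pos_iff.2 hγ
    have hδ' := List.length_pos_iff.2 hδ
    exact ⟨γ.length - 1, by grind, by rw [Nat.sub_add_cancel hγ', List.take_left]⟩

lemma compPeaks_append {γ δ : List ℕ} (hγ : γ ≠ []) (hδ : δ ≠ []) :
    compPeaks (γ ++ δ) = joinAt γ.sum (compPeaks γ) (compPeaks δ) := by
  ext s
  simp only [joinAt, mem_insert, mem_union, mem_image, mem_compPeaks]
  constructor
  · rintro ⟨u, v, hu, hv, h, rfl⟩
    rcases List.append_eq_append_iff.1 h with ⟨w, rfl, rfl⟩ | ⟨w, rfl, rfl⟩ <;>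
      rcases eq_or_ne w [] with rfl | hw
    · simp
    · exact .inr (.inl ⟨u, w, hu, hw, rfl, rfl⟩)
    · simp
    · exact .inr (.inr ⟨w.sum, ⟨w, v, hw, hv, rfl, rfl⟩, by simp⟩)
  · rintro (rfl | ⟨u, v, hu, hv, rfl, rfl⟩ | ⟨_, ⟨u, v, -, hv, rfl, rfl⟩, rfl⟩)
    · exact ⟨γ, δ, hγ, hδ, rfl, rfl⟩
    · exact ⟨u, v ++ δ, hu, by simp [hv], by simp, rfl⟩
    · exact ⟨γ ++ u, v, by simp [hγ], hv, by simp, by simp⟩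

lemma compPeaks_concat (δ : List ℕ) (b c : ℕ) : compPeaks (δ ++ [b]) = compPeaks (δ ++ [c]) := by
  simp only [compPeaks, List.length_append, List.length_singleton, Nat.add_sub_cancel]
  refine image_congr fun i hi => ?_
  have : i + 1 ≤ δ.length := mem_range.1 hi
  rw [List.take_append_of_le_length this, List.take_append_of_le_length this]

lemma pos_of_mem_compPeaks {e : List ℕ} {s : ℕ} (he : ∀ x ∈ e, 0 < x) (hs : s ∈ compPeaks e) :
    0 < s := by
  obtain ⟨γ, δ, hγ, -, rfl, rfl⟩ := mem_compPeaks.1 hs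
  exact List.sum_pos _ (fun x hx => he x (List.mem_append_left _ hx)) hγ

lemma compPeaks_reverse (e : List ℕ) : compPeaks e.reverse = (compPeaks e).image (e.sum - ·) := by
  ext s
  simp only [mem_image, mem_compPeaks]
  constructor
  · rintro ⟨γ, δ, hγ, hδ, h, rfl⟩
    obtain rfl : e = δ.reverse ++ γ.reverse := by simp [← List.reverse_append, h]
    exact ⟨δ.reverse.sum, ⟨_, _, by simpa, by simpa, rfl, rfl⟩, by simp [List.sum_reverse]⟩
  · rintro ⟨_, ⟨γ, δ, hγ, hδ, rfl, rfl⟩, rfl⟩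
    exact ⟨δ.reverse, γ.reverse, by simpa, by simpa, by simp, by simp [List.sum_reverse]⟩

lemma le_sum_of_mem_compPeaks {e : List ℕ} {s : ℕ} (hs : s ∈ compPeaks e) : s ≤ e.sum := by
  obtain ⟨γ, δ, -, -, rfl, rfl⟩ := mem_compPeaks.1 hs
  simp

lemma numPeakSet_compPeaks_reverse {n : ℕ} {e : List ℕ} (hn : e.sum = n + 1) :
    numPeakSet n (compPeaks e.reverse) = numPeakSet n (compPeaks e) := by
  rw [compPeaks_reverse, hn, numPeakSet_image_reflect]
  exact fun s hs => hn ▸ le_sum_of_mem_compPeaks hs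

lemma compPeaks_modifyHead_pred {e : List ℕ} (he : ∀ x ∈ e, 0 < x) :
    compPeaks (e.modifyHead (· - 1)) = (compPeaks e).image (· - 1) := by
  rcases e with _ | ⟨a, γ⟩
  · simp [compPeaks]
  · have ha := he a List.mem_cons_self
    simp only [compPeaks, List.modifyHead_cons, List.length_cons, List.take_succ_cons,
      List.sum_cons, image_image]
    exact image_congr fun i _ => by simp only [Function.comp_apply]; omega

lemma compPeaks_subset_Icc {e : List ℕ} (he : ∀ x ∈ e, 2 ≤ x) :
    compPeaks e ⊆ Icc 2 (e.sum - 2) := by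
  have two_le_sum {γ : List ℕ} (hγ : γ ≠ []) (h : ∀ x ∈ γ, 2 ≤ x) : 2 ≤ γ.sum :=
    let ⟨x, hx⟩ := List.exists_mem_of_ne_nil γ hγ
    (h x hx).trans (List.single_le_sum (fun _ _ => Nat.zero_le _) x hx)
  intro s hs
  obtain ⟨γ, δ, hγ, hδ, rfl, rfl⟩ := mem_compPeaks.1 hs
  have := two_le_sum hγ fun x hx => he x (List.mem_append_left _ hx)
  have := two_le_sum hδ fun x hx => he x (List.mem_append_right _ hx)
  rw [mem_Icc, List.sum_append]
  omega

lemma sum_take_injOn {e : List ℕ} (he : ∀ x ∈ e, 0 < x) :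
    Set.InjOn (fun i => (e.take i).sum) (Set.Iic e.length) := by
  refine StrictMonoOn.injOn fun i _ j hj hij => ?_
  have : e.take j = e.take i ++ (e.drop i).take (j - i) := by
    rw [← List.take_add, Nat.add_sub_cancel' hij.le]
  change (e.take i).sum < (e.take j).sum
  rw [this, List.sum_append, lt_add_iff_pos_right]
  exact List.sum_pos _ (fun x hx => he x (List.mem_of_mem_drop (List.mem_of_mem_take hx)))
    (by rw [← List.length_pos_iff]; grind)

lemma sum_compPeaks {e : List ℕ} (he : ∀ x ∈ e, 0 < x) (f : ℕ → ℕ) :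
    ∑ s ∈ compPeaks e, f s = ∑ i ∈ range (e.length - 1), f (e.take (i + 1)).sum := by
  rw [compPeaks, sum_image]
  intro i hi j hj h
  rw [mem_coe, mem_range] at hi hj
  exact Nat.succ_injective (sum_take_injOn he (Set.mem_Iic.2 (by omega))
    (Set.mem_Iic.2 (by omega)) h)

lemma filter_lt_and_beyond_compPeaks_append {γ δ : List ℕ} (hγ : γ ≠ []) (hδ : δ ≠ [])
    (h : ∀ x ∈ γ ++ δ, 0 < x) :
    {i ∈ compPeaks (γ ++ δ) | i < γ.sum} = compPeaks γ ∧
      beyond (compPeaks (γ ++ δ)) γ.sum = compPeaks δ := by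
  have hγ' : ∀ s ∈ compPeaks γ, s < γ.sum := fun s hs => by
    obtain ⟨u, v, -, hv, rfl, rfl⟩ := mem_compPeaks.1 hs
    simpa using List.sum_pos v (fun x hx => h x (by simp [hx])) hv
  have hδ' : ∀ s ∈ compPeaks δ, 0 < s := fun s hs =>
    pos_of_mem_compPeaks (fun x hx => h x (List.mem_append_right _ hx)) hs
  obtain ⟨-, h₁, h₂⟩ := (joinAt_eq_iff hγ' hδ').1 (compPeaks_append hγ hδ).symm
  exact ⟨h₁.symm, h₂.symm⟩

end Compositions

section PeakProb

/-- The probability that a uniformly random permutation of `{1, …, |e| - 1}` has peak set `S(e)`.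
Lowering the last part of `e` gives the composition of `|e| - 1` with that peak set; raising it by
one makes the notion invariant under reversal of `e`. -/
noncomputable def peakProb (e : List ℕ) : ℝ :=
  numPeakSet (e.sum - 1) (compPeaks e) / (e.sum - 1).factorial

lemma peakProb_nonneg (e : List ℕ) : 0 ≤ peakProb e := by
  unfold peakProb
  positivity

lemma numPeakSet_compPeaks {e : List ℕ} {n : ℕ} (hn : e.sum = n + 1) :
    (numPeakSet n (compPeaks e) : ℝ) = n.factorial * peakProb e := by
  rw [peakProb, hn, Nat.add_sub_cancel, mul_div_cancel₀ _ (by positivity)]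

lemma peakProb_reverse (e : List ℕ) : peakProb e.reverse = peakProb e := by
  rcases e.sum.eq_zero_or_pos with h | h
  · have : compPeaks e.reverse = compPeaks e := by
      rw [compPeaks_reverse, h]
      refine (image_congr fun s hs => ?_).trans image_id
      have := le_sum_of_mem_compPeaks (mem_coe.1 hs)
      change 0 - s = s
      omega
    rw [peakProb, peakProb, List.sum_reverse, this]
  · rw [peakProb, peakProb, List.sum_reverse,
      numPeakSet_compPeaks_reverse (n := e.sum - 1) (by omega)]

lemma numPeakSet_eq_zero {n : ℕ} {S : Finset ℕ} (h : ∀ σ : Equiv.Perm (Fin n), peakSet σ ≠ S) :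
    numPeakSet n S = 0 :=
  have : IsEmpty {σ : Equiv.Perm (Fin n) // peakSet σ = S} := ⟨fun σ => h σ σ.2⟩
  Nat.card_of_isEmpty

lemma not_isPeak_succ {n i : ℕ} {σ : Equiv.Perm (Fin n)} (hi : IsPeak σ i) :
    ¬IsPeak σ (i + 1) := by
  rintro ⟨_, _, h, -⟩
  obtain ⟨_, _, -, h'⟩ := hi
  exact h.not_gt h'

lemma peakProb_eq_zero_of_one {α β : List ℕ} (h : α ≠ [] ∨ β ≠ []) :
    peakProb (α ++ 1 :: β) = 0 := by
  suffices numPeakSet ((α ++ 1 :: β).sum - 1) (compPeaks (α ++ 1 :: β)) = 0 by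
    rw [peakProb, this, Nat.cast_zero, zero_div]
  refine numPeakSet_eq_zero fun σ hσ => ?_
  have peak (γ δ : List ℕ) (hγ : γ ≠ []) (hδ : δ ≠ []) (h : γ ++ δ = α ++ 1 :: β) :
      IsPeak σ γ.sum :=
    mem_peakSet.1 (hσ ▸ mem_compPeaks.2 ⟨γ, δ, hγ, hδ, h, rfl⟩)
  rcases eq_or_ne α [] with rfl | hα
  · obtain ⟨h₂, -⟩ := peak [1] β (by simp) (by simpa using h) rfl
    simp at h₂
  have hleft := peak α (1 :: β) hα (by simp) rfl
  rcases eq_or_ne β [] with rfl | hβ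
  · obtain ⟨_, hlt, -⟩ := hleft
    simp at hlt
  · have hright := peak (α ++ [1]) β (by simp) hβ (by simp)
    exact not_isPeak_succ hleft (by simpa only [List.sum_append, List.sum_singleton] using hright)

lemma peakProb_singleton_two : peakProb [2] = 1 := by
  have hσ (σ : Equiv.Perm (Fin 1)) : peakSet σ = ∅ :=
    eq_empty_of_forall_notMem fun i hi => by
      obtain ⟨_, _, -⟩ := mem_peakSet.1 hi
      omega
  have : numPeakSet 1 ∅ = 1 := by
    simp only [numPeakSet, hσ]
    simp
  simp [peakProb, compPeaks, this]

lemma numPeakSet_compPeaks_succ {e : List ℕ} {n : ℕ} (he : ∀ x ∈ e, 2 ≤ x) (hn : 0 < n)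
    (hsum : e.sum = n + 2) :
    numPeakSet (n + 1) (compPeaks e) = numPeakSet n (compPeaks (e.modifyHead (· - 1))) +
      numPeakSet n (compPeaks (e.reverse.modifyHead (· - 1))) +
      ∑ i ∈ range (e.length - 1), n.choose ((e.take (i + 1)).sum - 1) *
        (numPeakSet ((e.take (i + 1)).sum - 1) (compPeaks (e.take (i + 1))) *
          numPeakSet ((e.drop (i + 1)).sum - 1) (compPeaks (e.drop (i + 1)))) := by
  have hpos : ∀ x ∈ e, 0 < x := fun x hx => two_pos.trans_le (he x hx)
  have lower_last : numPeakSet n (compPeaks (e.reverse.modifyHead (· - 1))) =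
      numPeakSet n (compPeaks e) := by
    obtain ⟨δ, b, rfl⟩ := List.eq_nil_or_concat' e |>.resolve_left (by rintro rfl; simp at hsum)
    have hb := hpos b (by simp)
    have : ((b - 1) :: δ.reverse) = (δ ++ [b - 1]).reverse := by simp
    rw [List.reverse_append, List.reverse_singleton, List.singleton_append, List.modifyHead_cons,
      this, numPeakSet_compPeaks_reverse, compPeaks_concat]
    simp only [List.sum_append, List.sum_singleton] at hsum ⊢
    omega
  rw [numPeakSet_succ hn (by simpa [hsum] using compPeaks_subset_Icc he),
    ← compPeaks_modifyHead_pred hpos, lower_last, sum_compPeaks hpos]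
  refine congrArg _ (sum_congr rfl fun i hi => ?_)
  have hcut := List.take_append_drop (i + 1) e
  have hsplit : (e.take (i + 1)).sum + (e.drop (i + 1)).sum = n + 2 := by
    rw [← List.sum_append, hcut, hsum]
  have hlen := mem_range.1 hi
  obtain ⟨h₁, h₂⟩ := filter_lt_and_beyond_compPeaks_append (γ := e.take (i + 1))
    (δ := e.drop (i + 1)) (by rw [← List.length_pos_iff]; grind)
    (by rw [← List.length_pos_iff]; grind) (by rwa [hcut])
  rw [hcut] at h₁ h₂
  rw [h₁, h₂, show n + 1 - (e.take (i + 1)).sum = (e.drop (i + 1)).sum - 1 by omega]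

lemma sum_modifyHead_pred {e : List ℕ} (he : ∀ x ∈ e, 0 < x) :
    (e.modifyHead (· - 1)).sum = e.sum - 1 := by
  rcases e with _ | ⟨a, γ⟩
  · rfl
  · have := he a List.mem_cons_self
    simp only [List.modifyHead_cons, List.sum_cons]
    omega

lemma peakProb_recurrence {e : List ℕ} (he : ∀ x ∈ e, 2 ≤ x) (hsum : 3 ≤ e.sum) :
    ((e.sum : ℝ) - 1) * peakProb e =
      peakProb (e.modifyHead (· - 1)) + peakProb (e.reverse.modifyHead (· - 1)) +
        ∑ i ∈ range (e.length - 1), peakProb (e.take (i + 1)) * peakProb (e.drop (i + 1)) := by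
  obtain ⟨n, hn⟩ : ∃ n, e.sum = n + 2 := ⟨e.sum - 2, by omega⟩
  have hpos : ∀ x ∈ e, 0 < x := fun x hx => two_pos.trans_le (he x hx)
  have term (i : ℕ) (hi : i ∈ range (e.length - 1)) :
      (n.choose ((e.take (i + 1)).sum - 1) : ℝ) *
        (numPeakSet ((e.take (i + 1)).sum - 1) (compPeaks (e.take (i + 1))) *
          numPeakSet ((e.drop (i + 1)).sum - 1) (compPeaks (e.drop (i + 1)))) =
      n.factorial * (peakProb (e.take (i + 1)) * peakProb (e.drop (i + 1))) := by
    have hlen := mem_range.1 hi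
    have hs : 0 < (e.take (i + 1)).sum := List.sum_pos _
      (fun x hx => hpos x (List.mem_of_mem_take hx)) (by rw [← List.length_pos_iff]; grind)
    have ht : 0 < (e.drop (i + 1)).sum := List.sum_pos _
      (fun x hx => hpos x (List.mem_of_mem_drop hx)) (by rw [← List.length_pos_iff]; grind)
    have hst : (e.take (i + 1)).sum + (e.drop (i + 1)).sum = n + 2 := by
      rw [← List.sum_append, List.take_append_drop, hn]
    have hfac := Nat.choose_mul_factorial_mul_factorial
      (show (e.take (i + 1)).sum - 1 ≤ n by omega)
    rw [show n - ((e.take (i + 1)).sum - 1) = (e.drop (i + 1)).sum - 1 by omega] at hfac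
    rw [numPeakSet_compPeaks (Nat.sub_add_cancel hs).symm,
      numPeakSet_compPeaks (Nat.sub_add_cancel ht).symm, ← hfac]
    push_cast
    ring
  have count := congrArg (Nat.cast (R := ℝ)) (numPeakSet_compPeaks_succ he (by omega) hn)
  push_cast at count
  rw [sum_congr rfl term, ← mul_sum, numPeakSet_compPeaks hn,
    numPeakSet_compPeaks (by rw [sum_modifyHead_pred hpos, hn]; rfl),
    numPeakSet_compPeaks (by
      rw [sum_modifyHead_pred (by simpa using hpos), List.sum_reverse, hn]; rfl),
    Nat.factorial_succ, Nat.cast_mul, ← mul_add, ← mul_add, mul_comm (_ : ℝ) (n.factorial : ℝ),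
    mul_assoc] at count
  rw [hn, ← mul_left_cancel₀ (by positivity) count]
  push_cast
  ring

end PeakProb

section Domination

/-- The terms of the recurrence for `peakProb (α ++ γ)` that lower the first part or cut inside
`α` or at its right end. -/
noncomputable def leftTerms (α γ : List ℕ) : ℝ :=
  peakProb ((α ++ γ).modifyHead (· - 1)) +
    ∑ i ∈ range α.length, peakProb (α.take (i + 1)) * peakProb (α.drop (i + 1) ++ γ)

lemma leftTerms_nil_cons (e : ℕ) (β : List ℕ) :
    leftTerms [] (e :: β) = peakProb ((e - 1) :: β) := by
  simp [leftTerms]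

lemma sum_cuts_append_cons (α β : List ℕ) (e : ℕ) :
    ∑ i ∈ range (α.length + β.length),
        peakProb ((α ++ e :: β).take (i + 1)) * peakProb ((α ++ e :: β).drop (i + 1)) =
      ∑ i ∈ range α.length, peakProb (α.take (i + 1)) * peakProb (α.drop (i + 1) ++ e :: β) +
        ∑ i ∈ range β.length, peakProb (β.reverse.take (i + 1)) *
          peakProb (β.reverse.drop (i + 1) ++ e :: α.reverse) := by
  rw [sum_range_add]
  congr 1
  · refine sum_congr rfl fun i hi => ?_
    have : i + 1 ≤ α.length := mem_range.1 hi
    rw [List.take_append_of_le_length this, List.drop_append_of_le_length this]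
  · rw [← sum_range_reflect]
    refine sum_congr rfl fun i hi => ?_
    have hi' := mem_range.1 hi
    rw [add_assoc, List.take_length_add_append, List.drop_length_add_append, List.take_succ_cons,
      List.drop_succ_cons, mul_comm, List.take_reverse, List.drop_reverse, peakProb_reverse,
      ← peakProb_reverse (α ++ _), show β.length - 1 - i = β.length - (i + 1) by omega]
    simp only [List.reverse_append, List.reverse_cons, List.append_assoc, List.singleton_append]

lemma peakProb_append_cons_recurrence {α β : List ℕ} {e : ℕ} (hα : ∀ x ∈ α, 2 ≤ x)
    (hβ : ∀ x ∈ β, 2 ≤ x) (he : 2 ≤ e) (hsum : 3 ≤ (α ++ e :: β).sum) :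
    ((α.sum : ℝ) + e + β.sum - 1) * peakProb (α ++ e :: β) =
      leftTerms α (e :: β) + leftTerms β.reverse (e :: α.reverse) := by
  have hparts : ∀ x ∈ α ++ e :: β, 2 ≤ x := by
    simp only [List.mem_append, List.mem_cons]
    rintro x (hx | rfl | hx)
    exacts [hα x hx, he, hβ x hx]
  have hrec := peakProb_recurrence hparts hsum
  rw [show (α ++ e :: β).length - 1 = α.length + β.length by simp, sum_cuts_append_cons] at hrec
  simp only [List.sum_append, List.sum_cons, List.reverse_append, List.reverse_cons,
    List.append_assoc, List.singleton_append, Nat.cast_add] at hrec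
  rw [leftTerms, leftTerms, List.length_reverse]
  linear_combination hrec

lemma peakProb_singleton_succ {e : ℕ} (he : 2 ≤ e) :
    (e : ℝ) * peakProb [e + 1] = 2 * peakProb [e] := by
  have hrec := peakProb_append_cons_recurrence (α := []) (β := []) (e := e + 1) (by simp) (by simp)
    (by omega) (by rw [List.nil_append, List.sum_singleton]; omega)
  simp only [List.nil_append, List.reverse_nil, leftTerms_nil_cons, Nat.add_sub_cancel,
    List.sum_nil, Nat.cast_zero, Nat.cast_add, Nat.cast_one] at hrec
  linear_combination hrec

lemma peakProb_singleton_three : peakProb [3] = 1 := by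
  have := peakProb_singleton_succ le_rfl
  rw [peakProb_singleton_two] at this
  push_cast at this
  linarith

lemma leftTerms_singleton_two {α : List ℕ} (hα : ∀ x ∈ α, 2 ≤ x) (hne : α ≠ []) :
    leftTerms α [2] = (α.sum + 1) * peakProb (α ++ [2]) := by
  obtain ⟨x, hx⟩ := List.exists_mem_of_ne_nil α hne
  have hsum := (hα x hx).trans (List.single_le_sum (fun _ _ => Nat.zero_le _) x hx)
  have hrec := peakProb_append_cons_recurrence hα (β := []) (by simp) le_rfl
    (by simp only [List.sum_append, List.sum_cons]; omega)
  have : leftTerms [] (2 :: α.reverse) = 0 := by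
    rw [leftTerms_nil_cons]
    exact peakProb_eq_zero_of_one (α := []) (.inr (by simpa using hne))
  rw [List.reverse_nil, this, List.sum_nil] at hrec
  simp only [Nat.cast_zero, Nat.cast_ofNat] at hrec
  linear_combination -hrec

-- Each nonzero term of `leftTerms α γ` is a nonnegative multiple of some `peakProb (α' ++ γ)`, with
-- `α'` and the multiplier independent of `γ`.
lemma mul_leftTerms_le_mul_leftTerms {α γ γ' : List ℕ} {c d : ℝ} (hα : ∀ x ∈ α, 2 ≤ x)
    (hne : α ≠ []) (hγ : γ ≠ []) (hγ' : γ' ≠ [])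
    (h : ∀ α' : List ℕ, (∀ x ∈ α', 2 ≤ x) → α'.sum < α.sum →
      c * peakProb (α' ++ γ) ≤ d * peakProb (α' ++ γ')) :
    c * leftTerms α γ ≤ d * leftTerms α γ' := by
  rw [leftTerms, leftTerms, mul_add, mul_add, mul_sum, mul_sum]
  refine add_le_add ?_ (sum_le_sum fun i hi => ?_)
  · obtain ⟨a, α', rfl⟩ := List.exists_cons_of_ne_nil hne
    have ha : 2 ≤ a := hα a List.mem_cons_self
    rcases ha.eq_or_lt with rfl | ha
    · have vanish {δ : List ℕ} (hδ : δ ≠ []) :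
          peakProb (((2 :: α') ++ δ).modifyHead (· - 1)) = 0 :=
        peakProb_eq_zero_of_one (α := []) (.inr (List.append_ne_nil_of_right_ne_nil α' hδ))
      rw [vanish hγ, vanish hγ', mul_zero, mul_zero]
    · refine h ((a - 1) :: α') ?_ (by simp only [List.sum_cons]; omega)
      rintro x (_ | ⟨_, hx⟩)
      exacts [by omega, hα x (List.mem_cons_of_mem _ hx)]
  · have hdrop : (α.drop (i + 1)).sum < α.sum := by
      conv_rhs => rw [← List.take_append_drop (i + 1) α, List.sum_append]
      refine lt_add_of_pos_left _ (List.sum_pos _ (fun x hx => ?_) ?_)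
      · exact two_pos.trans_le (hα x (List.mem_of_mem_take hx))
      · rw [← List.length_pos_iff]
        grind
    have := mul_le_mul_of_nonneg_left
      (h _ (fun x hx => hα x (List.mem_of_mem_drop hx)) hdrop) (peakProb_nonneg (α.take (i + 1)))
    linarith

lemma leftTerms_three_cons {α β : List ℕ} (hα : ∀ x ∈ α, 2 ≤ x)
    (h : ∀ α' : List ℕ, (∀ x ∈ α', 2 ≤ x) → α'.sum < α.sum →
      peakProb (α' ++ 3 :: β) = peakProb (α' ++ [2]) * peakProb (2 :: β)) :
    leftTerms α (3 :: β) = (α.sum + 1) * (peakProb (α ++ [2]) * peakProb (2 :: β)) := by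
  rcases eq_or_ne α [] with rfl | hne
  · simp [leftTerms_nil_cons, peakProb_singleton_two]
  · have scaled (α' : List ℕ) (hα' : ∀ x ∈ α', 2 ≤ x) (hlt : α'.sum < α.sum) :
        1 * peakProb (α' ++ 3 :: β) = peakProb (2 :: β) * peakProb (α' ++ [2]) := by
      rw [h α' hα' hlt, one_mul, mul_comm]
    have : 1 * leftTerms α (3 :: β) = peakProb (2 :: β) * leftTerms α [2] := le_antisymm
      (mul_leftTerms_le_mul_leftTerms hα hne (by simp) (by simp)
        fun α' hα' hlt => (scaled α' hα' hlt).le)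
      (mul_leftTerms_le_mul_leftTerms hα hne (by simp) (by simp)
        fun α' hα' hlt => (scaled α' hα' hlt).ge)
    rw [leftTerms_singleton_two hα hne] at this
    linear_combination this

lemma peakProb_reverse_append_cons (α β : List ℕ) (e : ℕ) :
    peakProb (β.reverse ++ e :: α.reverse) = peakProb (α ++ e :: β) := by
  rw [← peakProb_reverse (α ++ _)]
  simp only [List.reverse_append, List.reverse_cons, List.append_assoc, List.singleton_append]

theorem peakProb_append_three_cons {α β : List ℕ} (hα : ∀ x ∈ α, 2 ≤ x) (hβ : ∀ x ∈ β, 2 ≤ x) :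
    peakProb (α ++ 3 :: β) = peakProb (α ++ [2]) * peakProb (2 :: β) := by
  induction hs : α.sum + β.sum using Nat.strong_induction_on generalizing α β with
  | _ s ih =>
  have hrec := peakProb_append_cons_recurrence hα hβ (e := 3) (by simp)
    (by simp only [List.sum_append, List.sum_cons]; omega)
  have left := leftTerms_three_cons (β := β) hα fun α' hα' hlt => ih _ (by omega) hα' hβ rfl
  have right := leftTerms_three_cons (α := β.reverse) (β := α.reverse) (by simpa using hβ)
    fun β' hβ' hlt => by
      rw [List.sum_reverse] at hlt
      exact ih _ (by rw [List.sum_reverse]; omega) hβ' (by simpa using hα) rfl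
  have hQ₁ := peakProb_reverse_append_cons [] β 2
  have hQ₂ := peakProb_reverse_append_cons α [] 2
  simp only [List.reverse_nil, List.nil_append] at hQ₁ hQ₂
  rw [hQ₁, hQ₂, List.sum_reverse] at right
  rw [left, right, Nat.cast_ofNat] at hrec
  refine mul_left_cancel₀ (a := (α.sum : ℝ) + β.sum + 2) (by positivity) ?_
  linear_combination hrec

lemma leftTerms_cons_le {α β : List ℕ} {e : ℕ} (hα : ∀ x ∈ α, 2 ≤ x) (he : 3 ≤ e)
    (h : ∀ α' f, (∀ x ∈ α', 2 ≤ x) → 3 ≤ f → α'.sum + f < α.sum + e →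
      peakProb (α' ++ f :: β) ≤ peakProb [f] * (peakProb (α' ++ [2]) * peakProb (2 :: β))) :
    leftTerms α (e :: β) ≤
      (α.sum + (e - 1) / 2) * (peakProb [e] * (peakProb (α ++ [2]) * peakProb (2 :: β))) := by
  have he' : (3 : ℝ) ≤ e := by exact_mod_cast he
  rcases eq_or_ne α [] with rfl | hne
  · obtain ⟨f, rfl⟩ : ∃ f, e = f + 1 := ⟨e - 1, by omega⟩
    have lower : peakProb (f :: β) ≤ peakProb [f] * peakProb (2 :: β) := by
      rcases (show 2 ≤ f by omega).eq_or_lt with rfl | hf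
      · rw [peakProb_singleton_two, one_mul]
      · simpa [peakProb_singleton_two] using h [] f (by simp) hf (by simp)
    have := peakProb_singleton_succ (e := f) (by omega)
    rw [leftTerms_nil_cons, Nat.add_sub_cancel, List.nil_append, peakProb_singleton_two]
    refine lower.trans_eq ?_
    simp only [List.sum_nil, Nat.cast_zero, Nat.cast_add, Nat.cast_one]
    linear_combination -peakProb (2 :: β) / 2 * this
  · set C := peakProb [e] * peakProb (2 :: β)
    have : 1 * leftTerms α (e :: β) ≤ C * leftTerms α [2] :=
      mul_leftTerms_le_mul_leftTerms hα hne (by simp) (by simp) fun α' hα' hlt => by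
        have := h α' e hα' he (by omega)
        linarith
    rw [leftTerms_singleton_two hα hne, one_mul] at this
    refine this.trans ?_
    have hnonneg : 0 ≤ C * peakProb (α ++ [2]) := by
      have := peakProb_nonneg
      exact mul_nonneg (mul_nonneg (this _) (this _)) (this _)
    calc C * ((α.sum + 1) * peakProb (α ++ [2]))
        = (α.sum + 1) * (C * peakProb (α ++ [2])) := by ring
      _ ≤ (α.sum + (e - 1) / 2) * (C * peakProb (α ++ [2])) := by gcongr; linarith
      _ = _ := by simp only [C]; ring

theorem peakProb_append_cons_le {α β : List ℕ} {e : ℕ} (hα : ∀ x ∈ α, 2 ≤ x)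
    (hβ : ∀ x ∈ β, 2 ≤ x) (he : 3 ≤ e) :
    peakProb (α ++ e :: β) ≤ peakProb [e] * (peakProb (α ++ [2]) * peakProb (2 :: β)) := by
  induction hs : α.sum + e + β.sum using Nat.strong_induction_on generalizing α β e with
  | _ s ih =>
  have hrec := peakProb_append_cons_recurrence hα hβ (e := e) (by omega)
    (by simp only [List.sum_append, List.sum_cons]; omega)
  have left := leftTerms_cons_le (β := β) hα he fun α' f hα' hf hlt =>
    ih _ (by omega) hα' hβ hf rfl
  have right := leftTerms_cons_le (α := β.reverse) (β := α.reverse) (by simpa using hβ) he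
    fun β' f hβ' hf hlt => by
      rw [List.sum_reverse] at hlt
      exact ih _ (by rw [List.sum_reverse]; omega) hβ' (by simpa using hα) hf rfl
  have hQ₁ := peakProb_reverse_append_cons [] β 2
  have hQ₂ := peakProb_reverse_append_cons α [] 2
  simp only [List.reverse_nil, List.nil_append] at hQ₁ hQ₂
  rw [hQ₁, hQ₂, List.sum_reverse] at right
  have he' : (3 : ℝ) ≤ e := by exact_mod_cast he
  have hfactor : 0 < (α.sum : ℝ) + e + β.sum - 1 := by
    have : (0 : ℝ) ≤ α.sum := Nat.cast_nonneg _
    have : (0 : ℝ) ≤ β.sum := Nat.cast_nonneg _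
    linarith
  refine le_of_mul_le_mul_left ?_ hfactor
  linarith

end Domination

section Alternating

lemma peakProb_replicate_two_recurrence {j : ℕ} (hj : 1 ≤ j) :
    (2 * (j : ℝ) + 1) * peakProb (List.replicate (j + 1) 2) =
      ∑ i ∈ range j, peakProb (List.replicate (i + 1) 2) * peakProb (List.replicate (j - i) 2) := by
  have hrec := peakProb_recurrence (e := List.replicate (j + 1) 2)
    (fun x hx => (List.eq_of_mem_replicate hx).ge) (by rw [List.sum_replicate, smul_eq_mul]; omega)
  have vanish : peakProb ((List.replicate (j + 1) 2).modifyHead (· - 1)) = 0 :=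
    peakProb_eq_zero_of_one (α := []) (.inr (by simpa using Nat.one_le_iff_ne_zero.1 hj))
  rw [List.reverse_replicate, vanish, List.sum_replicate, List.length_replicate] at hrec
  simp only [smul_eq_mul, Nat.cast_mul, Nat.cast_add, Nat.cast_one, Nat.cast_ofNat, zero_add,
    Nat.add_sub_cancel] at hrec
  rw [show 2 * (j : ℝ) + 1 = (j + 1) * 2 - 1 by ring, hrec]
  refine sum_congr rfl fun i hi => ?_
  have := mem_range.1 hi
  rw [List.take_replicate, List.drop_replicate, min_eq_left (by omega), Nat.add_sub_add_right]

lemma peakProb_pair_two : peakProb [2, 2] = 1 / 3 := by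
  have := peakProb_replicate_two_recurrence le_rfl
  simp only [Nat.cast_one, mul_one, Nat.reduceAdd, List.reduceReplicate, range_one, sum_singleton,
    zero_add, List.replicate_one, peakProb_singleton_two, tsub_zero] at this
  linarith

theorem peakProb_replicate_two_le (k : ℕ) :
    peakProb (List.replicate (k + 2) 2) ≤ 1 / 3 * (4 / 9) ^ k := by
  induction k using Nat.strong_induction_on with
  | _ k ih =>
  rcases k with _ | k
  · simp [peakProb_pair_two]
  have hrec := peakProb_replicate_two_recurrence (j := k + 2) (by omega)
  rw [sum_range_succ, sum_range_succ', show k + 2 - 0 = k + 2 by omega,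
    show k + 2 - (k + 1) = 1 by omega, zero_add, List.replicate_one, peakProb_singleton_two]
    at hrec
  have inner (i : ℕ) (hi : i ∈ range k) :
      peakProb (List.replicate (i + 1 + 1) 2) * peakProb (List.replicate (k + 1 - i) 2) ≤
        1 / 9 * (9 / 4) * (4 / 9) ^ k := by
    obtain ⟨p, rfl⟩ : ∃ p, k = i + 1 + p := ⟨k - i - 1, by have := mem_range.1 hi; omega⟩
    rw [show i + 1 + p + 1 - i = p + 2 by omega]
    calc _ ≤ (1 / 3 * (4 / 9 : ℝ) ^ i) * (1 / 3 * (4 / 9) ^ p) :=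
          mul_le_mul (ih i (by omega)) (ih p (by omega)) (peakProb_nonneg _) (by positivity)
      _ = _ := by rw [pow_add, pow_add]; ring
  have inner_sum := sum_le_sum inner
  rw [sum_const, card_range, nsmul_eq_mul] at inner_sum
  have ends := ih k (by omega)
  have hpow : (0 : ℝ) ≤ (4 / 9) ^ k := by positivity
  have hkpow : (0 : ℝ) ≤ k * (4 / 9) ^ k := by positivity
  refine le_of_mul_le_mul_left (a := 2 * ((k : ℝ) + 2) + 1) ?_ (by positivity)
  push_cast at hrec
  rw [hrec, pow_succ]
  linarith

end Alternating

section ProductBound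

/-- The factor that a part `e` contributes to the product bound `peakProb_le_prod_partWeight`.
A part `2` is given the weight `4 / 9` in place of `peakProb [2] / 3 = 1 / 3`, because runs of `2`s
only decay at that rate in `peakProb_replicate_two_le`. -/
noncomputable def partWeight (e : ℕ) : ℝ :=
  if e = 2 then 4 / 9 else peakProb [e] / 3

lemma partWeight_nonneg (e : ℕ) : 0 ≤ partWeight e := by
  have := peakProb_nonneg [e]
  unfold partWeight
  split_ifs <;> positivity

lemma peakProb_singleton_le (e : ℕ) : peakProb [e] ≤ 3 * partWeight e := by
  unfold partWeight
  split_ifs with he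
  · rw [he, peakProb_singleton_two]
    norm_num
  · linarith

lemma peakProb_cons_le {a : ℕ} {β : List ℕ} (ha : 2 ≤ a) (hβ : ∀ x ∈ β, 2 ≤ x) :
    peakProb (a :: β) ≤ peakProb [a] * peakProb (2 :: β) := by
  rcases ha.eq_or_lt with rfl | ha
  · rw [peakProb_singleton_two, one_mul]
  · simpa [peakProb_singleton_two] using peakProb_append_cons_le (α := []) (by simp) hβ ha

lemma peakProb_concat_le {α : List ℕ} {b : ℕ} (hα : ∀ x ∈ α, 2 ≤ x) (hb : 2 ≤ b) :
    peakProb (α ++ [b]) ≤ peakProb [b] * peakProb (α ++ [2]) := by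
  have := peakProb_cons_le (β := α.reverse) hb (by simpa using hα)
  rwa [← List.reverse_concat, ← List.reverse_concat, peakProb_reverse, peakProb_reverse] at this

lemma peakProb_two_append_two_le_prod_partWeight {μ : List ℕ} (hμ : ∀ x ∈ μ, 2 ≤ x) :
    peakProb (2 :: (μ ++ [2])) ≤ 1 / 3 * (μ.map partWeight).prod := by
  induction hL : μ.length using Nat.strong_induction_on generalizing μ with
  | _ L ih =>
  by_cases h : ∃ e ∈ μ, 3 ≤ e
  · obtain ⟨e, hmem, he⟩ := h
    obtain ⟨α, β, rfl⟩ := List.append_of_mem hmem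
    simp only [List.mem_append, List.mem_cons] at hμ
    simp only [List.length_append, List.length_cons] at hL
    have hα : ∀ x ∈ α, 2 ≤ x := fun x hx => hμ x (.inl hx)
    have hβ : ∀ x ∈ β, 2 ≤ x := fun x hx => hμ x (.inr (.inr hx))
    have split := peakProb_append_cons_le (α := 2 :: α) (β := β ++ [2]) (by simpa using hα)
      (by simpa [or_imp, forall_and] using hβ) he
    have hprod (γ : List ℕ) : 0 ≤ (γ.map partWeight).prod :=
      List.prod_nonneg (by simp [partWeight_nonneg])
    calc peakProb (2 :: (α ++ e :: β ++ [2]))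
        ≤ peakProb [e] * (peakProb (2 :: (α ++ [2])) * peakProb (2 :: (β ++ [2]))) := by
          simpa using split
      _ ≤ 3 * partWeight e *
            (1 / 3 * (α.map partWeight).prod * (1 / 3 * (β.map partWeight).prod)) := by
          have := partWeight_nonneg e
          have := hprod α
          gcongr
          · exact mul_nonneg (peakProb_nonneg _) (peakProb_nonneg _)
          · exact peakProb_singleton_le e
          · exact peakProb_nonneg _
          · exact ih _ (by omega) hα rfl
          · exact ih _ (by omega) hβ rfl
      _ = 1 / 3 * ((α ++ e :: β).map partWeight).prod := by
          simp only [List.map_append, List.map_cons, List.prod_append, List.prod_cons]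
          ring
  · obtain rfl : μ = List.replicate L 2 :=
      List.eq_replicate_iff.2 ⟨hL, fun x hx => (hμ x hx).antisymm' <| by grind⟩
    rw [List.map_replicate, List.prod_replicate, ← List.replicate_succ', ← List.replicate_succ,
      partWeight, if_pos rfl]
    exact peakProb_replicate_two_le L

theorem peakProb_le_prod_partWeight {e : List ℕ} (he : ∀ x ∈ e, 2 ≤ x) (hne : e ≠ []) :
    peakProb e ≤ 3 * (e.map partWeight).prod := by
  obtain ⟨a, γ, rfl⟩ := List.exists_cons_of_ne_nil hne
  rcases List.eq_nil_or_concat' γ with rfl | ⟨μ, b, rfl⟩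
  · simpa using peakProb_singleton_le a
  simp only [List.mem_append, List.mem_cons] at he
  have ha : 2 ≤ a := he a (.inl rfl)
  have hb : 2 ≤ b := he b (.inr (.inr (.inl rfl)))
  have hμ : ∀ x ∈ μ, 2 ≤ x := fun x hx => he x (.inr (.inl hx))
  have lower_last : peakProb (2 :: (μ ++ [b])) ≤ peakProb [b] * peakProb (2 :: (μ ++ [2])) :=
    peakProb_concat_le (α := 2 :: μ) (by simpa using hμ) hb
  have hwa := partWeight_nonneg a
  have hwb := partWeight_nonneg b
  calc peakProb (a :: (μ ++ [b]))
      ≤ peakProb [a] * peakProb (2 :: (μ ++ [b])) :=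
        peakProb_cons_le ha fun x hx => he x (.inr (by simpa using hx))
    _ ≤ 3 * partWeight a * (3 * partWeight b * (1 / 3 * (μ.map partWeight).prod)) :=
        mul_le_mul (peakProb_singleton_le a)
          (lower_last.trans (mul_le_mul (peakProb_singleton_le b)
            (peakProb_two_append_two_le_prod_partWeight hμ) (peakProb_nonneg _) (by positivity)))
          (peakProb_nonneg _) (by positivity)
    _ = 3 * ((a :: (μ ++ [b])).map partWeight).prod := by
        simp only [List.map_append, List.map_cons, List.prod_append, List.prod_cons, List.map_nil,
          List.prod_nil]
        ring

lemma partWeight_pow_three_lt_one {e : ℕ} (he : 2 ≤ e) (h3 : e ≠ 3) :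
    partWeight e ^ 3 * 3 ^ e < 1 := by
  rcases he.eq_or_lt with rfl | he
  · norm_num [partWeight]
  have hQ₄ := peakProb_singleton_succ (e := 3) (by norm_num)
  rw [peakProb_singleton_three] at hQ₄
  push_cast at hQ₄
  rw [partWeight, if_neg (by omega)]
  induction e, (show 4 ≤ e by omega) using Nat.le_induction with
  | base =>
    rw [show peakProb [4] = 2 / 3 by linarith]
    norm_num
  | succ e h4 ih =>
    have hQ := peakProb_singleton_succ (e := e) (by omega)
    have he4 : (4 : ℝ) ≤ e := by exact_mod_cast h4
    have halve : peakProb [e + 1] ≤ peakProb [e] / 2 := by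
      have := peakProb_nonneg [e + 1]
      nlinarith
    calc (peakProb [e + 1] / 3) ^ 3 * 3 ^ (e + 1)
        ≤ (peakProb [e] / 2 / 3) ^ 3 * 3 ^ (e + 1) := by
          have := peakProb_nonneg [e + 1]
          gcongr
      _ = 3 / 8 * ((peakProb [e] / 3) ^ 3 * 3 ^ e) := by ring
      _ < 1 := by linarith [ih (by omega) (by omega) (by omega)]

lemma partWeight_pow_three_le_one {e : ℕ} (he : 2 ≤ e) : partWeight e ^ 3 * 3 ^ e ≤ 1 := by
  rcases eq_or_ne e 3 with rfl | h3
  · norm_num [partWeight, peakProb_singleton_three]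
  · exact (partWeight_pow_three_lt_one he h3).le

lemma prod_map_pow_mul_pow_sum (p : ℕ → ℝ) (e : List ℕ) (k : ℕ) (b : ℝ) :
    (e.map p).prod ^ k * b ^ e.sum = (e.map fun x => p x ^ k * b ^ x).prod := by
  induction e with
  | nil => simp
  | cons a γ ih =>
    rw [List.map_cons, List.map_cons, List.prod_cons, List.prod_cons, List.sum_cons, ← ih, pow_add]
    ring

lemma prod_map_lt_one {ι : Type*} {f : ι → ℝ} {l : List ι} (h₀ : ∀ x ∈ l, 0 ≤ f x)
    (h₁ : ∀ x ∈ l, f x ≤ 1) (h : ∃ x ∈ l, f x < 1) : (l.map f).prod < 1 := by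
  obtain ⟨x, hx, hlt⟩ := h
  obtain ⟨α, β, rfl⟩ := List.append_of_mem hx
  have hle {γ : List ι} (hγ : γ ⊆ α ++ x :: β) : (γ.map f).prod ≤ 1 := by
    simpa using List.prod_map_le_prod_map₀ f (fun _ => 1) (fun y hy => h₀ y (hγ hy))
      (fun y hy => h₁ y (hγ hy))
  have hβ : 0 ≤ (β.map f).prod := List.prod_nonneg <| by
    simpa using fun y hy => h₀ y (by simp [hy])
  rw [List.map_append, List.prod_append, List.map_cons, List.prod_cons]
  refine mul_lt_one_of_nonneg_of_lt_one_right (hle (by simp)) (mul_nonneg (h₀ x hx) hβ) ?_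
  exact mul_lt_one_of_nonneg_of_lt_one_left (h₀ x hx) hlt (hle fun y hy => by simp [hy])

theorem peakProb_mul_pow_lt_one {e : List ℕ} {m : ℕ} (he : ∀ x ∈ e, 0 < x)
    (hsum : e.sum = 3 * (m + 1)) (h : ∃ x ∈ e, x ≠ 3) : peakProb e * 3 ^ m < 1 := by
  by_cases hone : 1 ∈ e
  · obtain ⟨α, β, rfl⟩ := List.append_of_mem hone
    rw [peakProb_eq_zero_of_one, zero_mul]
    · exact one_pos
    · by_contra! hnil
      simp only [hnil, List.nil_append, List.sum_singleton] at hsum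
      omega
  have hparts : ∀ x ∈ e, 2 ≤ x := fun x hx =>
    (Nat.succ_le_of_lt (he x hx)).lt_of_ne (by rintro rfl; exact hone hx)
  have weights_lt : (e.map fun x => partWeight x ^ 3 * 3 ^ x).prod < 1 :=
    prod_map_lt_one (fun x _ => by have := partWeight_nonneg x; positivity)
      (fun x hx => partWeight_pow_three_le_one (hparts x hx))
      (h.imp fun x ⟨hx, h3⟩ => ⟨hx, partWeight_pow_three_lt_one (hparts x hx) h3⟩)
  rw [← prod_map_pow_mul_pow_sum, hsum, pow_mul', ← mul_pow] at weights_lt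
  have hlt : (e.map partWeight).prod * 3 ^ (m + 1) < 1 :=
    lt_of_pow_lt_pow_left₀ 3 one_pos.le (by simpa using weights_lt)
  calc peakProb e * 3 ^ m ≤ 3 * (e.map partWeight).prod * 3 ^ m := by
        gcongr
        exact peakProb_le_prod_partWeight hparts (by rintro rfl; simp at hsum)
    _ = (e.map partWeight).prod * 3 ^ (m + 1) := by ring
    _ < 1 := hlt

lemma peakProb_two_replicate_three (k : ℕ) : peakProb (2 :: List.replicate k 3) * 3 ^ k = 1 := by
  induction k with
  | zero => simp [peakProb_singleton_two]
  | succ k ih =>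
    have := peakProb_append_three_cons (α := [2]) (β := List.replicate k 3) (by simp)
      (fun x hx => by simp [List.eq_of_mem_replicate hx])
    rw [List.replicate_succ, ← List.singleton_append, this, List.singleton_append,
      peakProb_pair_two]
    linear_combination ih

theorem peakProb_replicate_three (m : ℕ) :
    peakProb (List.replicate (m + 1) 3) * 3 ^ m = 1 := by
  have := peakProb_append_three_cons (α := []) (β := List.replicate m 3) (by simp)
    (fun x hx => by simp [List.eq_of_mem_replicate hx])
  simp only [List.nil_append, peakProb_singleton_two, one_mul] at this
  rw [List.replicate_succ, this, peakProb_two_replicate_three]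

end ProductBound

section Maximal

lemma pcomp_concat (δ : List ℕ) (b : ℕ) :
    (Pcomp (δ ++ [b]) : ℝ) = (δ ++ [b]).sum.factorial * peakProb (δ ++ [b + 1]) := by
  rw [Pcomp, compPeaks_concat δ b (b + 1), numPeakSet_compPeaks]
  simp only [List.sum_append, List.sum_singleton, add_assoc]

lemma pcomp_replicate_three_concat_two (ℓ : ℕ) :
    (Pcomp (List.replicate ℓ 3 ++ [2]) : ℝ) * 3 ^ ℓ = (3 * ℓ + 2).factorial := by
  rw [pcomp_concat, ← List.replicate_succ', mul_assoc, peakProb_replicate_three, mul_one]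
  simp [mul_comm]

lemma pcomp_mul_pow_lt {ℓ : ℕ} {c : List ℕ} (hc : IsComposition (3 * ℓ + 2) c)
    (hne : c ≠ List.replicate ℓ 3 ++ [2]) : (Pcomp c : ℝ) * 3 ^ ℓ < (3 * ℓ + 2).factorial := by
  obtain ⟨hpos, hsum⟩ := hc
  obtain ⟨δ, b, rfl⟩ := List.eq_nil_or_concat' c |>.resolve_left (by rintro rfl; simp at hsum)
  have hsum' : (δ ++ [b + 1]).sum = 3 * (ℓ + 1) := by
    simp only [List.sum_append, List.sum_singleton] at hsum ⊢
    omega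
  have not_all_three : ∃ x ∈ δ ++ [b + 1], x ≠ 3 := by
    by_contra! h
    have hδ := List.eq_replicate_of_mem fun x hx => h x (List.mem_append_left _ hx)
    obtain rfl : b = 2 := Nat.succ_injective (h (b + 1) (by simp))
    rw [hδ, List.sum_append, List.sum_replicate, List.sum_singleton, smul_eq_mul] at hsum
    rw [hδ, show δ.length = ℓ by omega] at hne
    exact hne rfl
  have raised_pos : ∀ x ∈ δ ++ [b + 1], 0 < x := by
    simp only [List.mem_append, List.mem_singleton]
    rintro x (hx | rfl)
    exacts [hpos x (by simp [hx]), b.succ_pos]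
  have := peakProb_mul_pow_lt_one raised_pos hsum' not_all_three
  rw [pcomp_concat, hsum, mul_assoc]
  exact mul_lt_of_lt_one_right (by positivity) this

lemma isComposition_replicate_three_concat_two (ℓ : ℕ) :
    IsComposition (3 * ℓ + 2) (List.replicate ℓ 3 ++ [2]) := by
  refine ⟨fun x hx => ?_, by simp [mul_comm]⟩
  rcases List.mem_append.1 hx with hx | hx
  · simp [List.eq_of_mem_replicate hx]
  · simp [List.mem_singleton.1 hx]

theorem most_frequent_peak_set_mod_two_general (ℓ : ℕ) (c : List ℕ)
    (hc : IsComposition (3 * ℓ + 2) c) : IsMaximal c ↔ c = List.replicate ℓ 3 ++ [2] := by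
  have hthree := isComposition_replicate_three_concat_two ℓ
  have strict {b : List ℕ} (hb : IsComposition (3 * ℓ + 2) b)
      (hne : b ≠ List.replicate ℓ 3 ++ [2]) : Pcomp b < Pcomp (List.replicate ℓ 3 ++ [2]) := by
    have := pcomp_mul_pow_lt hb hne
    rw [← pcomp_replicate_three_concat_two] at this
    exact_mod_cast lt_of_mul_lt_mul_right this (by positivity)
  constructor
  · intro hmax
    by_contra hne
    exact (strict hc hne).not_ge (hmax _ (hc.2 ▸ hthree))
  · rintro rfl b hb
    rw [hthree.2] at hb
    rcases eq_or_ne b (List.replicate ℓ 3 ++ [2]) with rfl | hne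
    exacts [le_rfl, (strict hb hne).le]

end Maximal

theorem most_frequent_peak_set_mod_two (ℓ n : ℕ) (hℓ : 2 ≤ ℓ) (hn : n = 3 * ℓ + 2)
    (c : List ℕ) (hc : IsComposition n c) :
    IsMaximal c ↔ c = List.replicate ℓ 3 ++ [2] :=
  most_frequent_peak_set_mod_two_general ℓ c (hn ▸ hc)
end

section
/- Let ℓ ≥ 2 and n = 3ℓ+1. The maximum of P(S;n) over all subsets S of {1,…,n} equals (2/5)·3^{1−ℓ}·n!, i.e. 5·3^{ℓ−1} times the maximum equals 2·n!. -/
/-!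
Choose the permutation uniformly at random. Splitting according to the position `i` of the maximum
of a window of consecutive positions, the two parts left and right of `i` are independent, which
bounds the probability that the peaks in the window are those of `S` by the corresponding
probabilities for shorter windows. By induction on the length this yields a bound that drops by a
factor of three whenever the window grows by three positions; the savings at consecutive peaks at
distance two compensate the larger number of peaks that fit into the window. Conversely, `3` and `5`
are peaks with probability at least `2 / 15`, and each of `8, 11, …, 3 * ℓ - 1` is then,
independently, a peak with probability at least `1 / 3`; a permutation of `{1, …, 3 * ℓ + 1}` with
all these peaks has no room for another.
-/

namespace PeakCount

open Finset
open scoped BigOperators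

section Probability

variable {Ω : Type*} [Fintype Ω] {A B : Ω → Prop}

open Classical in
/-- The probability of the event `A` under the uniform distribution on the finite type `Ω`. -/
noncomputable def prob (A : Ω → Prop) : ℚ := 𝔼 ω, if A ω then 1 else 0

lemma prob_eq_card_div_card (A : Ω → Prop) :
    prob A = Nat.card {ω // A ω} / Fintype.card Ω := by
  classical
  rw [prob, Fintype.expect_eq_sum_div_card, sum_boole, Nat.card_eq_fintype_card,
    Fintype.card_subtype]

lemma prob_nonneg (A : Ω → Prop) : 0 ≤ prob A :=
  expect_nonneg fun _ _ ↦ by split_ifs <;> norm_num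

lemma prob_mono (h : ∀ ω, A ω → B ω) : prob A ≤ prob B := by
  refine expect_le_expect fun ω _ ↦ ?_
  have := h ω
  split_ifs <;> simp_all

lemma prob_congr (h : ∀ ω, A ω ↔ B ω) : prob A = prob B :=
  le_antisymm (prob_mono fun ω ↦ (h ω).1) (prob_mono fun ω ↦ (h ω).2)

lemma prob_comp_equiv (e : Ω ≃ Ω) (A : Ω → Prop) : prob (fun ω ↦ A (e ω)) = prob A :=
  Fintype.expect_equiv e _ _ fun _ ↦ rfl

lemma prob_eq_one [Nonempty Ω] (h : ∀ ω, A ω) : prob A = 1 := by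
  simp [prob, h]

lemma prob_eq_zero (h : ∀ ω, ¬ A ω) : prob A = 0 := by
  simp [prob, h]

lemma prob_eq_sum_prob_and {ι : Type*} {s : Finset ι} {M : ι → Ω → Prop}
    (hM : ∀ ω, ∃! i, i ∈ s ∧ M i ω) (A : Ω → Prop) :
    prob A = ∑ i ∈ s, prob fun ω ↦ A ω ∧ M i ω := by
  unfold prob
  rw [← expect_sum_comm]
  refine expect_congr rfl fun ω _ ↦ ?_
  obtain ⟨i, ⟨his, hi⟩, huniq⟩ := hM ω
  have unmet : ∀ j ∈ s, j ≠ i → ¬(A ω ∧ M j ω) := fun j hj hji h ↦ hji (huniq j ⟨hj, h.2⟩)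
  beta_reduce
  rw [sum_eq_single_of_mem i his fun j hj hji ↦ if_neg (unmet j hj hji)]
  by_cases hA : A ω <;> simp [hA, hi]

lemma prob_and_eq_mul_of_coset {G : Type*} [Group G] [Fintype G] (H : Subgroup G) [Fintype H]
    {A B : G → Prop} (hA : ∀ g, ∀ h ∈ H, A (g * h) ↔ A g) {c : ℚ}
    (hB : ∀ g, prob (fun h : H ↦ B (g * h)) = c) :
    prob (fun g ↦ A g ∧ B g) = prob A * prob B := by
  classical
  have average (C : G → Prop) : prob C = 𝔼 g, prob fun h : H ↦ C (g * h) := calc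
    prob C = 𝔼 h : H, prob fun g ↦ C (g * h) := by
      have shift (h : H) : prob (fun g ↦ C (g * h)) = prob C :=
        prob_comp_equiv (Equiv.mulRight (h : G)) C
      simp_rw [shift, Fintype.expect_const]
    _ = 𝔼 g, prob fun h : H ↦ C (g * h) := expect_comm ..
  have hB' : prob B = c := by simp_rw [average B, hB, Fintype.expect_const]
  rw [average, hB', prob, expect_mul]
  refine expect_congr rfl fun g _ ↦ ?_
  by_cases hg : A g
  · rw [if_pos hg, one_mul, ← hB g]
    exact prob_congr fun h ↦ by simp [hA g h h.2, hg]
  · rw [if_neg hg, zero_mul]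
    exact prob_eq_zero fun h ↦ by simp [hA g h h.2, hg]

end Probability

section RelativeOrder

variable {α : Type*} {s t : Finset α} {h : Equiv.Perm α} {x y : α}
  {A B : Equiv.Perm α → Prop}

open Equiv

/-- The permutations that only rearrange the positions in `s`. -/
abbrev rearrangements (s : Finset α) : Subgroup (Perm α) :=
  fixingSubgroup (Perm α) (s : Set α)ᶜ

/-- The event `A` is unaffected by rearranging the values at the positions in `s`. -/
def IsRearrangementInvariant (s : Finset α) (A : Perm α → Prop) : Prop :=
  ∀ σ, ∀ h ∈ rearrangements s, A (σ * h) ↔ A σ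

lemma apply_eq_of_mem_rearrangements (hh : h ∈ rearrangements s) (hx : x ∉ s) : h x = x :=
  (mem_fixingSubgroup_iff _).1 hh x hx

lemma apply_mem_iff_of_mem_rearrangements (hh : h ∈ rearrangements s) : h x ∈ s ↔ x ∈ s := by
  rw [← not_iff_not]
  refine ⟨fun hx ↦ ?_, fun hx ↦ by rwa [apply_eq_of_mem_rearrangements hh hx]⟩
  rwa [h.injective (apply_eq_of_mem_rearrangements hh hx)] at hx

lemma IsRearrangementInvariant.and (hA : IsRearrangementInvariant s A)
    (hB : IsRearrangementInvariant s B) : IsRearrangementInvariant s fun σ ↦ A σ ∧ B σ :=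
  fun σ h hh ↦ and_congr (hA σ h hh) (hB σ h hh)

variable [LinearOrder α]

/-- `σ` and `τ` order the positions in `s` in the same way. -/
def OrderEquivOn (s : Finset α) (σ τ : Perm α) : Prop :=
  ∀ x ∈ s, ∀ y ∈ s, σ x < σ y ↔ τ x < τ y

/-- The event `A` is determined by the relative order of the values at the positions in `s`. -/
def IsOrderEvent (s : Finset α) (A : Perm α → Prop) : Prop :=
  ∀ ⦃σ τ⦄, OrderEquivOn s σ τ → (A σ ↔ A τ)

lemma IsOrderEvent.isRearrangementInvariant (hA : IsOrderEvent t A) (hst : Disjoint s t) :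
    IsRearrangementInvariant s A := by
  intro σ h hh
  have fixed : ∀ x ∈ t, (σ * h) x = σ x := fun x hx ↦
    congrArg σ (apply_eq_of_mem_rearrangements hh (disjoint_right.1 hst hx))
  exact hA fun x hx y hy ↦ by rw [fixed x hx, fixed y hy]

lemma isOrderEvent_isMaxOn (hx : x ∈ s) : IsOrderEvent s fun σ ↦ IsMaxOn σ s x := by
  intro σ τ hστ
  simp only [isMaxOn_iff, mem_coe, ← not_lt]
  exact forall₂_congr fun y hy ↦ not_congr (hστ x hx y hy)

lemma isRearrangementInvariant_isMaxOn (hst : s ⊆ t) (hx : x ∉ s) :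
    IsRearrangementInvariant s fun σ ↦ IsMaxOn σ t x := by
  intro σ h hh
  have mem_t (y : α) : h y ∈ t ↔ y ∈ t := by
    by_cases hy : y ∈ s
    · exact iff_of_true (hst ((apply_mem_iff_of_mem_rearrangements hh).2 hy)) (hst hy)
    · rw [apply_eq_of_mem_rearrangements hh hy]
  simp only [isMaxOn_iff, mem_coe, Perm.mul_apply, apply_eq_of_mem_rearrangements hh hx]
  refine ⟨fun hmax y hy ↦ ?_, fun hmax y hy ↦ hmax (h y) ((mem_t y).2 hy)⟩
  simpa using hmax (h.symm y) ((mem_t _).1 (by simpa using hy))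

lemma exists_mul_orderEquivOn_one (s : Finset α) (σ : Perm α) :
    ∃ k ∈ rearrangements s, OrderEquivOn s (σ * k) 1 := by
  let e := s.orderIsoOfFin rfl
  let f : Fin #s → α := fun i ↦ σ (e i)
  let g : Perm s := e.toEquiv.permCongr (Tuple.sort f)
  refine ⟨Perm.ofSubtype g, (mem_fixingSubgroup_iff _).2 fun x hx ↦
    Perm.ofSubtype_apply_of_not_mem g hx, fun x hx y hy ↦ ?_⟩
  have f_injective : f.Injective :=
    σ.injective.comp (Subtype.val_injective.comp e.injective)
  have sorted : StrictMono (f ∘ Tuple.sort f) :=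
    (Tuple.monotone_sort f).strictMono_of_injective (f_injective.comp (Tuple.sort f).injective)
  have apply_eq (z : α) (hz : z ∈ s) :
      (σ * Perm.ofSubtype g) z = (f ∘ Tuple.sort f) (e.symm ⟨z, hz⟩) := by
    simp [f, g, Perm.ofSubtype_apply_of_mem, hz]
  rw [apply_eq x hx, apply_eq y hy, sorted.lt_iff_lt, e.symm.lt_iff_lt]
  rfl

lemma existsUnique_isMaxOn (hs : s.Nonempty) (σ : Perm α) :
    ∃! x, x ∈ s ∧ IsMaxOn σ s x := by
  obtain ⟨x, hxs, hx⟩ := s.exists_max_image σ hs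
  exact ⟨x, ⟨hxs, hx⟩, fun y hy ↦ σ.injective ((hx y hy.1).antisymm (hy.2 hxs))⟩

variable [Fintype α]

open Classical in
lemma IsOrderEvent.prob_mul_left (hB : IsOrderEvent s B) (σ : Perm α) :
    prob (fun h : rearrangements s ↦ B (σ * h)) = prob fun h : rearrangements s ↦ B h := by
  obtain ⟨k, hk, hsort⟩ := exists_mul_orderEquivOn_one s σ
  rw [← prob_comp_equiv (Equiv.mulLeft ⟨k, hk⟩)]
  refine prob_congr fun h ↦ hB fun x hx y hy ↦ ?_
  simpa [mul_assoc] using hsort (h.1 x) ((apply_mem_iff_of_mem_rearrangements h.2).2 hx)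
    (h.1 y) ((apply_mem_iff_of_mem_rearrangements h.2).2 hy)

lemma IsRearrangementInvariant.prob_and (hA : IsRearrangementInvariant s A)
    (hB : IsOrderEvent s B) : prob (fun σ ↦ A σ ∧ B σ) = prob A * prob B := by
  classical
  exact prob_and_eq_mul_of_coset (rearrangements s) hA hB.prob_mul_left

lemma prob_isMaxOn_eq_prob_isMaxOn (hx : x ∈ s) (hy : y ∈ s) :
    prob (fun σ : Perm α ↦ IsMaxOn σ s x) = prob fun σ : Perm α ↦ IsMaxOn σ s y := by
  rw [← prob_comp_equiv (Equiv.mulRight (swap x y)) fun σ : Perm α ↦ IsMaxOn σ s x]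
  refine prob_congr fun σ ↦ ?_
  have swap_mem (z : α) (hz : z ∈ s) : swap x y z ∈ s := by
    rcases eq_or_ne z x with rfl | hzx
    · rwa [swap_apply_left]
    rcases eq_or_ne z y with rfl | hzy
    · rwa [swap_apply_right]
    rwa [swap_apply_of_ne_of_ne hzx hzy]
  simp only [isMaxOn_iff, mem_coe, coe_mulRight, Perm.mul_apply, swap_apply_left]
  refine ⟨fun hmax z hz ↦ ?_, fun hmax z hz ↦ hmax _ (swap_mem z hz)⟩
  simpa using hmax _ (swap_mem z hz)

lemma prob_isMaxOn (hx : x ∈ s) : prob (fun σ : Perm α ↦ IsMaxOn σ s x) = 1 / #s := by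
  have hs : (#s : ℚ) ≠ 0 := by
    exact_mod_cast (card_pos.2 ⟨x, hx⟩).ne'
  have total : (1 : ℚ) = ∑ y ∈ s, prob fun σ : Perm α ↦ True ∧ IsMaxOn σ s y := by
    rw [← prob_eq_sum_prob_and (existsUnique_isMaxOn ⟨x, hx⟩), prob_eq_one fun _ ↦ trivial]
  simp only [true_and] at total
  rw [sum_congr rfl fun y hy ↦ prob_isMaxOn_eq_prob_isMaxOn hy hx, sum_const, nsmul_eq_mul] at total
  rw [total]
  field_simp

end RelativeOrder

section Windows

variable {N a b : ℕ} {x : Fin N}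

/-- The positions `i` with `a < i < b`, in the 1-based numbering used by `IsPeak`. -/
def window (N a b : ℕ) : Finset (Fin N) := {x | a < (x : ℕ) + 1 ∧ (x : ℕ) + 1 < b}

@[simp]
lemma mem_window : x ∈ window N a b ↔ a < (x : ℕ) + 1 ∧ (x : ℕ) + 1 < b := by
  simp [window]

lemma window_mono {c d : ℕ} (hca : c ≤ a) (hbd : b ≤ d) : window N a b ⊆ window N c d := by
  intro x
  simp only [mem_window]
  omega

lemma disjoint_window {c d : ℕ} (hbc : b ≤ c + 1) : Disjoint (window N a b) (window N c d) := by
  simp only [disjoint_left, mem_window]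
  omega

lemma map_window (hb : b ≤ N + 1) :
    (window N a b).map (Fin.valEmbedding.trans (addRightEmbedding 1)) = Ioo a b := by
  ext i
  simp only [mem_map, mem_window, mem_Ioo, Function.Embedding.trans_apply, Fin.valEmbedding_apply,
    addRightEmbedding_apply]
  exact ⟨by rintro ⟨x, hx, rfl⟩; exact hx, fun hi ↦ ⟨⟨i - 1, by omega⟩, by simp only; omega⟩⟩

lemma sum_window (hb : b ≤ N + 1) (f : ℕ → ℚ) :
    ∑ x ∈ window N a b, f (x + 1) = ∑ i ∈ Ioo a b, f i := by
  rw [← map_window hb, sum_map]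
  rfl

lemma card_window (hab : a < b) (hb : b ≤ N + 1) : (#(window N a b) : ℚ) = b - a - 1 := by
  rw [← card_map, map_window hb, Nat.card_Ioo, Nat.sub_sub, Nat.cast_sub hab]
  push_cast
  ring

lemma prob_isMaxOn_window (ha : a < x + 1) (hx : x + 1 < b) (hb : b ≤ N + 1) :
    prob (fun σ : Equiv.Perm (Fin N) ↦ IsMaxOn σ (window N a b) x) = 1 / (b - a - 1) := by
  rw [prob_isMaxOn (mem_window.2 ⟨ha, hx⟩), card_window (ha.trans hx) hb]

lemma prob_isMaxOn_window_and {A B : Equiv.Perm (Fin N) → Prop} (ha : a < x + 1) (hx : x + 1 < b)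
    (hb : b ≤ N + 1) (hA : IsOrderEvent (window N a (x + 1)) A)
    (hB : IsOrderEvent (window N (x + 1) b) B) :
    prob (fun σ : Equiv.Perm (Fin N) ↦ (IsMaxOn σ (window N a b) x ∧ A σ) ∧ B σ) =
      1 / (b - a - 1) * prob A * prob B := by
  have left : IsRearrangementInvariant (window N a (x + 1)) fun σ : Equiv.Perm (Fin N) ↦
      IsMaxOn σ (window N a b) x :=
    isRearrangementInvariant_isMaxOn (window_mono le_rfl hx.le) (by simp)
  have right : IsRearrangementInvariant (window N (x + 1) b) fun σ : Equiv.Perm (Fin N) ↦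
      IsMaxOn σ (window N a b) x :=
    isRearrangementInvariant_isMaxOn (window_mono ha.le le_rfl) (by simp)
  rw [(right.and (hA.isRearrangementInvariant (disjoint_window (by omega)).symm)).prob_and hB,
    left.prob_and hA, prob_isMaxOn_window ha hx hb]

end Windows

section Peaks

variable {N a b i : ℕ} {x : Fin N} {σ : Equiv.Perm (Fin N)} {S : Finset ℕ}

lemma mem_peakSet : i ∈ peakSet σ ↔ IsPeak σ i := by
  simp only [peakSet, mem_filter, mem_range, and_iff_right_iff_imp]
  exact fun ⟨_, hi, _⟩ ↦ hi

lemma not_isPeak_succ (h : IsPeak σ i) : ¬ IsPeak σ (i + 1) :=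
  fun ⟨_, _, hlt, _⟩ ↦ (h.choose_spec.choose_spec.2.trans hlt).false

lemma isOrderEvent_isPeak (ha : a + 1 < i) (hb : i + 1 < b) :
    IsOrderEvent (window N a b) fun σ ↦ IsPeak σ i := by
  intro σ τ h
  refine exists₂_congr fun h₂ h₃ ↦ and_congr (h _ ?_ _ ?_) (h _ ?_ _ ?_) <;>
    simp only [mem_window] <;> omega

lemma isPeak_of_isMaxOn_window (hmax : IsMaxOn σ (window N a b) x) (ha : a < x)
    (hx : x + 2 < b) (hb : b ≤ N + 1) : IsPeak σ (x + 1) := by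
  have lt_max (y : Fin N) (hy : y ∈ window N a b) (hne : y ≠ x) : σ y < σ x :=
    lt_of_le_of_ne (hmax hy) (σ.injective.ne hne)
  refine ⟨by omega, by omega, lt_max _ ?_ ?_, lt_max _ ?_ ?_⟩ <;>
    simp only [mem_window, ne_eq, Fin.ext_iff] <;> omega

lemma not_isPeak_add_two_of_isMaxOn_window (hmax : IsMaxOn σ (window N a b) x) (ha : a < x + 1)
    (hx : x + 2 < b) : ¬ IsPeak σ (x + 2) :=
  fun ⟨_, _, hlt, _⟩ ↦ (hmax (mem_window.2 (by simp only; omega))).not_gt hlt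

lemma not_isPeak_of_isMaxOn_window (hmax : IsMaxOn σ (window N a b) x) (ha : a < x)
    (hx : x + 1 < b) : ¬ IsPeak σ x :=
  fun ⟨_, _, _, hlt⟩ ↦ (hmax (mem_window.2 (by simp only; omega))).not_gt hlt

/-- At the positions interior to the window `(a, b)`, the peaks of `σ` are the elements of `S`. -/
def PeaksMatch (S : Finset ℕ) (a b : ℕ) (σ : Equiv.Perm (Fin N)) : Prop :=
  ∀ i, a + 1 < i → i + 1 < b → (IsPeak σ i ↔ i ∈ S)

lemma isOrderEvent_peaksMatch : IsOrderEvent (window N a b) (PeaksMatch S a b) :=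
  fun _ _ h ↦ forall₃_congr fun _ ha hb ↦ iff_congr (isOrderEvent_isPeak ha hb h) Iff.rfl

lemma PeaksMatch.mono {c d : ℕ} (h : PeaksMatch S a b σ) (hac : a ≤ c) (hdb : d ≤ b) :
    PeaksMatch S c d σ :=
  fun i hci hid ↦ h i (by omega) (by omega)

/-- The probability that the peaks interior to the window `(a, b)` are the elements of `S`. -/
noncomputable def windowProb (N : ℕ) (S : Finset ℕ) (a b : ℕ) : ℚ :=
  prob fun σ : Equiv.Perm (Fin N) ↦ PeaksMatch S a b σ

/-- The elements of `S` interior to the window `(a, b)`. -/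
def interiorPeaks (S : Finset ℕ) (a b : ℕ) : Finset ℕ := {i ∈ S | a + 1 < i ∧ i + 1 < b}

lemma mem_interiorPeaks : i ∈ interiorPeaks S a b ↔ i ∈ S ∧ a + 1 < i ∧ i + 1 < b :=
  mem_filter

lemma windowProb_nonneg : 0 ≤ windowProb N S a b := prob_nonneg _

lemma windowProb_eq_one (hab : b ≤ a + 3) : windowProb N S a b = 1 :=
  prob_eq_one fun _ _ _ _ ↦ by omega

lemma succ_notMem_of_windowProb_ne_zero (h : windowProb N S a b ≠ 0)
    (hi : i ∈ interiorPeaks S a b) : i + 1 ∉ interiorPeaks S a b := by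
  contrapose! h
  rw [mem_interiorPeaks] at h hi
  exact prob_eq_zero fun σ hσ ↦ not_isPeak_succ ((hσ i hi.2.1 hi.2.2).2 hi.1)
    ((hσ _ h.2.1 h.2.2).2 h.1)

lemma windowProb_succ_left (hab : a + 4 < b) (h₂ : a + 2 ∉ S) (h₃ : a + 3 ∈ S) :
    windowProb N S (a + 1) b = windowProb N S a b := by
  refine prob_congr fun σ ↦ ⟨fun h i hai hib ↦ ?_, fun h ↦ h.mono (by omega) le_rfl⟩
  rcases Nat.lt_or_eq_of_le (Nat.succ_le_of_lt hai) with hi | rfl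
  · exact h i hi hib
  · exact iff_of_false (fun hpeak ↦ not_isPeak_succ hpeak ((h _ (by omega) (by omega)).2 h₃)) h₂

lemma windowProb_add_three_right (hai : a + 1 < i) (hi : i ∈ S) (hi' : i + 1 ∉ S) :
    windowProb N S a (i + 3) = windowProb N S a (i + 2) := by
  refine prob_congr fun σ ↦ ⟨fun h ↦ h.mono le_rfl (by omega), fun h j haj hji ↦ ?_⟩
  rcases Nat.lt_or_eq_of_le (Nat.lt_succ_iff.1 hji) with hj | hj
  · exact h j haj hj
  · obtain rfl : j = i + 1 := by omega
    exact iff_of_false (not_isPeak_succ ((h i hai (by omega)).2 hi)) hi'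

lemma prob_peaksMatch_and_isMaxOn_le (ha : a < x + 1) (hx : x + 1 < b) (hb : b ≤ N + 1) :
    (b - a - 1) * prob (fun σ : Equiv.Perm (Fin N) ↦
      PeaksMatch S a b σ ∧ IsMaxOn σ (window N a b) x) ≤
        windowProb N S a (x + 1) * windowProb N S (x + 1) b := by
  have hpos : (0 : ℚ) < b - a - 1 := by
    have : (a + 2 : ℚ) ≤ b := by exact_mod_cast (by omega : a + 2 ≤ b)
    linarith
  calc
    _ ≤ (b - a - 1) * (1 / (b - a - 1) * windowProb N S a (x + 1) * windowProb N S (x + 1) b) := by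
      rw [windowProb, windowProb,
        ← prob_isMaxOn_window_and ha hx hb isOrderEvent_peaksMatch isOrderEvent_peaksMatch]
      gcongr
      exact prob_mono fun σ h ↦ ⟨⟨h.2, h.1.mono le_rfl hx.le⟩, h.1.mono ha.le le_rfl⟩
    _ = _ := by field_simp

/-- The contribution to `windowProb_mul_le` of the permutations whose maximum is at position `i`. -/
noncomputable def maxWeight (N : ℕ) (S : Finset ℕ) (a b i : ℕ) : ℚ :=
  (if i ∈ interiorPeaks S a b then windowProb N S a i * windowProb N S i b else 0) +
    (if i = a + 1 then if a + 2 ∈ S then 0 else windowProb N S (a + 1) b else 0) +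
    (if i = b - 1 then if b - 2 ∈ S then 0 else windowProb N S a (b - 1) else 0)

lemma prob_peaksMatch_and_isMaxOn_le_maxWeight (hab : a + 4 ≤ b) (ha : a < x + 1)
    (hx : x + 1 < b) (hb : b ≤ N + 1) :
    (b - a - 1) * prob (fun σ : Equiv.Perm (Fin N) ↦
      PeaksMatch S a b σ ∧ IsMaxOn σ (window N a b) x) ≤ maxWeight N S a b (x + 1) := by
  have hle := prob_peaksMatch_and_isMaxOn_le (S := S) ha hx hb
  have hzero (h : ∀ σ : Equiv.Perm (Fin N), PeaksMatch S a b σ → ¬ IsMaxOn σ (window N a b) x) :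
      prob (fun σ : Equiv.Perm (Fin N) ↦ PeaksMatch S a b σ ∧ IsMaxOn σ (window N a b) x) = 0 :=
    prob_eq_zero fun σ hσ ↦ h σ hσ.1 hσ.2
  unfold maxWeight
  rcases (by omega : (x : ℕ) = a ∨ (x : ℕ) + 2 = b ∨ (a < x ∧ x + 2 < b)) with hxa | hxb | hmid
  · rw [if_neg fun h ↦ by have := (mem_interiorPeaks.1 h).2.1; omega,
      if_pos (c := _ = a + 1) (by omega), if_neg (c := _ = b - 1) (by omega), zero_add, add_zero]
    split_ifs with h₂
    · rw [hzero fun σ hσ hmax ↦ not_isPeak_add_two_of_isMaxOn_window hmax ha (by omega)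
        ((hσ _ (by omega) (by omega)).2 (by rwa [hxa])), mul_zero]
    · rwa [windowProb_eq_one (by omega), one_mul, hxa] at hle
  · rw [if_neg fun h ↦ by have := (mem_interiorPeaks.1 h).2.2; omega,
      if_neg (c := _ = a + 1) (by omega), if_pos (c := _ = b - 1) (by omega), zero_add, zero_add]
    have hb₁ : b - 1 = x + 1 := by omega
    have hb₂ : b - 2 = x := by omega
    rw [hb₁, hb₂]
    split_ifs with h₂
    · rw [hzero fun σ hσ hmax ↦ not_isPeak_of_isMaxOn_window hmax (by omega) hx
        ((hσ _ (by omega) (by omega)).2 h₂), mul_zero]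
    · rwa [windowProb_eq_one (a := x + 1) (by omega), mul_one] at hle
  · rw [if_neg (c := _ = a + 1) (by omega), if_neg (c := _ = b - 1) (by omega), add_zero, add_zero]
    split_ifs with hS
    · exact hle
    · rw [hzero fun σ hσ hmax ↦ hS <| mem_interiorPeaks.2
        ⟨(hσ _ (by omega) (by omega)).1 (isPeak_of_isMaxOn_window hmax hmid.1 hmid.2 hb),
          by omega, by omega⟩, mul_zero]

lemma windowProb_mul_le (hab : a + 4 ≤ b) (hb : b ≤ N + 1) :
    (b - a - 1) * windowProb N S a b ≤
      ∑ i ∈ interiorPeaks S a b, windowProb N S a i * windowProb N S i b +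
        (if a + 2 ∈ S then 0 else windowProb N S (a + 1) b) +
        (if b - 2 ∈ S then 0 else windowProb N S a (b - 1)) := by
  have window_nonempty : (window N a b).Nonempty :=
    ⟨⟨a, by omega⟩, mem_window.2 (by simp only; omega)⟩
  have interior_subset : interiorPeaks S a b ⊆ Ioo a b := fun i hi ↦ by
    rw [mem_interiorPeaks] at hi
    rw [mem_Ioo]
    omega
  calc
    _ = ∑ x ∈ window N a b, (b - a - 1) * prob (fun σ : Equiv.Perm (Fin N) ↦
          PeaksMatch S a b σ ∧ IsMaxOn σ (window N a b) x) := by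
      rw [windowProb, prob_eq_sum_prob_and (existsUnique_isMaxOn window_nonempty), mul_sum]
    _ ≤ ∑ x ∈ window N a b, maxWeight N S a b (x + 1) := sum_le_sum fun x hx ↦
      prob_peaksMatch_and_isMaxOn_le_maxWeight hab (mem_window.1 hx).1 (mem_window.1 hx).2 hb
    _ = ∑ i ∈ Ioo a b, maxWeight N S a b i := sum_window hb _
    _ = _ := by
      simp only [maxWeight, sum_add_distrib, sum_ite_eq', sum_ite_mem,
        inter_eq_right.2 interior_subset]
      rw [if_pos (mem_Ioo.2 (by omega)), if_pos (mem_Ioo.2 (by omega))]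

end Peaks

section Bounds

variable {x y : ℕ} {u v : ℚ}

/-- The upper bound for `windowProb N S a b` in terms of `m = b - a`. Peaks at distance three cost a
factor `3` each, whence the period; the initial values are such that `windowProb_mul_le` preserves
the bound, and that it is attained for `m` congruent to two modulo three. -/
def peakBound : ℕ → ℚ
  | 0 => 3
  | 1 => 9 / 5
  | 2 => 6 / 5
  | m + 3 => peakBound m / 3

lemma peakBound_pos : ∀ m, 0 < peakBound m
  | 0 | 1 | 2 => by norm_num [peakBound]
  | m + 3 => div_pos (peakBound_pos m) (by norm_num)

lemma peakBound_le_peakBound_succ : ∀ m, peakBound m ≤ 5 / 3 * peakBound (m + 1)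
  | 0 | 1 | 2 => by norm_num [peakBound]
  | m + 3 => by
    have := peakBound_le_peakBound_succ m
    simp only [peakBound]
    linarith

lemma peakBound_succ_le : ∀ m, peakBound (m + 1) ≤ 5 / 6 * peakBound m
  | 0 | 1 | 2 => by norm_num [peakBound]
  | m + 3 => by
    have := peakBound_succ_le m
    simp only [peakBound]
    linarith

lemma peakBound_add_two_le : ∀ m, peakBound (m + 2) ≤ 2 / 3 * peakBound m
  | 0 | 1 | 2 => by norm_num [peakBound]
  | m + 3 => by
    have := peakBound_add_two_le m
    simp only [peakBound]
    linarith

lemma peakBound_mul_le : ∀ x y, peakBound x * peakBound y ≤ 3 * peakBound (x + y)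
  | 0, y => by simp [peakBound]
  | x, 0 => by simp [peakBound, mul_comm]
  | 1, 1 | 1, 2 | 2, 1 | 2, 2 => by norm_num [peakBound]
  | x + 3, y => by
    have := peakBound_mul_le x y
    rw [Nat.add_right_comm]
    simp only [peakBound]
    linarith
  | x, y + 3 => by
    have := peakBound_mul_le x y
    rw [← Nat.add_assoc]
    simp only [peakBound]
    linarith

lemma peakBound_three_mul_add_two (ℓ : ℕ) : peakBound (3 * ℓ + 2) = 6 / 5 / 3 ^ ℓ := by
  induction ℓ with
  | zero => norm_num [peakBound]
  | succ ℓ ih =>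
    rw [show 3 * (ℓ + 1) + 2 = 3 * ℓ + 2 + 3 by ring, peakBound, ih]
    field_simp
    ring

/-- The bound for `windowProb N S a b` in terms of `m = b - a` that holds for every set `S`:
`peakBound` fails for `m = 4` and `a + 2 ∉ S`. -/
def windowBound (m : ℕ) : ℚ := if m = 4 then 2 / 3 else peakBound m

/-- The gain or loss compared with `3 * peakBound m` caused by one side of a splitting peak:
`near` says that the next peak on that side is two positions away, and `short` that the window on
that side has the exceptional length of `windowBound`. -/
def correction (near short : Prop) [Decidable near] [Decidable short] : ℚ :=
  if near then -1 / 2 else if short then 1 / 3 else 0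

lemma windowBound_eq (x : ℕ) :
    windowBound x = (1 + if x = 4 then 1 / 9 else 0) * peakBound x := by
  unfold windowBound
  split_ifs with hx
  · norm_num [hx, peakBound]
  · ring

lemma windowBound_le_peakBound_succ (m : ℕ) : windowBound m ≤ 5 / 3 * peakBound (m + 1) := by
  unfold windowBound
  split_ifs with hm
  · norm_num [hm, peakBound]
  · exact peakBound_le_peakBound_succ m

lemma windowBound_mul_windowBound_le (x y : ℕ) : windowBound x * windowBound y ≤
    peakBound (x + y) * (3 + (if x = 4 then 1 / 3 else 0) + if y = 4 then 1 / 3 else 0) := by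
  have := peakBound_mul_le x y
  by_cases hxy : x = 4 ∧ y = 4
  · norm_num [hxy.1, hxy.2, windowBound, peakBound]
  · rw [windowBound_eq, windowBound_eq]
    split_ifs with hx hy <;> first | linarith | exact absurd ⟨hx, hy⟩ hxy

lemma windowBound_mul_peakBound_succ_le (x y : ℕ) : windowBound x * peakBound (y + 1) ≤
    peakBound (x + y) * (5 / 2 + if x = 4 then 1 / 3 else 0) := by
  have hmul := peakBound_mul_le x (y + 1)
  have hsucc := peakBound_succ_le (x + y)
  have hpos := peakBound_pos (x + y)
  rw [windowBound_eq]
  rw [← Nat.add_assoc] at hmul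
  split_ifs <;> linarith

lemma peakBound_succ_mul_peakBound_succ_le (x y : ℕ) :
    peakBound (x + 1) * peakBound (y + 1) ≤ 2 * peakBound (x + y) := by
  have hmul := peakBound_mul_le (x + 1) (y + 1)
  rw [show x + 1 + (y + 1) = x + y + 2 by ring] at hmul
  linarith [peakBound_add_two_le (x + y)]

lemma mul_le_peakBound_mul_correction {p q : Prop} [Decidable p] [Decidable q] (hu : 0 ≤ u)
    (hv : 0 ≤ v) (hup : p → u ≤ peakBound (x + 1)) (hux : u ≤ windowBound x)
    (hvq : q → v ≤ peakBound (y + 1)) (hvy : v ≤ windowBound y) :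
    u * v ≤ peakBound (x + y) * (3 + correction p (x = 4) + correction q (y = 4)) := by
  unfold correction
  by_cases hp : p <;> by_cases hq : q <;> simp only [hp, hq, if_true, if_false]
  · have := mul_le_mul (hup hp) (hvq hq) hv (hu.trans (hup hp))
    linarith [peakBound_succ_mul_peakBound_succ_le x y]
  · have := mul_le_mul (hup hp) hvy hv (hu.trans (hup hp))
    have := windowBound_mul_peakBound_succ_le y x
    rw [add_comm y x] at this
    linarith
  · have := mul_le_mul hux (hvq hq) hv (hu.trans hux)
    linarith [windowBound_mul_peakBound_succ_le x y]
  · exact (mul_le_mul hux hvy hv (hu.trans hux)).trans (windowBound_mul_windowBound_le x y)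

end Bounds

section Counting

variable {T : Finset ℕ}

lemma sum_correction (T : Finset ℕ) (p : ℕ → Prop) [DecidablePred p] (c : ℕ) :
    ∑ i ∈ T, correction (p i) (i = c) =
      -#{i ∈ T | p i} / 2 + if c ∈ T ∧ ¬ p c then 1 / 3 else 0 := by
  have split (i : ℕ) : correction (p i) (i = c) =
      (if p i then -1 / 2 else 0) + if i = c then if p c then 0 else 1 / 3 else 0 := by
    unfold correction
    split_ifs <;> simp_all
  simp only [split, sum_add_distrib, sum_ite_eq', ← sum_filter, sum_const, nsmul_eq_mul]
  congr 1
  · ring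
  · split_ifs <;> simp_all

lemma card_filter_exists_add_eq (T : Finset ℕ) (k : ℕ) :
    #{i ∈ T | ∃ j ∈ T, j + k = i} = #{i ∈ T | i + k ∈ T} := by
  rw [← card_map (addRightEmbedding k) (s := {i ∈ T | i + k ∈ T})]
  congr 1
  ext i
  simp only [mem_filter, mem_map, addRightEmbedding_apply]
  grind

lemma three_mul_card_le {lo hi : ℕ} (hT : ∀ i ∈ T, i + 1 ∉ T) (hlo : ∀ i ∈ T, lo ≤ i)
    (hhi : ∀ i ∈ T, i ≤ hi) : 3 * #T ≤ hi + 3 - lo + #{i ∈ T | i + 2 ∈ T} := by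
  let T₁ := T.map (addRightEmbedding 1)
  let T₂ := {i ∈ T | i + 2 ∉ T}.map (addRightEmbedding 2)
  have disjoint₁ : Disjoint T T₁ := by
    simp only [disjoint_right, T₁, mem_map, addRightEmbedding_apply]
    grind
  have disjoint₂ : Disjoint (T ∪ T₁) T₂ := by
    simp only [disjoint_right, T₁, T₂, mem_union, mem_map, mem_filter, addRightEmbedding_apply]
    grind
  have subset_Icc : T ∪ T₁ ∪ T₂ ⊆ Icc lo (hi + 2) := by
    intro i
    simp only [T₁, T₂, mem_union, mem_map, mem_filter, addRightEmbedding_apply, mem_Icc]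
    grind
  have hcard := card_le_card subset_Icc
  rw [card_union_of_disjoint disjoint₂, card_union_of_disjoint disjoint₁, card_map, card_map,
    Nat.card_Icc] at hcard
  have := card_filter_add_card_filter_not (s := T) (fun i ↦ i + 2 ∈ T)
  omega

end Counting

section UpperBound

variable {N a b i : ℕ} {S : Finset ℕ}

lemma windowProb_add_four_le (hb : a + 4 ≤ N + 1) : windowProb N S a (a + 4) ≤ 2 / 3 := by
  have hrec := windowProb_mul_le (S := S) le_rfl hb
  have interior_eq : interiorPeaks S a (a + 4) = {i ∈ S | i = a + 2} :=
    filter_congr fun i _ ↦ by omega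
  rw [interior_eq, filter_eq', show a + 4 - 2 = a + 2 by omega,
    windowProb_eq_one (a := a + 1) (by omega), windowProb_eq_one (b := a + 4 - 1) (by omega)]
    at hrec
  push_cast at hrec
  split_ifs at hrec
  · rw [sum_singleton, windowProb_eq_one (b := a + 2) (by omega),
      windowProb_eq_one (a := a + 2) (by omega)] at hrec
    linarith
  · rw [sum_empty] at hrec
    linarith

/-- The induction hypothesis for `windowProb_le_windowBound`: the bound holds for every window
`(c, d)` with `d - c < m`. -/
def ShorterWindowsBounded (N : ℕ) (S : Finset ℕ) (m : ℕ) : Prop :=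
  ∀ c d, c ≤ d → d ≤ N + 1 → d - c < m → windowProb N S c d ≤ windowBound (d - c)

lemma ShorterWindowsBounded.windowProb_succ_left_le (ih : ShorterWindowsBounded N S (b - a))
    (hab : a < b) (hb : b ≤ N + 1) :
    windowProb N S (a + 1) b ≤ 5 / 3 * peakBound (b - a) := by
  have hshort := (ih (a + 1) b (by omega) hb (by omega)).trans (windowBound_le_peakBound_succ _)
  rwa [show b - (a + 1) + 1 = b - a by omega] at hshort

lemma ShorterWindowsBounded.windowProb_pred_right_le (ih : ShorterWindowsBounded N S (b - a))
    (hab : a < b) (hb : b ≤ N + 1) :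
    windowProb N S a (b - 1) ≤ 5 / 3 * peakBound (b - a) := by
  have hshort := (ih a (b - 1) (by omega) (by omega) (by omega)).trans
    (windowBound_le_peakBound_succ _)
  rwa [show b - 1 - a + 1 = b - a by omega] at hshort

lemma windowProb_mul_windowProb_le (ih : ShorterWindowsBounded N S (b - a)) (hb : b ≤ N + 1)
    (hT : ∀ j ∈ interiorPeaks S a b, j + 1 ∉ interiorPeaks S a b)
    (hi : i ∈ interiorPeaks S a b) :
    windowProb N S a i * windowProb N S i b ≤ peakBound (b - a) *
      (3 + correction (∃ j ∈ interiorPeaks S a b, j + 2 = i) (i = a + 4) +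
        correction (i + 2 ∈ interiorPeaks S a b) (i = b - 4)) := by
  have hi_lt := (mem_interiorPeaks.1 hi).2
  have succ_notMem (j : ℕ) (hj : j ∈ interiorPeaks S a b) (hjb : j + 2 < b) : j + 1 ∉ S :=
    fun h ↦ hT j hj
      (mem_interiorPeaks.2 ⟨h, (mem_interiorPeaks.1 hj).2.1.trans j.lt_succ_self, hjb⟩)
  have near_left : (∃ j ∈ interiorPeaks S a b, j + 2 = i) →
      windowProb N S a i ≤ peakBound (i - a + 1) := by
    rintro ⟨j, hj, rfl⟩
    have hj' := mem_interiorPeaks.1 hj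
    have := ih a (j + 3) (by omega) (by omega) (by omega)
    rwa [windowProb_add_three_right hj'.2.1 hj'.1 (succ_notMem j hj (by omega)), windowBound,
      if_neg (by omega), show j + 3 - a = j + 2 - a + 1 by omega] at this
  have near_right : i + 2 ∈ interiorPeaks S a b →
      windowProb N S i b ≤ peakBound (b - i + 1) := by
    intro hi₂
    have hi₂' := mem_interiorPeaks.1 hi₂
    have := ih (i - 1) b (by omega) hb (by omega)
    rwa [← windowProb_succ_left (by omega)
        (by rw [show i - 1 + 2 = i + 1 by omega]; exact succ_notMem i hi (by omega))
        (by rw [show i - 1 + 3 = i + 2 by omega]; exact hi₂'.1),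
      Nat.sub_add_cancel (by omega), windowBound, if_neg (by omega),
      show b - (i - 1) = b - i + 1 by omega] at this
  have hmul := mul_le_peakBound_mul_correction windowProb_nonneg windowProb_nonneg near_left
    (ih a i (by omega) (by omega) (by omega)) near_right (ih i b (by omega) hb (by omega))
  simpa only [show i - a + (b - i) = b - a by omega, show i - a = 4 ↔ i = a + 4 by omega,
    show b - i = 4 ↔ i = b - 4 by omega] using hmul

/- The `z` positions at the left end that carry no element of `S` each leave room for a third of a
peak in `three_mul_card_le`, and this room pays for the boundary terms of `windowProb_mul_le`. -/
lemma exists_left_end_estimate (ih : ShorterWindowsBounded N S (b - a)) (hab : a + 5 ≤ b)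
    (hb : b ≤ N + 1) (hT : ∀ j ∈ interiorPeaks S a b, j + 1 ∉ interiorPeaks S a b) :
    ∃ z : ℕ, (∀ i ∈ interiorPeaks S a b, a + 2 + z ≤ i) ∧
      (if a + 2 ∈ S then 0 else windowProb N S (a + 1) b) +
        peakBound (b - a) * (if a + 4 ∈ interiorPeaks S a b ∧
          ¬ ∃ j ∈ interiorPeaks S a b, j + 2 = a + 4 then 1 / 3 else 0) ≤
        z * peakBound (b - a) + max 0 (windowProb N S a b - peakBound (b - a)) := by
  have hpos := peakBound_pos (b - a)
  by_cases h₂ : a + 2 ∈ S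
  · refine ⟨0, fun i hi ↦ (mem_interiorPeaks.1 hi).2.1, ?_⟩
    rw [if_pos h₂, if_neg fun h ↦ h.2 ⟨a + 2, mem_interiorPeaks.2 ⟨h₂, by omega⟩, rfl⟩]
    simp
  by_cases h₃ : a + 3 ∈ S
  · have h₃' : a + 3 ∈ interiorPeaks S a b := mem_interiorPeaks.2 ⟨h₃, by omega⟩
    refine ⟨1, fun i hi ↦ ?_, ?_⟩
    · have hi' := mem_interiorPeaks.1 hi
      have := ne_of_mem_of_not_mem hi'.1 h₂
      omega
    rw [if_neg h₂, if_neg fun h ↦ hT _ h₃' h.1, windowProb_succ_left (by omega) h₂ h₃]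
    have := le_max_right 0 (windowProb N S a b - peakBound (b - a))
    push_cast
    linarith
  have far (i : ℕ) (hi : i ∈ interiorPeaks S a b) : a + 4 ≤ i := by
    have hi' := mem_interiorPeaks.1 hi
    have := ne_of_mem_of_not_mem hi'.1 h₂
    have := ne_of_mem_of_not_mem hi'.1 h₃
    omega
  refine ⟨2, far, ?_⟩
  have hend := ih.windowProb_succ_left_le (by omega) hb
  have := le_max_left 0 (windowProb N S a b - peakBound (b - a))
  rw [if_neg h₂]
  push_cast
  split_ifs <;> linarith

lemma exists_right_end_estimate (ih : ShorterWindowsBounded N S (b - a)) (hab : a + 5 ≤ b)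
    (hb : b ≤ N + 1) (hT : ∀ j ∈ interiorPeaks S a b, j + 1 ∉ interiorPeaks S a b) :
    ∃ z : ℕ, (∀ i ∈ interiorPeaks S a b, i + 2 + z ≤ b) ∧
      (if b - 2 ∈ S then 0 else windowProb N S a (b - 1)) +
        peakBound (b - a) * (if b - 4 ∈ interiorPeaks S a b ∧
          ¬ b - 4 + 2 ∈ interiorPeaks S a b then 1 / 3 else 0) ≤
        z * peakBound (b - a) + max 0 (windowProb N S a b - peakBound (b - a)) := by
  have hpos := peakBound_pos (b - a)
  by_cases h₂ : b - 2 ∈ S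
  · have h₂' : b - 4 + 2 ∈ interiorPeaks S a b := by
      rw [show b - 4 + 2 = b - 2 by omega]
      exact mem_interiorPeaks.2 ⟨h₂, by omega⟩
    refine ⟨0, fun i hi ↦ (mem_interiorPeaks.1 hi).2.2, ?_⟩
    rw [if_pos h₂, if_neg fun h ↦ h.2 h₂']
    simp
  by_cases h₃ : b - 3 ∈ S
  · have h₃' : b - 4 + 1 ∈ interiorPeaks S a b := by
      rw [show b - 4 + 1 = b - 3 by omega]
      exact mem_interiorPeaks.2 ⟨h₃, by omega⟩
    refine ⟨1, fun i hi ↦ ?_, ?_⟩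
    · have hi' := mem_interiorPeaks.1 hi
      have := ne_of_mem_of_not_mem hi'.1 h₂
      omega
    have hend := windowProb_add_three_right (N := N) (a := a) (i := b - 3) (by omega) h₃
      (by rwa [show b - 3 + 1 = b - 2 by omega])
    rw [show b - 3 + 3 = b by omega, show b - 3 + 2 = b - 1 by omega] at hend
    rw [if_neg h₂, if_neg fun h ↦ hT _ h.1 h₃', ← hend]
    have := le_max_right 0 (windowProb N S a b - peakBound (b - a))
    push_cast
    linarith
  have far (i : ℕ) (hi : i ∈ interiorPeaks S a b) : i + 4 ≤ b := by
    have hi' := mem_interiorPeaks.1 hi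
    have := ne_of_mem_of_not_mem hi'.1 h₂
    have := ne_of_mem_of_not_mem hi'.1 h₃
    omega
  refine ⟨2, far, ?_⟩
  have hend := ih.windowProb_pred_right_le (by omega) hb
  have := le_max_left 0 (windowProb N S a b - peakBound (b - a))
  rw [if_neg h₂]
  push_cast
  split_ifs <;> linarith

lemma sum_windowProb_mul_windowProb_le (ih : ShorterWindowsBounded N S (b - a)) (hb : b ≤ N + 1)
    (hT : ∀ j ∈ interiorPeaks S a b, j + 1 ∉ interiorPeaks S a b) :
    ∑ i ∈ interiorPeaks S a b, windowProb N S a i * windowProb N S i b ≤ peakBound (b - a) *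
      (3 * #(interiorPeaks S a b) - #{i ∈ interiorPeaks S a b | i + 2 ∈ interiorPeaks S a b} +
        (if a + 4 ∈ interiorPeaks S a b ∧ ¬ ∃ j ∈ interiorPeaks S a b, j + 2 = a + 4
          then 1 / 3 else 0) +
        if b - 4 ∈ interiorPeaks S a b ∧ ¬ b - 4 + 2 ∈ interiorPeaks S a b
          then 1 / 3 else 0) := by
  refine (sum_le_sum fun i hi ↦ windowProb_mul_windowProb_le ih hb hT hi).trans_eq ?_
  rw [← mul_sum, sum_add_distrib, sum_add_distrib, sum_const, nsmul_eq_mul, sum_correction,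
    sum_correction (p := fun i ↦ i + 2 ∈ interiorPeaks S a b), card_filter_exists_add_eq]
  ring

lemma windowProb_le_peakBound_of_interiorPeaks_nonempty
    (ih : ShorterWindowsBounded N S (b - a)) (hab : a + 5 ≤ b) (hb : b ≤ N + 1)
    (hne : (interiorPeaks S a b).Nonempty) :
    windowProb N S a b ≤ peakBound (b - a) := by
  have hpos := peakBound_pos (b - a)
  rcases eq_or_ne (windowProb N S a b) 0 with h | h
  · exact h ▸ hpos.le
  have hT : ∀ i ∈ interiorPeaks S a b, i + 1 ∉ interiorPeaks S a b := fun i ↦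
    succ_notMem_of_windowProb_ne_zero h
  obtain ⟨zl, hlo, hl⟩ := exists_left_end_estimate ih hab hb hT
  obtain ⟨zr, hhi, hr⟩ := exists_right_end_estimate ih hab hb hT
  have hcard := three_mul_card_le hT hlo (hi := b - 2 - zr) fun i hi ↦ by
    have := hhi i hi
    omega
  have hroom : a + 2 + zl + 2 + zr ≤ b := by
    obtain ⟨i, hi⟩ := hne
    have := hlo i hi
    have := hhi i hi
    omega
  have hcard' : (3 * #(interiorPeaks S a b) + a + zl + zr + 1 : ℚ) ≤
      b + #{i ∈ interiorPeaks S a b | i + 2 ∈ interiorPeaks S a b} := by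
    exact_mod_cast (by omega : 3 * #(interiorPeaks S a b) + a + zl + zr + 1 ≤
      b + #{i ∈ interiorPeaks S a b | i + 2 ∈ interiorPeaks S a b})
  have hlen : (a + 5 : ℚ) ≤ b := by exact_mod_cast hab
  have hrec := windowProb_mul_le (S := S) (a := a) (by omega) hb
  have hsum := sum_windowProb_mul_windowProb_le ih hb hT
  have hmul := mul_le_mul_of_nonneg_left hcard' hpos.le
  by_contra! hlt
  rw [max_eq_right (sub_pos.2 hlt).le] at hl hr
  nlinarith [mul_le_mul_of_nonneg_right hlen (sub_pos.2 hlt).le]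

lemma windowProb_le_peakBound_of_interiorPeaks_eq_empty
    (ih : ShorterWindowsBounded N S (b - a)) (hab : a + 5 ≤ b) (hb : b ≤ N + 1)
    (hempty : interiorPeaks S a b = ∅) :
    windowProb N S a b ≤ peakBound (b - a) := by
  have hrec := windowProb_mul_le (S := S) (a := a) (by omega) hb
  have hleft := ih.windowProb_succ_left_le (by omega) hb
  have hright := ih.windowProb_pred_right_le (by omega) hb
  have hlen : (a + 5 : ℚ) ≤ b := by exact_mod_cast hab
  have hpos := peakBound_pos (b - a)
  rw [hempty, sum_empty, zero_add] at hrec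
  have hmul : (b - a - 1) * windowProb N S a b ≤ 10 / 3 * peakBound (b - a) := by
    split_ifs at hrec <;> linarith
  nlinarith [windowProb_nonneg (N := N) (S := S) (a := a) (b := b)]

theorem windowProb_le_windowBound (hab : a ≤ b) (hb : b ≤ N + 1) :
    windowProb N S a b ≤ windowBound (b - a) := by
  induction h : b - a using Nat.strong_induction_on generalizing a b with
  | _ n ih =>
    subst h
    have ih' : ShorterWindowsBounded N S (b - a) := fun c d hcd hd hlt ↦ ih _ hlt hcd hd rfl
    rcases (by omega : b ≤ a + 3 ∨ b = a + 4 ∨ a + 5 ≤ b) with hshort | rfl | hlong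
    · rw [windowProb_eq_one hshort]
      have : b - a ≤ 3 := by omega
      interval_cases b - a <;> norm_num [windowBound, peakBound]
    · simpa [windowBound] using windowProb_add_four_le hb
    · rw [windowBound, if_neg (by omega)]
      rcases (interiorPeaks S a b).eq_empty_or_nonempty with hempty | hne
      · exact windowProb_le_peakBound_of_interiorPeaks_eq_empty ih' hlong hb hempty
      · exact windowProb_le_peakBound_of_interiorPeaks_nonempty ih' hlong hb hne

end UpperBound

section LowerBound

variable {N t i : ℕ}

lemma prob_isMaxOn_window_and_isMaxOn_window {a b c d : ℕ} {x y : Fin N} (hx : x ∉ window N c d)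
    (hxab : x ∈ window N a b) (hy : y ∈ window N c d) (hac : a ≤ c) (hdb : d ≤ b)
    (hb : b ≤ N + 1) :
    prob (fun σ : Equiv.Perm (Fin N) ↦ IsMaxOn σ (window N a b) x ∧ IsMaxOn σ (window N c d) y) =
      1 / (b - a - 1) * (1 / (d - c - 1)) := by
  rw [mem_window] at hxab
  rw [(isRearrangementInvariant_isMaxOn (window_mono hac hdb) hx).prob_and
      (isOrderEvent_isMaxOn hy),
    prob_isMaxOn_window hxab.1 hxab.2 hb,
    prob_isMaxOn_window (mem_window.1 hy).1 (mem_window.1 hy).2 (hdb.trans hb)]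

lemma two_fifteenths_le_prob_isPeak_and_isPeak {a : ℕ} (ha : a + 5 ≤ N) :
    2 / 15 ≤ prob fun σ : Equiv.Perm (Fin N) ↦ IsPeak σ (a + 2) ∧ IsPeak σ (a + 4) := by
  let x : Fin N := ⟨a + 1, by omega⟩
  let y : Fin N := ⟨a + 3, by omega⟩
  have hx : x ∈ window N a (a + 6) := by simp [x]
  have hy : y ∈ window N a (a + 6) := by simp [y]
  have max_left : 1 / 15 ≤ prob fun σ : Equiv.Perm (Fin N) ↦
      (IsPeak σ (a + 2) ∧ IsPeak σ (a + 4)) ∧ IsMaxOn σ (window N a (a + 6)) x := by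
    have hprob := prob_isMaxOn_window_and_isMaxOn_window (c := a + 2) (d := a + 6) (x := x) (y := y)
      (by simp [x]) hx (by simp [y]) (by omega) le_rfl (by omega)
    push_cast at hprob
    rw [show (1 / 15 : ℚ) = 1 / (a + 6 - a - 1) * (1 / (a + 6 - (a + 2) - 1)) by ring, ← hprob]
    exact prob_mono fun σ h ↦ ⟨⟨isPeak_of_isMaxOn_window h.1 (by simp [x]) (by simp [x]) (by omega),
      isPeak_of_isMaxOn_window h.2 (by simp [y]) (by simp [y]) (by omega)⟩, h.1⟩
  have max_right : 1 / 15 ≤ prob fun σ : Equiv.Perm (Fin N) ↦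
      (IsPeak σ (a + 2) ∧ IsPeak σ (a + 4)) ∧ IsMaxOn σ (window N a (a + 6)) y := by
    have hprob := prob_isMaxOn_window_and_isMaxOn_window (c := a) (d := a + 4) (x := y) (y := x)
      (by simp [y]) hy (by simp [x]) le_rfl (by omega) (by omega)
    push_cast at hprob
    rw [show (1 / 15 : ℚ) = 1 / (a + 6 - a - 1) * (1 / (a + 4 - a - 1)) by ring, ← hprob]
    exact prob_mono fun σ h ↦ ⟨⟨isPeak_of_isMaxOn_window h.2 (by simp [x]) (by simp [x]) (by omega),
      isPeak_of_isMaxOn_window h.1 (by simp [y]) (by simp [y]) (by omega)⟩, h.1⟩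
  have hxy : x ≠ y := by simp [x, y]
  have hpair := sum_le_sum_of_subset_of_nonneg (s := {x, y})
    (t := window N a (a + 6)) (insert_subset hx (singleton_subset_iff.2 hy))
    fun z _ _ ↦ prob_nonneg fun σ : Equiv.Perm (Fin N) ↦
      (IsPeak σ (a + 2) ∧ IsPeak σ (a + 4)) ∧ IsMaxOn σ (window N a (a + 6)) z
  rw [sum_pair hxy, ← prob_eq_sum_prob_and (existsUnique_isMaxOn ⟨x, hx⟩)] at hpair
  linarith

/-- The peak set `{3, 5, 8, …, 3 * t + 5}`, which attains the maximum for `n = 3 * t + 7`. -/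
def optimalPeaks (t : ℕ) : Finset ℕ := insert 3 ((range (t + 1)).image (3 * · + 5))

lemma mem_optimalPeaks : i ∈ optimalPeaks t ↔ i = 3 ∨ ∃ k ≤ t, i = 3 * k + 5 := by
  simp [optimalPeaks, eq_comm]

lemma forall_mem_optimalPeaks_succ {p : ℕ → Prop} :
    (∀ i ∈ optimalPeaks (t + 1), p i) ↔ (∀ i ∈ optimalPeaks t, p i) ∧ p (3 * t + 8) := by
  simp only [optimalPeaks, range_add_one (n := t + 1), image_insert, forall_mem_insert,
    show 3 * (t + 1) + 5 = 3 * t + 8 by ring]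
  tauto

lemma isOrderEvent_forall_mem_optimalPeaks :
    IsOrderEvent (window N 1 (3 * t + 7)) fun σ ↦ ∀ i ∈ optimalPeaks t, IsPeak σ i := by
  refine fun σ τ h ↦ forall₂_congr fun i hi ↦ isOrderEvent_isPeak ?_ ?_ h <;>
  · rw [mem_optimalPeaks] at hi
    omega

lemma le_prob_forall_mem_optimalPeaks (hN : 3 * t + 6 ≤ N) :
    2 / 15 / 3 ^ t ≤ prob fun σ : Equiv.Perm (Fin N) ↦ ∀ i ∈ optimalPeaks t, IsPeak σ i := by
  induction t with
  | zero =>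
    simpa [optimalPeaks] using two_fifteenths_le_prob_isPeak_and_isPeak (a := 1) hN
  | succ t ih =>
    let x : Fin N := ⟨3 * t + 7, by omega⟩
    have hx : x ∈ window N (3 * t + 6) (3 * t + 10) := by simp [x]
    calc
      2 / 15 / 3 ^ (t + 1) = 2 / 15 / 3 ^ t * (1 / 3 : ℚ) := by ring
      _ ≤ prob (fun σ : Equiv.Perm (Fin N) ↦ ∀ i ∈ optimalPeaks t, IsPeak σ i) *
          prob fun σ : Equiv.Perm (Fin N) ↦ IsMaxOn σ (window N (3 * t + 6) (3 * t + 10)) x := by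
        rw [prob_isMaxOn hx, card_window (by omega) (by omega)]
        push_cast
        rw [show (3 * t + 10 - (3 * t + 6) - 1 : ℚ) = 3 by ring]
        gcongr
        exact ih (by omega)
      _ = prob fun σ : Equiv.Perm (Fin N) ↦ (∀ i ∈ optimalPeaks t, IsPeak σ i) ∧
          IsMaxOn σ (window N (3 * t + 6) (3 * t + 10)) x :=
        ((isOrderEvent_forall_mem_optimalPeaks.isRearrangementInvariant
          (disjoint_window (by omega)).symm).prob_and (isOrderEvent_isMaxOn hx)).symm
      _ ≤ _ := prob_mono fun σ h ↦ forall_mem_optimalPeaks_succ.2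
        ⟨h.1, isPeak_of_isMaxOn_window h.2 (by simp [x]) (by simp [x]) (by omega)⟩

lemma exists_adjacent_mem_optimalPeaks (hi : 2 ≤ i) (hi' : i ≤ 3 * t + 6)
    (hmem : i ∉ optimalPeaks t) : i + 1 ∈ optimalPeaks t ∨ ∃ j ∈ optimalPeaks t, i = j + 1 := by
  simp only [mem_optimalPeaks, not_or, not_exists, not_and] at hmem ⊢
  obtain ⟨k, rfl | rfl | rfl⟩ : ∃ k, i = 3 * k ∨ i = 3 * k + 1 ∨ i = 3 * k + 2 :=
    ⟨i / 3, by omega⟩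
  · exact .inr ⟨3 * (k - 2) + 5, .inr ⟨k - 2, by omega⟩, by omega⟩
  · exact .inl (.inr ⟨k - 1, by omega⟩)
  · have := hmem.2 (k - 1)
    exact .inl (.inl (by omega))

lemma peakSet_eq_optimalPeaks {σ : Equiv.Perm (Fin (3 * t + 7))}
    (hσ : ∀ i ∈ optimalPeaks t, IsPeak σ i) : peakSet σ = optimalPeaks t := by
  ext i
  rw [mem_peakSet]
  refine ⟨fun hi ↦ ?_, hσ i⟩
  by_contra hmem
  have ⟨hi₂, hiN, _⟩ := hi
  rcases exists_adjacent_mem_optimalPeaks hi₂ (by omega) hmem with hsucc | ⟨j, hj, rfl⟩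
  · exact not_isPeak_succ hi (hσ _ hsucc)
  · exact not_isPeak_succ (hσ j hj) hi

end LowerBound

section Maximum

variable {ℓ : ℕ}

open scoped Nat

lemma numPeakSet_eq_factorial_mul_prob (n : ℕ) (S : Finset ℕ) :
    (numPeakSet n S : ℚ) = n ! * prob fun σ : Equiv.Perm (Fin n) ↦ peakSet σ = S := by
  rw [prob_eq_card_div_card, numPeakSet, Fintype.card_perm, Fintype.card_fin,
    mul_div_cancel₀ _ (Nat.cast_ne_zero.2 (Nat.factorial_ne_zero n))]

lemma prob_peakSet_eq_le (n : ℕ) (S : Finset ℕ) :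
    prob (fun σ : Equiv.Perm (Fin n) ↦ peakSet σ = S) ≤ windowBound (n + 1) :=
  (prob_mono fun _ hσ _ _ _ ↦ hσ ▸ mem_peakSet.symm).trans
    (windowProb_le_windowBound (Nat.zero_le _) le_rfl)

lemma numPeakSet_le (hℓ : 2 ≤ ℓ) (S : Finset ℕ) :
    5 * 3 ^ (ℓ - 1) * numPeakSet (3 * ℓ + 1) S ≤ 2 * (3 * ℓ + 1)! := by
  have hle := prob_peakSet_eq_le (3 * ℓ + 1) S
  rw [windowBound, if_neg (by omega), peakBound_three_mul_add_two] at hle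
  rw [← Nat.cast_le (α := ℚ)]
  push_cast
  rw [numPeakSet_eq_factorial_mul_prob, mul_left_comm, mul_comm (2 : ℚ)]
  gcongr
  calc
    _ ≤ 5 * 3 ^ (ℓ - 1) * (6 / 5 / 3 ^ ℓ : ℚ) := by gcongr
    _ = 2 := by
      rw [← pow_sub_one_mul (by omega : ℓ ≠ 0)]
      field_simp
      norm_num

lemma le_numPeakSet_optimalPeaks (t : ℕ) :
    2 * (3 * t + 7)! ≤ 5 * 3 ^ (t + 1) * numPeakSet (3 * t + 7) (optimalPeaks t) := by
  rw [← Nat.cast_le (α := ℚ)]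
  push_cast
  rw [numPeakSet_eq_factorial_mul_prob, mul_left_comm, mul_comm (2 : ℚ)]
  gcongr
  calc
    2 = 5 * 3 ^ (t + 1) * (2 / 15 / 3 ^ t : ℚ) := by
      field_simp
      ring
    _ ≤ _ := by
      gcongr
      exact (le_prob_forall_mem_optimalPeaks (by omega)).trans
        (prob_mono fun _ ↦ peakSet_eq_optimalPeaks)

end Maximum

end PeakCount

theorem max_peak_set_count_mod_one (ℓ n : ℕ) (hℓ : 2 ≤ ℓ) (hn : n = 3 * ℓ + 1) :
    5 * 3 ^ (ℓ - 1) *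
      ((Finset.Icc 1 n).powerset.sup fun S => numPeakSet n S) = 2 * Nat.factorial n := by
  obtain ⟨t, rfl⟩ := Nat.exists_eq_add_of_le' hℓ
  subst hn
  refine le_antisymm ?_ ?_
  · obtain ⟨S, -, hS⟩ := Finset.exists_mem_eq_sup _ (Finset.powerset_nonempty _)
      fun S ↦ numPeakSet (3 * (t + 2) + 1) S
    rw [hS]
    exact PeakCount.numPeakSet_le hℓ S
  · have optimal_mem : PeakCount.optimalPeaks t ∈ (Finset.Icc 1 (3 * t + 7)).powerset :=
      Finset.mem_powerset.2 fun i hi ↦ by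
        obtain rfl | ⟨k, hk, rfl⟩ := PeakCount.mem_optimalPeaks.1 hi <;>
          exact Finset.mem_Icc.2 (by omega)
    exact (PeakCount.le_numPeakSet_optimalPeaks t).trans
      (Nat.mul_le_mul_left _ (Finset.le_sup (f := numPeakSet (3 * t + 7)) optimal_mem))
end
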